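/- arXiv:1907.00632 — 5 statements merged into one kernel-verified Lean document; each statement's English description precedes it below -/
import Mathlib

section
/- For every n ≥ 1, the variance of the number of blocks X_n of a uniformly random non-crossing partition of [n] equals (n² − 1)/(4(2n − 1)); that is, as rational numbers, (1/C_n)·Σ_{π ∈ NC(n)} (#blocks(π))² − ((n+1)/2)² = (n² − 1)/(4(2n − 1)). -/
/-- A finite partition of `Fin n` (representing `[n] = {1, …, n}`) is *non-crossing* if
there are no indices `a < b < c < d` with `a, c` in one block and `b, d` in a
different block. -/
def IsNonCrossing {n : ℕ} (P : Finpartition (Finset.univ : Finset (Fin n))) : Prop :=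
  ∀ a b c d : Fin n, a < b → b < c → c < d →
    ∀ B ∈ P.parts, ∀ B' ∈ P.parts,
      a ∈ B → c ∈ B → b ∈ B' → d ∈ B' → B = B'

/-- The type of non-crossing partitions of `[n]`. -/
def NCPart (n : ℕ) : Type :=
  {P : Finpartition (Finset.univ : Finset (Fin n)) // IsNonCrossing P}

noncomputable instance (n : ℕ) : Fintype (NCPart n) :=
  Fintype.ofInjective (fun P => P.1.parts)
    (fun _ _ h => Subtype.ext (Finpartition.ext h))

/-- The number of blocks of a non-crossing partition. -/
def numBlocks {n : ℕ} (P : NCPart n) : ℕ := P.1.parts.card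

/-- The number of blocks of size `l` of a non-crossing partition. -/
def numBlocksOfSize {n : ℕ} (l : ℕ) (P : NCPart n) : ℕ :=
  (P.1.parts.filter fun B => B.card = l).card


/-- Block-minimum functions of non-crossing partitions of `{0, …, n-1}`, extended by zero. -/
def MinFun (n : ℕ) : Type :=
  {f : ℕ → ℕ // (∀ i, n ≤ i → f i = 0) ∧ (∀ i, i < n → f i ≤ i) ∧
    ∀ a b, b < n → f b ≤ a → a ≤ b → f b ≤ f a}

/-- Number of fixed points below `n`. -/
def fixCount (n : ℕ) (f : ℕ → ℕ) : ℕ := ((Finset.range n).filter fun i => f i = i).card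

/-- The minimum of the block of `i`. -/
noncomputable def blockMin {n : ℕ} (P : NCPart n) (i : Fin n) : Fin n :=
  (P.1.part i).min' ⟨i, P.1.mem_part (Finset.mem_univ i)⟩

lemma blockMin_mem {n : ℕ} (P : NCPart n) (i : Fin n) : blockMin P i ∈ P.1.part i :=
  Finset.min'_mem _ _

lemma blockMin_le {n : ℕ} (P : NCPart n) (i j : Fin n) (h : j ∈ P.1.part i) :
    blockMin P i ≤ j :=
  Finset.min'_le _ _ h

lemma blockMin_le_self {n : ℕ} (P : NCPart n) (i : Fin n) : blockMin P i ≤ i :=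
  blockMin_le P i i (P.1.mem_part (Finset.mem_univ i))

lemma part_blockMin {n : ℕ} (P : NCPart n) (i : Fin n) :
    P.1.part (blockMin P i) = P.1.part i :=
  (P.1.mem_part_iff_part_eq_part (Finset.mem_univ _) (Finset.mem_univ _)).1 (blockMin_mem P i)

lemma blockMin_eq_iff {n : ℕ} (P : NCPart n) (i j : Fin n) :
    blockMin P i = blockMin P j ↔ P.1.part i = P.1.part j := by
  constructor
  · intro h
    rw [← part_blockMin P i, h, part_blockMin]
  · intro h
    unfold blockMin
    simp only [h]

lemma blockMin_idem {n : ℕ} (P : NCPart n) (i : Fin n) :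
    blockMin P (blockMin P i) = blockMin P i :=
  (blockMin_eq_iff P _ _).2 (part_blockMin P i)

lemma blockMin_nc {n : ℕ} (P : NCPart n) (a b : Fin n) (h : blockMin P b ≤ a) (hab : a ≤ b) :
    blockMin P b ≤ blockMin P a := by
  rcases hab.eq_or_lt with rfl | hab
  · exact le_rfl
  rcases h.eq_or_lt with h | h
  · rw [← h, blockMin_idem]
  by_contra! hlt
  have := P.2 (blockMin P a) (blockMin P b) a b hlt h hab (P.1.part a)
    (P.1.part_mem.2 (Finset.mem_univ _)) (P.1.part b) (P.1.part_mem.2 (Finset.mem_univ _))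
    (blockMin_mem P a) (P.1.mem_part (Finset.mem_univ _)) (blockMin_mem P b)
    (P.1.mem_part (Finset.mem_univ _))
  rw [(blockMin_eq_iff P a b).2 this] at hlt
  exact lt_irrefl _ hlt

/-- The encoding. -/
noncomputable def toMinFun {n : ℕ} (P : NCPart n) : MinFun n :=
  ⟨fun i => if h : i < n then (blockMin P ⟨i, h⟩ : ℕ) else 0, by
    refine ⟨fun i hi => dif_neg (by omega), fun i hi => ?_, fun a b hb h1 h2 => ?_⟩
    · simp only [hi, dite_true]
      exact blockMin_le_self P ⟨i, hi⟩
    · have ha : a < n := by omega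
      simp only [hb, ha, dite_true] at h1 ⊢
      exact blockMin_nc P ⟨a, ha⟩ ⟨b, hb⟩ h1 h2⟩

lemma toMinFun_apply {n : ℕ} (P : NCPart n) (i : Fin n) :
    (toMinFun P).1 i = blockMin P i := by
  simp [toMinFun]

lemma toMinFun_injective (n : ℕ) : Function.Injective (toMinFun (n := n)) := by
  intro P Q h
  have hb : ∀ i, blockMin P i = blockMin Q i := by
    intro i
    apply Fin.ext
    rw [← toMinFun_apply, ← toMinFun_apply, h]
  have hp : ∀ i, P.1.part i = Q.1.part i := by
    intro i
    ext j
    rw [P.1.mem_part_iff_part_eq_part (Finset.mem_univ _) (Finset.mem_univ _),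
      Q.1.mem_part_iff_part_eq_part (Finset.mem_univ _) (Finset.mem_univ _),
      ← blockMin_eq_iff, ← blockMin_eq_iff, hb, hb]
  have key : ∀ (P Q : NCPart n), (∀ i, P.1.part i = Q.1.part i) → P.1.parts ⊆ Q.1.parts := by
    intro P Q hp B hB
    obtain ⟨x, hx⟩ := P.1.nonempty_of_mem_parts hB
    rw [← P.1.part_eq_of_mem hB hx, hp]
    exact Q.1.part_mem.2 (Finset.mem_univ _)
  exact Subtype.ext (Finpartition.ext
    (Finset.Subset.antisymm (key P Q hp) (key Q P fun i => (hp i).symm)))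

lemma minFun_idem {n : ℕ} (f : MinFun n) (i : ℕ) (hi : i < n) : f.1 (f.1 i) = f.1 i := by
  obtain ⟨f, h0, h1, h2⟩ := f
  have a := h1 i hi
  exact le_antisymm (h1 _ (lt_of_le_of_lt a hi)) (h2 (f i) i hi le_rfl a)

open Classical in
lemma toMinFun_surjective (n : ℕ) : Function.Surjective (toMinFun (n := n)) := by
  intro f
  let s : Setoid (Fin n) := Setoid.ker (fun i : Fin n => f.1 i)
  let P : Finpartition (Finset.univ : Finset (Fin n)) := Finpartition.ofSetoid s
  have hm : ∀ i j : Fin n, j ∈ P.part i ↔ f.1 i = f.1 j := by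
    intro i j
    exact Finpartition.mem_part_ofSetoid_iff_rel
  have hB : ∀ B ∈ P.parts, ∀ i ∈ B, ∀ j ∈ B, f.1 i = f.1 j := by
    intro B hB i hi j hj
    rw [← P.part_eq_of_mem hB hi] at hj
    exact (hm i j).1 hj
  have hP : IsNonCrossing P := by
    intro a b c d hab hbc hcd B hB1 B' hB2 ha hc hb hd
    have e1 := hB B hB1 a ha c hc
    have e2 := hB B' hB2 b hb d hd
    have h1 := f.2.2.1 a a.2
    have h2 := f.2.2.1 b b.2
    have h3 := f.2.2.2 b c c.2 (by rw [← e1]; exact h1.trans (le_of_lt hab)) (le_of_lt hbc)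
    have h4 := f.2.2.2 c d d.2 (by rw [← e2]; exact h2.trans (le_of_lt hbc)) (le_of_lt hcd)
    have : f.1 a = f.1 b := by omega
    have hbB : b ∈ B := by
      rw [← P.part_eq_of_mem hB1 ha]
      exact (hm a b).2 this
    exact P.eq_of_mem_parts hB1 hB2 hbB hb
  refine ⟨⟨P, hP⟩, ?_⟩
  apply Subtype.ext
  funext i
  by_cases hi : i < n
  · have := toMinFun_apply ⟨P, hP⟩ ⟨i, hi⟩
    simp only at this
    rw [this]
    apply le_antisymm
    · have hlt : f.1 i < n := lt_of_le_of_lt (f.2.2.1 i hi) hi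
      have := blockMin_le ⟨P, hP⟩ ⟨i, hi⟩ ⟨f.1 i, hlt⟩
        ((hm _ _).2 (minFun_idem f i hi).symm)
      exact this
    · have h1 := (hm _ _).1 (blockMin_mem ⟨P, hP⟩ ⟨i, hi⟩)
      simp only at h1
      rw [h1]
      exact f.2.2.1 _ (Fin.is_lt _)
  · exact ((toMinFun ⟨P, hP⟩).2.1 i (by omega)).trans (f.2.1 i (by omega)).symm

lemma toMinFun_fixCount {n : ℕ} (P : NCPart n) : fixCount n (toMinFun P).1 = numBlocks P := by
  unfold fixCount numBlocks
  symm
  apply Finset.card_bij (fun B hB => ((B.min' (P.1.nonempty_of_mem_parts hB) : Fin n) : ℕ))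
  · intro B hB
    set m := B.min' (P.1.nonempty_of_mem_parts hB) with hmdef
    have hmB : m ∈ B := Finset.min'_mem _ _
    rw [Finset.mem_filter, Finset.mem_range]
    refine ⟨m.2, ?_⟩
    rw [toMinFun_apply]
    congr 1
    have := P.1.part_eq_of_mem hB hmB
    unfold blockMin
    simp only [this]
    exact hmdef.symm
  · intro B hB B' hB' h
    have h' := Fin.ext h
    have h1 : B.min' (P.1.nonempty_of_mem_parts hB) ∈ B := Finset.min'_mem _ _
    have h2 : B'.min' (P.1.nonempty_of_mem_parts hB') ∈ B' := Finset.min'_mem _ _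
    rw [← h'] at h2
    exact P.1.eq_of_mem_parts hB hB' h1 h2
  · intro i hi
    rw [Finset.mem_filter, Finset.mem_range] at hi
    obtain ⟨hi, hf⟩ := hi
    refine ⟨P.1.part ⟨i, hi⟩, P.1.part_mem.2 (Finset.mem_univ _), ?_⟩
    have := toMinFun_apply P ⟨i, hi⟩
    simp only [hf] at this
    exact this.symm

noncomputable def ncEquiv (n : ℕ) : NCPart n ≃ MinFun n :=
  Equiv.ofBijective toMinFun ⟨toMinFun_injective n, toMinFun_surjective n⟩

noncomputable instance (n : ℕ) : Fintype (MinFun n) := Fintype.ofEquiv _ (ncEquiv n)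

lemma sum_numBlocks (n : ℕ) (φ : ℕ → ℚ) :
    ∑ P : NCPart n, φ (numBlocks P) = ∑ f : MinFun n, φ (fixCount n f.1) := by
  apply Fintype.sum_equiv (ncEquiv n)
  intro P
  rw [← toMinFun_fixCount]
  rfl

/-- Gluing two functions with a new last element attached at `j`. -/
def glueFun (n j : ℕ) (g h : ℕ → ℕ) (i : ℕ) : ℕ :=
  if i < j then g i else if i < n then j + h (i - j) else if i = n then j else 0

def glue (n : ℕ) (x : Σ j : Fin (n + 1), MinFun j × MinFun (n - j)) : MinFun (n + 1) :=
  ⟨glueFun n x.1 x.2.1.1 x.2.2.1, by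
    obtain ⟨⟨j, hj⟩, ⟨g, g0, g1, g2⟩, ⟨h, h0, h1, h2⟩⟩ := x
    simp only at g0 g1 g2 h0 h1 h2 ⊢
    unfold glueFun
    refine ⟨fun i hi => ?_, fun i hi => ?_, fun a b hb hba hab => ?_⟩
    · rw [if_neg (by omega), if_neg (by omega), if_neg (by omega)]
    · have := g1 i
      have := h1 (i - j)
      split_ifs <;> omega
    · have := g2 a b
      have := h2 (a - j) (b - j)
      have := g1 b
      split_ifs at hba ⊢ <;> omega⟩

lemma glue_injective (n : ℕ) : Function.Injective (glue n) := by
  rintro ⟨⟨j, hj⟩, g, h⟩ ⟨⟨j', hj'⟩, g', h'⟩ e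
  have e1 : ∀ i, glueFun n j g.1 h.1 i = glueFun n j' g'.1 h'.1 i :=
    fun i => congrFun (congrArg Subtype.val e) i
  have ej : j = j' := by
    have := e1 n
    unfold glueFun at this
    rwa [if_neg (by omega), if_neg (by omega), if_pos rfl, if_neg (by omega), if_neg (by omega),
      if_pos rfl] at this
  subst ej
  have eg : g = g' := by
    apply Subtype.ext
    funext i
    by_cases hi : i < j
    · have := e1 i
      unfold glueFun at this
      rwa [if_pos hi, if_pos hi] at this
    · rw [g.2.1 i (by simpa using hi), g'.2.1 i (by simpa using hi)]
  have eh : h = h' := by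
    apply Subtype.ext
    funext i
    by_cases hi : i < n - j
    · have := e1 (i + j)
      unfold glueFun at this
      rw [if_neg (by omega), if_pos (by omega), if_neg (by omega), if_pos (by omega),
        Nat.add_sub_cancel] at this
      omega
    · rw [h.2.1 i (by simpa using hi), h'.2.1 i (by simpa using hi)]
  rw [eg, eh]

lemma glue_surjective (n : ℕ) : Function.Surjective (glue n) := by
  rintro ⟨f, f0, f1, f2⟩
  have hn := f1 n (by omega)
  refine ⟨⟨⟨f n, by omega⟩, ⟨fun i => if i < f n then f i else 0, ?_, ?_, ?_⟩,
    ⟨fun i => if i + f n < n then f (i + f n) - f n else 0, ?_, ?_, ?_⟩⟩, ?_⟩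
  · intro i hi
    simp only at hi
    exact if_neg (by omega)
  · intro i hi
    simp only at hi
    have := f1 i
    simp only [hi, if_true]
    omega
  · intro a b hb
    simp only at hb
    have := f2 a b
    simp only [hb, if_true]
    intro h1 h2
    rw [if_pos (by omega)]
    omega
  · intro i hi
    simp only at hi
    exact if_neg (by omega)
  · intro i hi
    simp only at hi
    have := f1 (i + f n)
    beta_reduce
    rw [if_pos (by omega)]
    omega
  · intro a b hb
    simp only at hb
    beta_reduce
    rw [if_pos (by omega)]
    intro h1 h2
    rw [if_pos (by omega)]
    have := f2 (a + f n) (b + f n)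
    omega
  · apply Subtype.ext
    funext i
    simp only [glue, glueFun]
    split_ifs with c1 c2 c3 c4
    · rfl
    · rw [Nat.sub_add_cancel (by omega)]
      have := f2 i n (by omega) (by omega) (by omega)
      omega
    · omega
    · rw [c4]
    · exact (f0 i (by omega)).symm

lemma glueFun_fixCount (j k : ℕ) (g h : ℕ → ℕ) :
    fixCount (j + k + 1) (glueFun (j + k) j g h) = fixCount j g + fixCount k h +
      if j = j + k then 1 else 0 := by
  simp only [fixCount, Finset.card_filter]
  rw [Finset.sum_range_succ, Finset.sum_range_add]
  congr 1
  · congr 1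
    · apply Finset.sum_congr rfl
      intro i hi
      rw [Finset.mem_range] at hi
      simp [glueFun, hi]
    · apply Finset.sum_congr rfl
      intro i hi
      rw [Finset.mem_range] at hi
      simp [glueFun, hi]
  · simp [glueFun]

lemma glue_fixCount (n : ℕ) (x : Σ j : Fin (n + 1), MinFun j × MinFun (n - j)) :
    fixCount (n + 1) (glue n x).1 = fixCount x.1 x.2.1.1 + fixCount (n - x.1) x.2.2.1 +
      if (x.1 : ℕ) = n then 1 else 0 := by
  have h1 : (x.1 : ℕ) + (n - x.1) = n := by have := x.1.2; omega
  have := glueFun_fixCount x.1 (n - x.1) x.2.1.1 x.2.2.1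
  rw [h1] at this
  exact this

lemma sum_rec (n : ℕ) (φ : ℕ → ℚ) :
    ∑ f : MinFun (n + 1), φ (fixCount (n + 1) f.1) =
      ∑ j ∈ Finset.range (n + 1), ∑ g : MinFun j, ∑ h : MinFun (n - j),
        φ (fixCount j g.1 + fixCount (n - j) h.1 + if j = n then 1 else 0) := by
  rw [Finset.sum_range]
  rw [← Fintype.sum_equiv (Equiv.ofBijective _ ⟨glue_injective n, glue_surjective n⟩)
    (fun x => φ (fixCount (n + 1) (glue n x).1)) _ (fun x => rfl)]
  rw [Fintype.sum_sigma]
  apply Finset.sum_congr rfl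
  intro j _
  rw [Fintype.sum_prod_type]
  simp only [glue_fixCount]

section Moments
open PowerSeries

/-- Moments of the number of fixed points. -/
noncomputable def moment (k n : ℕ) : ℚ := ∑ f : MinFun n, (fixCount n f.1 : ℚ) ^ k

lemma moment_succ_zero : ∀ k, moment (k + 1) 0 = 0 := by
  intro k
  simp [moment, fixCount]

lemma minFun_zero_unique (f g : MinFun 0) : f = g := by
  apply Subtype.ext
  funext i
  rw [f.2.1 i (Nat.zero_le _), g.2.1 i (Nat.zero_le _)]

lemma moment_zero_zero : moment 0 0 = 1 := by
  have : Fintype.card (MinFun 0) = 1 := by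
    rw [Fintype.card_eq_one_iff]
    exact ⟨⟨fun _ => 0, by simp⟩, fun y => minFun_zero_unique _ _⟩
  simp [moment, this]

lemma moment_zero_rec (n : ℕ) :
    moment 0 (n + 1) = ∑ j ∈ Finset.range (n + 1), moment 0 j * moment 0 (n - j) := by
  have := sum_rec n (fun _ => 1)
  simp only [moment, pow_zero, this]
  simp

lemma sum_last (n : ℕ) (F : ℕ → ℚ) :
    ∑ j ∈ Finset.range (n + 1), (if j = n then F j else 0) = F n := by
  simp

lemma moment_one_rec (n : ℕ) :
    moment 1 (n + 1) = ∑ j ∈ Finset.range (n + 1), (moment 1 j * moment 0 (n - j) +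
      moment 0 j * moment 1 (n - j)) + moment 0 n := by
  have := sum_rec n (fun x => (x : ℚ) ^ 1)
  have hm : moment 1 (n + 1) = ∑ f : MinFun (n + 1), (fixCount (n + 1) f.1 : ℚ) ^ 1 := rfl
  rw [hm, this]
  have h0 := sum_last n (fun j => moment 0 j * moment 0 (n - j))
  rw [Nat.sub_self, moment_zero_zero, mul_one] at h0
  rw [← h0, ← Finset.sum_add_distrib]
  apply Finset.sum_congr rfl
  intro j _
  split_ifs <;>
  simp only [moment, Finset.sum_mul_sum, ← Finset.sum_add_distrib] <;>
  simp

lemma moment_two_rec (n : ℕ) :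
    moment 2 (n + 1) = ∑ j ∈ Finset.range (n + 1), (moment 2 j * moment 0 (n - j) +
      2 * (moment 1 j * moment 1 (n - j)) +
      moment 0 j * moment 2 (n - j)) + (2 * moment 1 n + moment 0 n) := by
  have := sum_rec n (fun x => (x : ℚ) ^ 2)
  have hm : moment 2 (n + 1) = ∑ f : MinFun (n + 1), (fixCount (n + 1) f.1 : ℚ) ^ 2 := rfl
  rw [hm, this]
  have h0 := sum_last n (fun j => 2 * (moment 1 j * moment 0 (n - j) +
    moment 0 j * moment 1 (n - j)) + moment 0 j * moment 0 (n - j))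
  rw [Nat.sub_self, moment_zero_zero, moment_succ_zero, mul_one, mul_one, mul_zero, add_zero] at h0
  rw [← h0, ← Finset.sum_add_distrib]
  apply Finset.sum_congr rfl
  intro j _
  split_ifs <;>
  simp only [moment, Finset.sum_mul_sum, add_zero] <;>
  simp only [Finset.mul_sum, ← Finset.sum_add_distrib] <;>
  · apply Finset.sum_congr rfl
    intro g _
    apply Finset.sum_congr rfl
    intro h _
    push_cast
    ring

lemma moment_zero_eq (n : ℕ) : moment 0 n = catalan n := by
  induction n using Nat.strong_induction_on with
  | _ n ih =>
    cases n with
    | zero => simp [moment_zero_zero]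
    | succ n =>
      rw [moment_zero_rec, catalan_succ, ← Finset.sum_range (fun i => catalan i * catalan (n - i))]
      push_cast
      apply Finset.sum_congr rfl
      intro j hj
      rw [Finset.mem_range] at hj
      rw [ih j (by omega), ih (n - j) (by omega)]

/-- Generating functions of the moments. -/
noncomputable def momGF (k : ℕ) : PowerSeries ℚ := PowerSeries.mk (moment k)

lemma coeff_momGF_mul (k l n : ℕ) : coeff n (momGF k * momGF l) =
    ∑ j ∈ Finset.range (n + 1), moment k j * moment l (n - j) := by
  rw [coeff_mul, Finset.Nat.sum_antidiagonal_eq_sum_range_succ_mk]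
  simp [momGF]

lemma gf_zero : momGF 0 = 1 + X * (momGF 0 * momGF 0) := by
  ext n
  cases n with
  | zero => simp [momGF, moment_zero_zero]
  | succ n =>
    rw [map_add, coeff_succ_X_mul, coeff_momGF_mul, ← moment_zero_rec]
    simp [momGF, coeff_one]

lemma gf_one : momGF 1 = X * (momGF 1 * momGF 0 + momGF 0 * momGF 1 + momGF 0) := by
  ext n
  cases n with
  | zero => simp [momGF, moment_succ_zero]
  | succ n =>
    rw [coeff_succ_X_mul, map_add, map_add, coeff_momGF_mul, coeff_momGF_mul,
      ← Finset.sum_add_distrib]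
    simp [momGF, moment_one_rec]

lemma gf_two : momGF 2 = X * (momGF 2 * momGF 0 + (momGF 1 * momGF 1 + momGF 1 * momGF 1) +
    momGF 0 * momGF 2 + (momGF 1 + momGF 1 + momGF 0)) := by
  ext n
  cases n with
  | zero => simp [momGF, moment_succ_zero]
  | succ n =>
    rw [coeff_succ_X_mul]
    simp only [map_add, coeff_momGF_mul, ← Finset.sum_add_distrib]
    simp [momGF, moment_two_rec, two_mul]

/-- Central binomial series. -/
noncomputable def cbGF : PowerSeries ℚ := PowerSeries.mk fun n => (n.centralBinom : ℚ)

lemma deriv_catSqrt : d⁄dX ℚ (1 - 2 * (X * momGF 0)) = - 2 * cbGF := by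
  have h2 : (2 : PowerSeries ℚ) = C (2 : ℚ) := (map_ofNat _ 2).symm
  ext n
  rw [coeff_derivative, map_sub, h2, coeff_C_mul, coeff_succ_X_mul, ← map_neg, coeff_C_mul]
  simp only [momGF, cbGF, coeff_mk, coeff_one, moment_zero_eq]
  have := succ_mul_catalan_eq_centralBinom n
  have h : ((n : ℚ) + 1) * catalan n = n.centralBinom := by exact_mod_cast this
  rw [← h]
  simp
  ring

lemma main_gf : 2 * momGF 2 = 2 * (X * (X * d⁄dX ℚ cbGF)) + cbGF - 1 := by
  have two_ne : (2 : PowerSeries ℚ) ≠ 0 := by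
    have h2 : (2 : PowerSeries ℚ) = C (2 : ℚ) := (map_ofNat _ 2).symm
    rw [h2]; intro h
    simpa using congrArg constantCoeff h
  have h0 := gf_zero
  have h1 := gf_one
  have h2 := gf_two
  have hd := deriv_catSqrt
  set A := momGF 0
  set B := momGF 1
  set D := momGF 2
  set c := cbGF
  set s := 1 - 2 * (X * A) with hs
  have hss : s * s = 1 - 4 * X := by
    rw [hs]
    linear_combination (-4 * X) * h0
  have d2 : ∀ m : ℕ, d⁄dX ℚ (m : PowerSeries ℚ) = 0 := fun m => by simp
  have hsd := congrArg (d⁄dX ℚ) hss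
  have hx4 : d⁄dX ℚ (1 - 4 * X : PowerSeries ℚ) = -4 := by
    rw [map_sub, Derivation.leibniz, derivative_X, derivative_one]
    have := d2 4
    push_cast at this
    rw [this]
    simp
  rw [hx4, Derivation.leibniz, hd, smul_eq_mul] at hsd
  have hsc : s * c = 1 := by
    have : (2 * 2) * (s * c) = (2 * 2) * 1 := by linear_combination -hsd
    exact mul_left_cancel₀ (mul_ne_zero two_ne two_ne) this
  have hcd := congrArg (d⁄dX ℚ) hsc
  rw [derivative_one, Derivation.leibniz, hd, smul_eq_mul, smul_eq_mul] at hcd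
  set c' := d⁄dX ℚ c
  have hc' : c' = 2 * c ^ 3 := by
    linear_combination c * hcd - c' * hsc
  have hb : 2 * B = c - 1 := by
    have e : B * s = X * A := by rw [hs]; linear_combination h1
    linear_combination 2 * c * e - 2 * B * hsc + c * hs - hsc
  have hD : D * s = 2 * X * B ^ 2 + 2 * X * B + X * A := by
    rw [hs]; linear_combination h2
  have e2 : 2 * D = c * (X * (c ^ 2 - 1)) + c - 1 := by
    linear_combination 2 * c * hD - 2 * D * hsc + c * X * (2 * B + c - 1) * hb +
      2 * c * X * hb + c * hs - hsc
  rw [e2, hc']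
  linear_combination -X * (-c * (s * c + 1) * hsc + c ^ 3 * hss)

end Moments

lemma moment_two_closed (n : ℕ) : 2 * moment 2 (n + 2) =
    2 * ((n + 1) * (n + 1).centralBinom) + (n + 2).centralBinom := by
  have h := congrArg (PowerSeries.coeff (n + 2)) main_gf
  have h2 : (2 : PowerSeries ℚ) = PowerSeries.C (2 : ℚ) := (map_ofNat _ 2).symm
  rw [map_sub, map_add, h2, PowerSeries.coeff_C_mul, PowerSeries.coeff_C_mul,
    PowerSeries.coeff_succ_X_mul, PowerSeries.coeff_succ_X_mul, PowerSeries.coeff_derivative] at h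
  simp [momGF, cbGF, PowerSeries.coeff_one] at h
  rw [h]
  ring

lemma moment_two_one : 2 * moment 2 1 = 2 := by
  have h := congrArg (PowerSeries.coeff 1) main_gf
  have h2 : (2 : PowerSeries ℚ) = PowerSeries.C (2 : ℚ) := (map_ofNat _ 2).symm
  rw [map_sub, map_add, h2, PowerSeries.coeff_C_mul, PowerSeries.coeff_C_mul,
    PowerSeries.coeff_succ_X_mul] at h
  simp [momGF, cbGF, PowerSeries.coeff_one] at h
  rw [h]
  norm_num [Nat.centralBinom]

lemma sum_sq_eq (n : ℕ) : ∑ π : NCPart n, (numBlocks π : ℚ) ^ 2 = moment 2 n :=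
  sum_numBlocks n (fun x => (x : ℚ) ^ 2)

lemma card_eq (n : ℕ) : (Fintype.card (NCPart n) : ℚ) = catalan n := by
  rw [← moment_zero_eq, moment]
  have := sum_numBlocks n (fun _ => 1)
  simp at this
  simp [this]

/-- For every `n ≥ 1`, the variance of the number of blocks of a uniformly
random non-crossing partition of `[n]` equals `(n² − 1)/(4(2n − 1))`: as rational numbers,
`(1/C_n)·Σ_{π ∈ NC(n)} (#blocks(π))² − ((n+1)/2)² = (n² − 1)/(4(2n − 1))`. -/
theorem variance_numBlocks (n : ℕ) (hn : 1 ≤ n) :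
    (∑ π : NCPart n, (numBlocks π : ℚ) ^ 2) / (Fintype.card (NCPart n) : ℚ) -
      (((n : ℚ) + 1) / 2) ^ 2 =
      ((n : ℚ) ^ 2 - 1) / (4 * (2 * (n : ℚ) - 1)) := by
  rw [sum_sq_eq, card_eq]
  obtain ⟨m, rfl⟩ : ∃ m, n = m + 1 := ⟨n - 1, by omega⟩
  cases m with
  | zero =>
    have := moment_two_one
    have h : moment 2 1 = 1 := by linarith
    simp [h]
  | succ m =>
    have h1 := moment_two_closed m
    have h2 : (((m + 2 : ℕ) : ℚ) + 1) * catalan (m + 2) = (m + 2).centralBinom := by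
      exact_mod_cast succ_mul_catalan_eq_centralBinom (m + 2)
    have h3 : ((m : ℚ) + 2) * (m + 2).centralBinom = 2 * (2 * (m + 1) + 1) *
        (m + 1).centralBinom := by
      have := Nat.succ_mul_centralBinom_succ (m + 1)
      exact_mod_cast this
    have hc : (catalan (m + 2) : ℚ) ≠ 0 := by
      intro h
      rw [h, mul_zero] at h2
      exact Nat.centralBinom_ne_zero (m + 2) (by exact_mod_cast h2.symm)
    have hq : (2 * (m : ℚ) + 3) ≠ 0 := by positivity
    push_cast at h2 ⊢
    have h5 : ((m + 1).centralBinom : ℚ) =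
        ((m : ℚ) + 2) * ((m + 3) * catalan (m + 2)) / (2 * (2 * m + 3)) := by
      rw [eq_div_iff (by positivity)]
      linear_combination (-1) * h3 - ((m : ℚ) + 2) * h2
    have h6 : moment 2 (m + 2) = ((m : ℚ) + 1) * (m + 1).centralBinom +
        (m + 3) * catalan (m + 2) / 2 := by
      linear_combination h1 / 2 - h2 / 2
    have e : moment 2 (m + 1 + 1) = moment 2 (m + 2) := rfl
    have e' : (catalan (m + 1 + 1) : ℚ) = catalan (m + 2) := rfl
    have hq2 : 2 * ((m : ℚ) + 1 + 1) - 1 ≠ 0 := by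
      have : 2 * ((m : ℚ) + 1 + 1) - 1 = 2 * m + 3 := by ring
      rw [this]; exact hq
    rw [e, e', h6, h5]
    field_simp
    ring_nf
end

section
/- Central limit theorem for the number of blocks: let X_n be the number of blocks of a uniformly random non-crossing partition of [n], μ_n = (n+1)/2 and σ_n² = (n² − 1)/(4(2n − 1)). Then for every real x, the probability (1/C_n)·#{π ∈ NC(n) : #blocks(π) ≤ μ_n + x·σ_n} converges, as n → ∞, to Φ(x), the cumulative distribution function of the standard Gaussian distribution. -/
open Filter ProbabilityTheory


/-! ### Counting Catalan sequences -/

/-- Binomial coefficients with an integer lower index. -/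
def ich (n : ℕ) (z : ℤ) : ℤ := if 0 ≤ z then (n.choose z.toNat : ℤ) else 0

lemma ich_natCast (n k : ℕ) : ich n (k : ℤ) = n.choose k := by simp [ich]

lemma ich_neg (n : ℕ) {z : ℤ} (h : z < 0) : ich n z = 0 := by
  simp [ich, not_le.2 h]

lemma ich_succ (n : ℕ) (z : ℤ) : ich (n + 1) z = ich n z + ich n (z - 1) := by
  rcases lt_or_ge z 0 with h | h
  · rw [ich_neg _ h, ich_neg _ h, ich_neg _ (by omega)]; rfl
  · obtain ⟨k, rfl⟩ := Int.eq_ofNat_of_zero_le h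
    cases k with
    | zero =>
      rw [ich_neg n (z := _ - 1) (by simp)]
      rw [ich_natCast, ich_natCast]; simp
    | succ k =>
      have : ((k + 1 : ℕ) : ℤ) - 1 = (k : ℤ) := by push_cast; ring
      rw [this, ich_natCast, ich_natCast, ich_natCast, Nat.choose_succ_succ]
      push_cast; ring

lemma ich_symm (n : ℕ) (z : ℤ) : ich n ((n : ℤ) - z) = ich n z := by
  rcases lt_or_ge z 0 with h | h
  · rw [ich_neg _ h]
    obtain ⟨k, hk⟩ := Int.eq_ofNat_of_zero_le (show (0 : ℤ) ≤ n - z by omega)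
    rw [hk]
    simp only [ich_natCast]
    rw [Nat.choose_eq_zero_of_lt (by omega)]; rfl
  · obtain ⟨k, rfl⟩ := Int.eq_ofNat_of_zero_le h
    rcases lt_or_ge n k with h' | h'
    · rw [ich_neg _ (by omega)]
      simp only [ich_natCast]
      rw [Nat.choose_eq_zero_of_lt (by omega)]; rfl
    · have : (n : ℤ) - (k : ℤ) = ((n - k : ℕ) : ℤ) := by omega
      simp only [this, ich_natCast]
      rw [Nat.choose_symm h']

/-- The number of ways to continue a Catalan sequence from state `v` by `m` steps, with
`k` up-steps. -/
def tcount : ℕ → ℤ → ℕ → ℤ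
  | 0, k, _ => if k = 0 then 1 else 0
  | m + 1, k, v => tcount m (k - 1) (v + 1) + ∑ w ∈ Finset.Icc 1 v, tcount m k w

lemma tcount_formula (m : ℕ) : ∀ (u : ℕ) (k : ℤ), tcount m k (u + 1) =
    ich m k * ich (m + u) (m - k) - ich m (k - 1) * ich (m + u) (m - k - 1) := by
  induction m with
  | zero =>
    intro u k
    simp only [tcount]
    rcases lt_trichotomy k 0 with h | h | h
    · rw [if_neg (by omega), ich_neg _ h, ich_neg _ (show k - 1 < 0 by omega)]; simp
    · subst h
      simp [ich]
    · rw [if_neg (by omega), ich_neg _ (show ((0 : ℕ) : ℤ) - k < 0 by simpa using h),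
        ich_neg _ (show ((0 : ℕ) : ℤ) - k - 1 < 0 by simp; omega)]; simp
  | succ m ih =>
    intro u
    induction u with
    | zero =>
      intro k
      simp only [tcount]
      have e1 := ih 1 (k - 1)
      have e2 := ih 0 k
      have hs := ich_symm m (k - 1)
      have hs' := ich_symm m k
      have a1 := ich_succ m k
      have a2 := ich_succ m (k - 1)
      have a3 := ich_succ m (m - (k - 1))
      have a4 := ich_succ m (m - k)
      simp only [zero_add, Finset.Icc_self, Finset.sum_singleton, add_zero] at *
      rw [e1, e2]
      push_cast
      rw [show (m : ℤ) + 1 - k = m - (k - 1) by ring,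
        show (m : ℤ) - (k - 1) - 1 = m - k by ring] at *
      rw [a1, a2, a3, a4, hs, hs']
      ring
    | succ u ih2 =>
      intro k
      have h2 := ih2 k
      simp only [tcount] at h2 ⊢
      rw [Finset.sum_Icc_succ_top (by omega)]
      have e1 := ih (u + 1) (k - 1)
      have e1' := ih (u + 2) (k - 1)
      have e2 := ih (u + 1) k
      have a1 := ich_succ m k
      have a2 := ich_succ m (k - 1)
      have a3 := ich_succ (m + u + 1) (m - (k - 1))
      have a4 := ich_succ (m + u + 1) (m - k)
      rw [e1] at h2
      rw [show u + 1 + 1 + 1 = u + 2 + 1 from rfl, e1', show u + 1 + 1 = (u + 1) + 1 from rfl, e2]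
      push_cast at *
      rw [show m + 1 + u = m + u + 1 by ring, show m + (u + 1) = m + u + 1 by ring,
        show (m : ℤ) + 1 - k = m - (k - 1) by ring] at h2
      rw [show m + 1 + (u + 1) = m + u + 1 + 1 by ring, show m + (u + 1) = m + u + 1 by ring,
        show m + (u + 2) = m + u + 1 + 1 by ring,
        show (m : ℤ) + 1 - k = m - (k - 1) by ring]
      rw [show (m : ℤ) - (k - 1) - 1 = m - k by ring] at *
      rw [a1, a2] at h2 ⊢
      rw [a3, a4]
      linear_combination h2

lemma tcount_narayana (n : ℕ) (hn : 1 ≤ n) (k : ℕ) :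
    (n : ℤ) * tcount n k 0 = (n.choose k : ℤ) * (n.choose (n + 1 - k) : ℤ) := by
  obtain ⟨m, rfl⟩ : ∃ m, n = m + 1 := ⟨n - 1, by omega⟩
  have h0 : tcount (m + 1) k 0 = tcount m (k - 1) (0 + 1) := by simp [tcount]
  rw [h0, tcount_formula]
  have s1 := ich_symm m ((k : ℤ) - 1)
  have s2 := ich_symm m (k : ℤ)
  rw [show (m : ℤ) - ((k : ℤ) - 1) - 1 = m - k by ring, add_zero, s1, s2]
  match k with
  | 0 => simp [ich]
  | 1 => simp [ich]
  | j + 2 =>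
    rw [show ((j + 2 : ℕ) : ℤ) - 1 - 1 = (j : ℤ) by push_cast; ring,
      show ((j + 2 : ℕ) : ℤ) - 1 = ((j + 1 : ℕ) : ℤ) by push_cast; ring]
    simp only [ich_natCast]
    rcases lt_or_ge (m + 1) (j + 2) with h | h
    · rw [Nat.choose_eq_zero_of_lt h, Nat.choose_eq_zero_of_lt (show m < j + 1 by omega),
        Nat.choose_eq_zero_of_lt (show m < j + 2 by omega)]
      simp
    · have hsym : (m + 1).choose (m + 1 + 1 - (j + 2)) = (m + 1).choose (j + 1) := by
        rw [← Nat.choose_symm (show j + 1 ≤ m + 1 by omega)]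
        congr 1; omega
      rw [hsym, Nat.choose_succ_succ m (j + 1), Nat.choose_succ_succ m j]
      have p := Nat.choose_succ_right_eq m j
      have q := Nat.choose_succ_right_eq m (j + 1)
      have p' : ((m.choose (j + 1) : ℕ) : ℤ) * (j + 1) = (m.choose j : ℤ) * (m - j) := by
        zify [show j ≤ m by omega] at p
        exact p
      have q' : ((m.choose (j + 2) : ℕ) : ℤ) * (j + 2) = (m.choose (j + 1) : ℤ) * (m - (j + 1)) := by
        zify [show j + 1 ≤ m by omega] at q
        linear_combination q
      push_cast
      linear_combination ((m.choose (j + 1) : ℤ) + (m.choose (j + 2) : ℤ)) * p' -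
        ((m.choose j : ℤ) + (m.choose (j + 1) : ℤ)) * q'

/-- Number of up-steps among the first `m` steps. -/
def ups (m : ℕ) (h : ℕ → ℕ) : ℕ := ((Finset.range m).filter fun i => h (i + 1) = h i + 1).card

/-- Catalan sequences with `m` steps starting at `v`. -/
def CatSeq (m v : ℕ) : Set (ℕ → ℕ) :=
  {h | h 0 = v ∧ (∀ i < m, 1 ≤ h (i + 1) ∧ h (i + 1) ≤ h i + 1) ∧ ∀ i, m < i → h i = 0}

/-- Prepending a value. -/
def scons (v : ℕ) (g : ℕ → ℕ) : ℕ → ℕ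
  | 0 => v
  | i + 1 => g i

lemma scons_injective (v : ℕ) : Function.Injective (scons v) := by
  intro g g' h
  funext i
  exact congrFun h (i + 1)

lemma ups_scons (m v : ℕ) (g : ℕ → ℕ) :
    ups (m + 1) (scons v g) = ups m g + if g 0 = v + 1 then 1 else 0 := by
  unfold ups
  rw [Finset.card_filter, Finset.card_filter, Finset.sum_range_succ']
  rfl

lemma catSeq_succ (m v : ℕ) :
    CatSeq (m + 1) v = ⋃ w ∈ (Finset.Icc 1 (v + 1)), scons v '' CatSeq m w := by
  ext h
  simp only [Set.mem_iUnion, Set.mem_image, Finset.mem_Icc, exists_prop]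
  constructor
  · rintro ⟨h0, h1, h2⟩
    refine ⟨h 1, ?_, fun i => h (i + 1), ⟨rfl, fun i hi => h1 (i + 1) (by omega),
      fun i hi => h2 (i + 1) (by omega)⟩, ?_⟩
    · have := h1 0 (by omega)
      simpa [h0] using this
    · funext i
      cases i with
      | zero => exact h0.symm
      | succ i => rfl
  · rintro ⟨w, hw, g, ⟨g0, g1, g2⟩, rfl⟩
    refine ⟨rfl, ?_, ?_⟩
    · intro i hi
      cases i with
      | zero => simpa [scons, g0] using hw
      | succ i => exact g1 i (by omega)
    · intro i hi
      cases i with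
      | zero => omega
      | succ i => exact g2 i (by omega)

lemma catSeq_finite (m : ℕ) : ∀ v, (CatSeq m v).Finite := by
  induction m with
  | zero =>
    intro v
    apply (Set.finite_singleton (scons v (fun _ => 0))).subset
    rintro h ⟨h0, -, h2⟩
    simp only [Set.mem_singleton_iff]
    funext i
    cases i with
    | zero => exact h0
    | succ i => exact h2 _ (by omega)
  | succ m ih =>
    intro v
    rw [catSeq_succ]
    exact Set.Finite.biUnion (Finset.finite_toSet _) fun w _ => (ih w).image _

lemma ncard_catSeq (m : ℕ) : ∀ (v : ℕ) (k : ℤ),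
    ((({h ∈ CatSeq m v | (ups m h : ℤ) = k}).ncard : ℕ) : ℤ) = tcount m k v := by
  induction m with
  | zero =>
    intro v k
    simp only [tcount]
    split_ifs with hk
    · have : {h ∈ CatSeq 0 v | (ups 0 h : ℤ) = k} = {scons v (fun _ => 0)} := by
        ext h
        simp only [Set.mem_ofPred_eq, Set.mem_singleton_iff]
        constructor
        · rintro ⟨⟨h0, -, h2⟩, -⟩
          funext i
          cases i with
          | zero => exact h0
          | succ i => exact h2 _ (by omega)
        · rintro rfl
          refine ⟨⟨rfl, by simp, ?_⟩, by simp [ups, hk]⟩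
          intro i hi
          cases i with
          | zero => omega
          | succ i => rfl
      rw [this]; simp
    · have : {h ∈ CatSeq 0 v | (ups 0 h : ℤ) = k} = ∅ := by
        ext h
        simp only [Set.mem_ofPred_eq, Set.mem_empty_iff_false, iff_false, not_and]
        intro _ h; apply hk; simpa [ups] using h.symm
      rw [this]; simp
  | succ m ih =>
    intro v k
    have key : {h ∈ CatSeq (m + 1) v | (ups (m + 1) h : ℤ) = k} =
        ⋃ w ∈ (Finset.Icc 1 (v + 1)), scons v ''
          {g ∈ CatSeq m w | (ups m g : ℤ) = k - if w = v + 1 then 1 else 0} := by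
      rw [catSeq_succ]
      ext h
      simp only [Set.mem_iUnion, Set.mem_image, exists_prop, Set.mem_ofPred_eq]
      constructor
      · rintro ⟨⟨w, hw, g, hg, rfl⟩, hk⟩
        refine ⟨w, hw, g, ⟨hg, ?_⟩, rfl⟩
        rw [ups_scons, hg.1] at hk
        push_cast at hk
        linarith
      · rintro ⟨w, hw, g, ⟨hg, hk⟩, rfl⟩
        refine ⟨⟨w, hw, g, hg, rfl⟩, ?_⟩
        rw [ups_scons, hg.1]
        push_cast
        linarith
    rw [key]
    have hfin : ∀ w, {g ∈ CatSeq m w | (ups m g : ℤ) = k - if w = v + 1 then 1 else 0}.Finite :=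
      fun w => (catSeq_finite m w).subset (fun _ h => h.1)
    have hcard : (⋃ w ∈ (Finset.Icc 1 (v + 1)), scons v ''
          {g ∈ CatSeq m w | (ups m g : ℤ) = k - if w = v + 1 then 1 else 0}).ncard =
        ∑ w ∈ Finset.Icc 1 (v + 1), (scons v ''
          {g ∈ CatSeq m w | (ups m g : ℤ) = k - if w = v + 1 then 1 else 0}).ncard := by
      classical
      have e : (⋃ w ∈ (Finset.Icc 1 (v + 1)), scons v ''
          {g ∈ CatSeq m w | (ups m g : ℤ) = k - if w = v + 1 then 1 else 0}) =
          (((Finset.Icc 1 (v + 1)).biUnion fun w => ((hfin w).image (scons v)).toFinset : Finset (ℕ → ℕ)) :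
            Set (ℕ → ℕ)) := by
        ext; simp
      rw [e, Set.ncard_coe_finset, Finset.card_biUnion]
      · refine Finset.sum_congr rfl fun w _ => ?_
        rw [Set.ncard_eq_toFinset_card _ ((hfin w).image (scons v))]
      · intro w _ w' _ hww
        rw [Function.onFun, Finset.disjoint_left]
        intro h hh hh'
        simp only [Set.Finite.mem_toFinset, Set.mem_image] at hh hh'
        obtain ⟨g, hg, rfl⟩ := hh
        obtain ⟨g', hg', he⟩ := hh'
        have := scons_injective v he
        subst this
        exact hww (hg.1.1.symm.trans hg'.1.1)
    rw [hcard]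
    simp only [Set.ncard_image_of_injective _ (scons_injective v)]
    push_cast
    simp only [ih]
    rw [Finset.sum_Icc_succ_top (by omega)]
    simp only [tcount, if_true]
    rw [add_comm]
    congr 1
    refine Finset.sum_congr rfl fun w hw => ?_
    rw [Finset.mem_Icc] at hw
    rw [if_neg (by omega), sub_zero]

/-! ### The bijection between non-crossing partitions and Catalan sequences -/

/-- The relation on indices read off from a sequence. -/
def relH (n : ℕ) (h : ℕ → ℕ) (i j : ℕ) : Prop :=
  i < n ∧ j < n ∧ h (i + 1) = h (j + 1) ∧
    ∀ l, (i ≤ l ∧ l ≤ j ∨ j ≤ l ∧ l ≤ i) → h (i + 1) ≤ h (l + 1)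

/-- Abstract non-crossing equivalence relations on `{0, …, n-1}`. -/
structure NCRel (n : ℕ) (R : ℕ → ℕ → Prop) : Prop where
  symm : ∀ {i j}, R i j → R j i
  trans : ∀ {i j k}, R i j → R j k → R i k
  refl : ∀ {i}, i < n → R i i
  lt : ∀ {i j}, R i j → i < n ∧ j < n
  nc : ∀ {a b c d}, a < b → b < c → c < d → R a c → R b d → R a b

open Classical in
/-- Cut points visible from `i`. -/
noncomputable def cuts (R : ℕ → ℕ → Prop) (i : ℕ) : Finset ℕ :=
  (Finset.range i).filter fun j => ¬ ∃ a c, a < j ∧ j ≤ c ∧ c < i ∧ R a c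

lemma mem_cuts {R : ℕ → ℕ → Prop} {i j : ℕ} :
    j ∈ cuts R i ↔ j < i ∧ ∀ a c, a < j → j ≤ c → c < i → ¬ R a c := by
  simp only [cuts, Finset.mem_filter, Finset.mem_range, not_exists, not_and]

/-- The Catalan sequence of a relation. -/
noncomputable def seqR (n : ℕ) (R : ℕ → ℕ → Prop) (i : ℕ) : ℕ :=
  if i ≤ n then (cuts R i).card else 0

lemma seqR_le {n : ℕ} {R : ℕ → ℕ → Prop} {i : ℕ} (h : i ≤ n) : seqR n R i = (cuts R i).card :=
  if_pos h

lemma seqR_mem (n : ℕ) (R : ℕ → ℕ → Prop) : seqR n R ∈ CatSeq n 0 := by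
  refine ⟨?_, ?_, ?_⟩
  · rw [seqR_le (by omega)]; simp [cuts]
  · intro i hi
    rw [seqR_le (by omega), seqR_le (by omega)]
    constructor
    · apply Finset.card_pos.2
      exact ⟨0, mem_cuts.2 ⟨by omega, fun a c h => by omega⟩⟩
    · calc (cuts R (i + 1)).card ≤ (insert i (cuts R i)).card := by
            apply Finset.card_le_card
            intro j hj
            rw [mem_cuts] at hj
            rw [Finset.mem_insert, mem_cuts]
            by_cases h : j = i
            · exact Or.inl h
            · exact Or.inr ⟨by omega, fun a c h1 h2 h3 => hj.2 a c h1 h2 (by omega)⟩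
        _ ≤ _ := Finset.card_insert_le _ _
  · intro i hi
    exact if_neg (by omega)

lemma NCRel.cuts_eq {n : ℕ} {R : ℕ → ℕ → Prop} (hR : NCRel n R) {i j : ℕ} (hij : i < j)
    (h : R i j) : cuts R (i + 1) = cuts R (j + 1) := by
  ext l
  simp only [mem_cuts]
  constructor
  · rintro ⟨hl, hc⟩
    refine ⟨by omega, fun a c h1 h2 h3 hac => ?_⟩
    by_cases hci : c ≤ i
    · exact hc a c h1 h2 (by omega) hac
    · have : R a i := by
        by_cases hcj : c = j
        · subst hcj; exact hR.trans hac (hR.symm h)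
        · exact hR.nc (by omega) (by omega) (show c < j by omega) hac h
      exact hc a i h1 (by omega) (by omega) this
  · rintro ⟨hl, hc⟩
    have : l ≤ i := by
      by_contra hli
      exact hc i j (by omega) (by omega) (by omega) h
    exact ⟨by omega, fun a c h1 h2 h3 => hc a c h1 h2 (by omega)⟩

lemma cuts_subset {R : ℕ → ℕ → Prop} {i j l : ℕ} (hil : i ≤ l) (hlj : l ≤ j)
    (h : cuts R (i + 1) = cuts R (j + 1)) : cuts R (j + 1) ⊆ cuts R (l + 1) := by
  intro t ht
  have h1 := ht
  rw [← h, mem_cuts] at h1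
  rw [mem_cuts] at ht ⊢
  exact ⟨by omega, fun a c e1 e2 e3 => ht.2 a c e1 e2 (by omega)⟩

lemma NCRel.relH_of_lt {n : ℕ} {R : ℕ → ℕ → Prop} (hR : NCRel n R) {i j : ℕ} (hij : i < j)
    (h : R i j) : relH n (seqR n R) i j := by
  have hl := hR.lt h
  refine ⟨hl.1, hl.2, ?_, ?_⟩
  · rw [seqR_le (by omega), seqR_le (by omega), hR.cuts_eq hij h]
  · intro l hl'
    have hl'' : i ≤ l ∧ l ≤ j := by omega
    rw [seqR_le (by omega), seqR_le (by omega), hR.cuts_eq hij h]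
    exact Finset.card_le_card (cuts_subset hl''.1 hl''.2 (hR.cuts_eq hij h))

lemma NCRel.of_relH {n : ℕ} {R : ℕ → ℕ → Prop} (hR : NCRel n R) (i j : ℕ) (hij : i < j)
    (h : relH n (seqR n R) i j) : R i j := by
  induction j using Nat.strong_induction_on with
  | _ j ih =>
  obtain ⟨hi, hj, he, hmin⟩ := h
  have hex : ∃ p, p < j ∧ R p j := by
    by_contra hno
    push Not at hno
    have h1 : insert j (cuts R j) ⊆ cuts R (j + 1) := by
      intro t ht
      rw [Finset.mem_insert, mem_cuts] at ht
      rw [mem_cuts]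
      rcases ht with rfl | ⟨ht, hc⟩
      · refine ⟨by omega, fun a c e1 e2 e3 hac => ?_⟩
        have : c = t := by omega
        subst this
        exact hno a e1 hac
      · refine ⟨by omega, fun a c e1 e2 e3 hac => ?_⟩
        by_cases hcj : c = j
        · subst hcj; exact hno a (by omega) hac
        · exact hc a c e1 e2 (by omega) hac
    have h2 := Finset.card_le_card h1
    rw [Finset.card_insert_of_notMem (by rw [mem_cuts]; omega)] at h2
    have h3 := hmin (j - 1) (by omega)
    rw [he, seqR_le (by omega), seqR_le (by omega), show j - 1 + 1 = j by omega] at h3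
    omega
  classical
  set p := Nat.findGreatest (fun p => p < j ∧ R p j) j with hp
  obtain ⟨p0, hp0⟩ := hex
  have hpp : p < j ∧ R p j := Nat.findGreatest_spec (P := fun p => p < j ∧ R p j) hp0.1.le hp0
  have hpmax : ∀ q, p < q → q < j → ¬ R q j := fun q h1 h2 h3 =>
    Nat.findGreatest_is_greatest h1 h2.le ⟨h2, h3⟩
  have hpj := hR.relH_of_lt hpp.1 hpp.2
  rcases lt_trichotomy p i with hlt | heq | hgt
  · exfalso
    have hsub := cuts_subset (R := R) (l := i) hlt.le hij.le (hR.cuts_eq hpp.1 hpp.2)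
    rw [seqR_le (by omega), seqR_le (by omega)] at he
    have heq := Finset.eq_of_subset_of_card_le hsub he.le
    rw [← hR.cuts_eq hpp.1 hpp.2] at heq
    have hmem : p + 1 ∈ cuts R (i + 1) := by
      rw [mem_cuts]
      refine ⟨by omega, fun a c e1 e2 e3 hac => ?_⟩
      have hap : R a p := by
        by_cases hap : a = p
        · subst hap; exact hR.refl (by omega)
        · exact hR.nc (show a < p by omega) (show p < c by omega) (show c < j by omega) hac hpp.2
      exact hpmax c (by omega) (by omega)
        (hR.trans (hR.trans (hR.symm hac) hap) hpp.2)
    rw [← heq, mem_cuts] at hmem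
    omega
  · rw [← heq]; exact hpp.2
  · refine hR.trans (ih p hpp.1 hgt ⟨hi, by omega, ?_, ?_⟩) hpp.2
    · rw [he, hpj.2.2.1]
    · intro l hl
      exact hmin l (by omega)

lemma relH_symm {n : ℕ} {h : ℕ → ℕ} {i j : ℕ} (H : relH n h i j) : relH n h j i := by
  obtain ⟨h1, h2, h3, h4⟩ := H
  exact ⟨h2, h1, h3.symm, fun l hl => h3 ▸ h4 l hl.symm⟩

lemma NCRel.relH_iff {n : ℕ} {R : ℕ → ℕ → Prop} (hR : NCRel n R) (i j : ℕ) :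
    relH n (seqR n R) i j ↔ R i j := by
  rcases lt_trichotomy i j with h | h | h
  · exact ⟨hR.of_relH i j h, hR.relH_of_lt h⟩
  · subst h
    constructor
    · intro H; exact hR.refl H.1
    · intro H
      have := (hR.lt H).1
      exact ⟨this, this, rfl, fun l hl => by rw [show l = i by omega]⟩
  · exact ⟨fun H => hR.symm (hR.of_relH j i h (relH_symm H)),
      fun H => relH_symm (hR.relH_of_lt h (hR.symm H))⟩

lemma ncRel_relH (n : ℕ) (h : ℕ → ℕ) : NCRel n (relH n h) where
  symm := relH_symm
  trans := by
    rintro i j k ⟨h1, h2, h3, h4⟩ ⟨g1, g2, g3, g4⟩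
    refine ⟨h1, g2, h3.trans g3, fun l hl => ?_⟩
    by_cases hh : i ≤ l ∧ l ≤ j ∨ j ≤ l ∧ l ≤ i
    · exact h4 l hh
    · rw [h3]; exact g4 l (by omega)
  refl := fun {i} hi => ⟨hi, hi, rfl, fun l hl => by rw [show l = i by omega]⟩
  lt := fun H => ⟨H.1, H.2.1⟩
  nc := by
    rintro a b c d hab hbc hcd ⟨h1, h2, h3, h4⟩ ⟨g1, g2, g3, g4⟩
    have e1 := h4 b (by omega)
    have e2 := g4 c (by omega)
    exact ⟨h1, g1, by omega, fun l hl => h4 l (by omega)⟩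

lemma catSeq_min {n : ℕ} {h : ℕ → ℕ} (hh : h ∈ CatSeq n 0) {i : ℕ} (hi : i < n) :
    (¬ ∃ j < i, relH n h j i) ↔ h (i + 1) = h i + 1 := by
  obtain ⟨h0, h1, h2⟩ := hh
  constructor
  · intro hno
    by_contra hne
    apply hno
    have hle : h (i + 1) ≤ h i := by have := (h1 i hi).2; omega
    have hpos := (h1 i hi).1
    set j := Nat.findGreatest (fun j => h j < h (i + 1)) i with hj
    have hspec : h j < h (i + 1) :=
      Nat.findGreatest_spec (P := fun j => h j < h (i + 1)) (Nat.zero_le i) (by omega)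
    have hji : j ≤ i := Nat.findGreatest_le i
    have hmax : ∀ l, j < l → l ≤ i → h (i + 1) ≤ h l := fun l e1 e2 =>
      not_lt.1 (Nat.findGreatest_is_greatest (P := fun j => h j < h (i + 1)) e1 e2)
    have hlt : j < i := by
      rcases hji.lt_or_eq with h | h
      · exact h
      · rw [h] at hspec; omega
    have e1 := hmax (j + 1) (by omega) (by omega)
    have e2 := (h1 j (by omega)).2
    have e3 : h (j + 1) = h (i + 1) := by omega
    refine ⟨j, hlt, by omega, hi, e3, fun l hl => ?_⟩
    rw [e3]
    by_cases hli : l = i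
    · rw [hli]
    · exact hmax (l + 1) (by omega) (by omega)
  · rintro he ⟨j, hj, H⟩
    have := H.2.2.2 (i - 1) (by omega)
    rw [H.2.2.1, show i - 1 + 1 = i by omega] at this
    omega

lemma catSeq_ext {n : ℕ} {h g : ℕ → ℕ} (hh : h ∈ CatSeq n 0) (hg : g ∈ CatSeq n 0)
    (H : ∀ i j, relH n h i j ↔ relH n g i j) : h = g := by
  funext i
  induction i using Nat.strong_induction_on with
  | _ i ih =>
  cases i with
  | zero => rw [hh.1, hg.1]
  | succ i =>
    by_cases hi : i < n
    · by_cases hex : ∃ j < i, relH n h j i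
      · obtain ⟨j, hj, hr⟩ := hex
        have e1 := hr.2.2.1
        have e2 := ((H j i).1 hr).2.2.1
        rw [← e1, ← e2]
        exact ih _ (by omega)
      · rw [(catSeq_min hh hi).1 hex, (catSeq_min hg hi).1 (by simpa only [H] using hex),
          ih i (by omega)]
    · rw [hh.2.2 _ (by omega), hg.2.2 _ (by omega)]

/-- The relation of a non-crossing partition. -/
def relP {n : ℕ} (P : NCPart n) (i j : ℕ) : Prop :=
  ∃ (hi : i < n) (hj : j < n), ∃ B ∈ P.1.parts, (⟨i, hi⟩ : Fin n) ∈ B ∧ (⟨j, hj⟩ : Fin n) ∈ B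

lemma ncRel_relP {n : ℕ} (P : NCPart n) : NCRel n (relP P) where
  symm := by
    rintro i j ⟨hi, hj, B, hB, h1, h2⟩
    exact ⟨hj, hi, B, hB, h2, h1⟩
  trans := by
    rintro i j k ⟨hi, hj, B, hB, h1, h2⟩ ⟨_, hk, B', hB', h1', h2'⟩
    have := P.1.eq_of_mem_parts hB hB' h2 h1'
    subst this
    exact ⟨hi, hk, B, hB, h1, h2'⟩
  refl := by
    intro i hi
    obtain ⟨B, hB, h⟩ := P.1.exists_mem (Finset.mem_univ (⟨i, hi⟩ : Fin n))
    exact ⟨hi, hi, B, hB, h, h⟩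
  lt := fun ⟨hi, hj, _⟩ => ⟨hi, hj⟩
  nc := by
    rintro a b c d hab hbc hcd ⟨ha, hc, B, hB, h1, h2⟩ ⟨hb, hd, B', hB', h1', h2'⟩
    have := P.2 ⟨a, ha⟩ ⟨b, hb⟩ ⟨c, hc⟩ ⟨d, hd⟩ hab hbc hcd B hB B' hB' h1 h2 h1' h2'
    subst this
    exact ⟨ha, hb, B, hB, h1, h1'⟩

lemma parts_subset_of_rel {n : ℕ} {P Q : NCPart n} (H : ∀ i j, relP P i j ↔ relP Q i j) :
    P.1.parts ⊆ Q.1.parts := by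
  intro B hB
  obtain ⟨x, hx⟩ := P.1.nonempty_of_mem_parts hB
  obtain ⟨B', hB', hx'⟩ := Q.1.exists_mem (Finset.mem_univ x)
  have : B = B' := by
    ext y
    constructor
    · intro hy
      obtain ⟨_, _, C, hC, h1, h2⟩ := (H x y).1 ⟨x.2, y.2, B, hB, hx, hy⟩
      rwa [Q.1.eq_of_mem_parts hB' hC hx' h1]
    · intro hy
      obtain ⟨_, _, C, hC, h1, h2⟩ := (H x y).2 ⟨x.2, y.2, B', hB', hx', hy⟩
      rwa [P.1.eq_of_mem_parts hB hC hx h1]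
  rwa [this]

lemma relP_ext {n : ℕ} {P Q : NCPart n} (H : ∀ i j, relP P i j ↔ relP Q i j) : P = Q :=
  Subtype.ext (Finpartition.ext ((parts_subset_of_rel H).antisymm
    (parts_subset_of_rel fun i j => (H i j).symm)))

lemma exists_ncPart {n : ℕ} {R : ℕ → ℕ → Prop} (hR : NCRel n R) :
    ∃ P : NCPart n, ∀ i j, relP P i j ↔ R i j := by
  classical
  let s : Setoid (Fin n) := ⟨fun i j => R i j, fun i => hR.refl i.2, hR.symm, hR.trans⟩
  have key : ∀ a b : Fin n, (∃ B ∈ (Finpartition.ofSetoid s).parts, a ∈ B ∧ b ∈ B) ↔ R a b := by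
    intro a b
    rw [← Finpartition.mem_part_iff_exists, Finpartition.mem_part_ofSetoid_iff_rel]
    exact ⟨hR.symm, hR.symm⟩
  refine ⟨⟨Finpartition.ofSetoid s, ?_⟩, ?_⟩
  · intro a b c d hab hbc hcd B hB B' hB' h1 h2 h3 h4
    have e1 := (key a c).1 ⟨B, hB, h1, h2⟩
    have e2 := (key b d).1 ⟨B', hB', h3, h4⟩
    obtain ⟨C, hC, h5, h6⟩ := (key a b).2 (hR.nc hab hbc hcd e1 e2)
    rw [Finpartition.eq_of_mem_parts _ hB hC h1 h5, Finpartition.eq_of_mem_parts _ hB' hC h3 h6]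
  · intro i j
    constructor
    · rintro ⟨hi, hj, H⟩
      exact (key ⟨i, hi⟩ ⟨j, hj⟩).1 H
    · intro H
      have := hR.lt H
      exact ⟨this.1, this.2, (key ⟨i, this.1⟩ ⟨j, this.2⟩).2 H⟩

open Classical in
lemma numBlocks_eq {n : ℕ} (P : NCPart n) :
    numBlocks P = ((Finset.range n).filter fun i => ¬ ∃ j < i, relP P j i).card := by
  unfold numBlocks
  refine Finset.card_bij (fun B hB => (B.min' (P.1.nonempty_of_mem_parts hB)).1) ?_ ?_ ?_
  · intro B hB
    have hm := B.min'_mem (P.1.nonempty_of_mem_parts hB)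
    rw [Finset.mem_filter, Finset.mem_range]
    refine ⟨Fin.is_lt _, ?_⟩
    rintro ⟨j, hj, h1, h2, C, hC, hjC, hmC⟩
    have := P.1.eq_of_mem_parts hB hC hm hmC
    subst this
    have := B.min'_le _ hjC
    rw [Fin.le_def] at this
    simp only at this
    omega
  · intro B hB B' hB' he
    have hm := B.min'_mem (P.1.nonempty_of_mem_parts hB)
    have hm' := B'.min'_mem (P.1.nonempty_of_mem_parts hB')
    rw [← Fin.ext he] at hm'
    exact P.1.eq_of_mem_parts hB hB' hm hm'
  · intro i hi
    rw [Finset.mem_filter, Finset.mem_range] at hi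
    obtain ⟨hi, hno⟩ := hi
    obtain ⟨B, hB, h⟩ := P.1.exists_mem (Finset.mem_univ (⟨i, hi⟩ : Fin n))
    refine ⟨B, hB, ?_⟩
    have hm := B.min'_mem (P.1.nonempty_of_mem_parts hB)
    have hle := B.min'_le _ h
    rw [Fin.le_def] at hle
    by_contra hne
    exact hno ⟨_, lt_of_le_of_ne hle hne, Fin.is_lt _, hi, B, hB, hm, h⟩

lemma ups_seqR {n : ℕ} (P : NCPart n) : ups n (seqR n (relP P)) = numBlocks P := by
  classical
  rw [numBlocks_eq, ups]
  congr 1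
  apply Finset.filter_congr
  intro i hi
  rw [← catSeq_min (seqR_mem n (relP P)) (Finset.mem_range.1 hi)]
  simp only [(ncRel_relP P).relH_iff]

lemma card_numBlocks (n k : ℕ) :
    (({π : NCPart n | numBlocks π = k}.ncard : ℕ) : ℤ) = tcount n k 0 := by
  rw [← ncard_catSeq]
  congr 1
  have hinj : Function.Injective (fun π : NCPart n => seqR n (relP π)) := by
    intro P Q h
    apply relP_ext
    intro i j
    rw [← (ncRel_relP P).relH_iff, ← (ncRel_relP Q).relH_iff]
    simp only at h
    rw [h]
  rw [← Set.ncard_image_of_injective _ hinj]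
  congr 1
  ext h
  constructor
  · rintro ⟨P, hP, rfl⟩
    refine ⟨seqR_mem _ _, ?_⟩
    have hP' : numBlocks P = k := hP
    simp only [ups_seqR, hP']
  · rintro ⟨hh, hk⟩
    obtain ⟨P, hP⟩ := exists_ncPart (ncRel_relH n h)
    have he : seqR n (relP P) = h := by
      apply catSeq_ext (seqR_mem _ _) hh
      intro i j
      rw [(ncRel_relP P).relH_iff, hP]
    refine ⟨P, ?_, he⟩
    show numBlocks P = k
    rw [← ups_seqR, he]
    exact_mod_cast hk

/-! ### Local estimates for binomial coefficients -/

lemma log_ratio_lower {v : ℝ} (h0 : 0 ≤ v) (h1 : v < 1) :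
    1 - v ≤ (1 + v) * Real.exp (-2 * v) := by
  have hs := Real.hasSum_log_sub_log_of_abs_lt_one (x := v) (by rw [abs_of_nonneg h0]; exact h1)
  have := le_hasSum hs 0 (fun k _ => by positivity)
  simp at this
  have e : Real.log (1 - v) ≤ Real.log (1 + v) + -2 * v := by linarith
  have := Real.exp_le_exp.2 e
  rwa [Real.exp_add, Real.exp_log (by linarith), Real.exp_log (by linarith)] at this

lemma log_ratio_upper {v : ℝ} (h0 : 0 ≤ v) (h1 : v ≤ 1 / 2) :
    (1 + v) * Real.exp (-2 * v - 2 * v ^ 3) ≤ 1 - v := by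
  have hmono : MonotoneOn (fun t : ℝ => Real.log (1 - t) - Real.log (1 + t) + 2 * t + 2 * t ^ 3)
      (Set.Icc 0 (1 / 2)) := by
    have hd : ∀ t ∈ Set.Icc (0 : ℝ) (1 / 2), HasDerivAt
        (fun t : ℝ => Real.log (1 - t) - Real.log (1 + t) + 2 * t + 2 * t ^ 3)
        (-1 / (1 - t) - 1 / (1 + t) + 2 * 1 + 2 * ((3 : ℕ) * t ^ (3 - 1) * 1)) t := by
      intro t ht
      have a1 : HasDerivAt (fun t : ℝ => 1 - t) (-1) t := by
        simpa using (hasDerivAt_id t).const_sub 1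
      have a2 : HasDerivAt (fun t : ℝ => 1 + t) 1 t := by
        simpa using (hasDerivAt_id t).const_add 1
      have b1 := a1.log (by linarith [ht.1, ht.2])
      have b2 := a2.log (by linarith [ht.1, ht.2])
      exact ((b1.sub b2).add ((hasDerivAt_id t).const_mul 2)).add
        (((hasDerivAt_id t).pow 3).const_mul 2)
    apply monotoneOn_of_deriv_nonneg (convex_Icc _ _)
    · intro t ht
      exact (hd t ht).continuousAt.continuousWithinAt
    · intro t ht
      exact (hd t (interior_subset ht)).differentiableAt.differentiableWithinAt
    · intro t ht
      have ht' := interior_subset ht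
      rw [(hd t ht').deriv]
      have p1 : 0 < 1 - t := by linarith [ht'.1, ht'.2]
      have p2 : 0 < 1 + t := by linarith [ht'.1, ht'.2]
      have : -1 / (1 - t) - 1 / (1 + t) + 2 * 1 + 2 * ((3 : ℕ) * t ^ (3 - 1) * 1) =
          t ^ 2 * (4 - 6 * t ^ 2) / ((1 - t) * (1 + t)) := by
        field_simp
        push_cast
        ring
      rw [this]
      apply div_nonneg _ (by positivity)
      apply mul_nonneg (sq_nonneg t)
      nlinarith [ht'.1, ht'.2]
  have := hmono (Set.left_mem_Icc.2 (by norm_num)) (Set.mem_Icc.2 ⟨h0, h1⟩) h0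
  simp at this
  have e : Real.log (1 + v) + (-2 * v - 2 * v ^ 3) ≤ Real.log (1 - v) := by linarith
  have := Real.exp_le_exp.2 e
  rwa [Real.exp_add, Real.exp_log (by linarith), Real.exp_log (by linarith)] at this

/-- Binomial coefficient times the inverse Gaussian profile. -/
noncomputable def bprof (n k : ℕ) : ℝ :=
  (n.choose k : ℝ) * Real.exp (2 * ((k : ℝ) - n / 2) ^ 2 / (n + 1))

lemma bprof_nonneg (n k : ℕ) : 0 ≤ bprof n k := by unfold bprof; positivity

lemma bprof_symm {n k : ℕ} (h : k ≤ n) : bprof n (n - k) = bprof n k := by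
  unfold bprof
  rw [Nat.choose_symm h, Nat.cast_sub h]
  congr 2
  ring

lemma bprof_succ {n k : ℕ} (h : k < n) : bprof n (k + 1) * (k + 1) =
    bprof n k * (n - k) * Real.exp (2 * ((2 * k + 1 - n) / (n + 1))) := by
  unfold bprof
  have hc : ((n.choose (k + 1) : ℕ) : ℝ) * (k + 1) = (n.choose k : ℝ) * (n - k) := by
    have := Nat.choose_succ_right_eq n k
    rw [← Nat.cast_sub h.le]
    exact_mod_cast this
  have he : Real.exp (2 * (((k + 1 : ℕ) : ℝ) - n / 2) ^ 2 / (n + 1)) =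
      Real.exp (2 * ((k : ℝ) - n / 2) ^ 2 / (n + 1)) *
        Real.exp (2 * ((2 * k + 1 - n) / (n + 1))) := by
    rw [← Real.exp_add]
    congr 1
    push_cast
    have : (n : ℝ) + 1 ≠ 0 := by positivity
    field_simp
    ring
  rw [he]
  linear_combination Real.exp (2 * ((k : ℝ) - n / 2) ^ 2 / (n + 1)) *
        Real.exp (2 * ((2 * k + 1 - n) / (n + 1))) * hc

lemma bprof_step_le {n k : ℕ} (h : k < n) (h2 : n ≤ 2 * k + 1) :
    bprof n (k + 1) ≤ bprof n k := by
  have hs := bprof_succ h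
  have hn : (0 : ℝ) < (n : ℝ) + 1 := by positivity
  have hk : (k : ℝ) < n := by exact_mod_cast h
  have hk2 : (n : ℝ) ≤ 2 * k + 1 := by exact_mod_cast h2
  set v : ℝ := (2 * k + 1 - n) / (n + 1) with hv
  have hvn : v * (n + 1) = 2 * k + 1 - n := by rw [hv]; field_simp
  have v0 : 0 ≤ v := by rw [hv]; apply div_nonneg <;> linarith
  have v1 : v < 1 := by rw [hv, div_lt_one hn]; linarith
  have hl := log_ratio_lower v0 v1
  have hprod : Real.exp (-2 * v) * Real.exp (2 * v) = 1 := by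
    rw [← Real.exp_add]; simp
  have hl2 : (1 - v) * Real.exp (2 * v) ≤ 1 + v := by
    have := mul_le_mul_of_nonneg_right hl (Real.exp_pos (2 * v)).le
    rwa [mul_assoc, hprod, mul_one] at this
  have hl3 : (n - k) * Real.exp (2 * v) ≤ k + 1 := by
    have e1 : (n : ℝ) - k = (n + 1) / 2 * (1 - v) := by linarith
    have e2 : (k : ℝ) + 1 = (n + 1) / 2 * (1 + v) := by linarith
    rw [e1, e2, mul_assoc]
    exact mul_le_mul_of_nonneg_left hl2 (by positivity)
  have hk1 : (0 : ℝ) < k + 1 := by positivity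
  refine le_of_mul_le_mul_right ?_ hk1
  rw [hs, mul_assoc]
  exact mul_le_mul_of_nonneg_left hl3 (bprof_nonneg n k)

lemma bprof_step_ge {n k : ℕ} (h : k < n) (h2 : n ≤ 2 * k + 1) {W : ℝ}
    (hW : (2 * k + 1 - n : ℝ) / (n + 1) ≤ W) (hW2 : W ≤ 1 / 2) :
    bprof n k * Real.exp (-2 * W ^ 3) ≤ bprof n (k + 1) := by
  have hs := bprof_succ h
  have hn : (0 : ℝ) < (n : ℝ) + 1 := by positivity
  have hk : (k : ℝ) < n := by exact_mod_cast h
  have hk2 : (n : ℝ) ≤ 2 * k + 1 := by exact_mod_cast h2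
  set v : ℝ := (2 * k + 1 - n) / (n + 1) with hv
  have hvn : v * (n + 1) = 2 * k + 1 - n := by rw [hv]; field_simp
  have v0 : 0 ≤ v := by rw [hv]; apply div_nonneg <;> linarith
  have hl := log_ratio_upper v0 (hW.trans hW2)
  have hexp : Real.exp (-2 * W ^ 3) ≤ Real.exp (-2 * v - 2 * v ^ 3) * Real.exp (2 * v) := by
    rw [← Real.exp_add]
    apply Real.exp_le_exp.2
    have : v ^ 3 ≤ W ^ 3 := pow_le_pow_left₀ v0 hW 3
    linarith
  have hl2 : (1 + v) * Real.exp (-2 * W ^ 3) ≤ (1 - v) * Real.exp (2 * v) := by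
    calc (1 + v) * Real.exp (-2 * W ^ 3) ≤
          (1 + v) * (Real.exp (-2 * v - 2 * v ^ 3) * Real.exp (2 * v)) :=
            mul_le_mul_of_nonneg_left hexp (by linarith)
      _ = ((1 + v) * Real.exp (-2 * v - 2 * v ^ 3)) * Real.exp (2 * v) := by ring
      _ ≤ _ := mul_le_mul_of_nonneg_right hl (Real.exp_pos _).le
  have hl3 : (k + 1) * Real.exp (-2 * W ^ 3) ≤ (n - k) * Real.exp (2 * v) := by
    have e1 : (n : ℝ) - k = (n + 1) / 2 * (1 - v) := by linarith
    have e2 : (k : ℝ) + 1 = (n + 1) / 2 * (1 + v) := by linarith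
    rw [e1, e2, mul_assoc, mul_assoc]
    exact mul_le_mul_of_nonneg_left hl2 (by positivity)
  have hk1 : (0 : ℝ) < k + 1 := by positivity
  refine le_of_mul_le_mul_right ?_ hk1
  rw [hs, mul_assoc, mul_assoc]
  have := mul_le_mul_of_nonneg_left hl3 (bprof_nonneg n k)
  linarith

lemma bprof_le_mid {n k : ℕ} (h : k ≤ n) : bprof n k ≤ bprof n (n / 2) := by
  have main : ∀ k, n / 2 ≤ k → k ≤ n → bprof n k ≤ bprof n (n / 2) := by
    intro k hk
    induction k, hk using Nat.le_induction with
    | base => intro _; exact le_rfl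
    | succ k hk ih =>
      intro hkn
      exact (bprof_step_le (by omega) (by omega)).trans (ih (by omega))
  rcases le_total (n / 2) k with hk | hk
  · exact main k hk h
  · rw [← bprof_symm h]
    exact main (n - k) (by omega) (by omega)

lemma bprof_ge_mid {n k : ℕ} (h : k ≤ n) {d : ℝ} (hd : |(k : ℝ) - n / 2| = d)
    (hW2 : (2 * d + 1) / (n + 1) ≤ 1 / 2) :
    bprof n (n / 2) * Real.exp (-(2 * d + 1) ^ 4 / (n + 1) ^ 3) ≤ bprof n k := by
  have hn : (0 : ℝ) < (n : ℝ) + 1 := by positivity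
  have hmid : (n : ℝ) ≤ 2 * ((n / 2 : ℕ) : ℝ) + 1 := by
    have : n ≤ 2 * (n / 2) + 1 := by omega
    exact_mod_cast this
  have main : ∀ k : ℕ, n / 2 ≤ k → k ≤ n → ∀ W : ℝ, (2 * k - n : ℝ) / (n + 1) ≤ W → W ≤ 1 / 2 →
      bprof n (n / 2) * Real.exp (-2 * ((k : ℝ) - (n / 2 : ℕ)) * W ^ 3) ≤ bprof n k := by
    intro k hk
    induction k, hk using Nat.le_induction with
    | base => intro _ W _ _; simp
    | succ k hk ih =>
      intro hkn W h1 h2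
      have h1' : (2 * k + 1 - n : ℝ) / (n + 1) ≤ W := by
        refine le_trans ?_ h1
        apply div_le_div_of_nonneg_right _ hn.le
        push_cast; linarith
      have h1'' : (2 * k - n : ℝ) / (n + 1) ≤ W := by
        refine le_trans ?_ h1
        apply div_le_div_of_nonneg_right _ hn.le
        push_cast; linarith
      have a := ih (by omega) W h1'' h2
      have b := bprof_step_ge (show k < n by omega) (by omega) h1' h2
      refine le_trans ?_ b
      refine le_trans (le_of_eq ?_) (mul_le_mul_of_nonneg_right a (Real.exp_pos _).le)
      rw [mul_assoc (bprof n (n / 2)) (Real.exp _) (Real.exp _), ← Real.exp_add]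
      congr 2
      push_cast
      ring
  have main2 : ∀ k : ℕ, n / 2 ≤ k → k ≤ n → |(k : ℝ) - n / 2| = d →
      bprof n (n / 2) * Real.exp (-(2 * d + 1) ^ 4 / (n + 1) ^ 3) ≤ bprof n k := by
    intro k hk hkn hd
    have d0 : 0 ≤ d := hd ▸ abs_nonneg _
    have hd' : (k : ℝ) - n / 2 ≤ d := hd ▸ le_abs_self _
    have := main k hk hkn ((2 * d + 1) / (n + 1))
      (by apply div_le_div_of_nonneg_right _ hn.le; linarith) hW2
    refine le_trans ?_ this
    apply mul_le_mul_of_nonneg_left _ (bprof_nonneg _ _)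
    apply Real.exp_le_exp.2
    have e : -(2 * d + 1) ^ 4 / ((n : ℝ) + 1) ^ 3 = -((2 * d + 1) * ((2 * d + 1) / (n + 1)) ^ 3) := by
      field_simp
    rw [e]
    have : 2 * ((k : ℝ) - (n / 2 : ℕ)) * ((2 * d + 1) / (n + 1)) ^ 3 ≤
        (2 * d + 1) * ((2 * d + 1) / (n + 1)) ^ 3 := by
      apply mul_le_mul_of_nonneg_right _ (by positivity)
      linarith
    linarith
  rcases le_total (n / 2) k with hk | hk
  · exact main2 k hk h hd
  · rw [← bprof_symm h]
    refine main2 (n - k) (by omega) (by omega) ?_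
    rw [← hd, Nat.cast_sub h, ← abs_neg]
    congr 1
    ring

/-- Ratio of a binomial coefficient to the central one. -/
noncomputable def bratio (n k : ℕ) : ℝ := (n.choose k : ℝ) / (n.choose (n / 2) : ℝ)

lemma mid_pos (n : ℕ) : (0 : ℝ) < (n.choose (n / 2) : ℝ) := by
  exact_mod_cast Nat.choose_pos (Nat.div_le_self n 2)

lemma bratio_nonneg (n k : ℕ) : 0 ≤ bratio n k := by unfold bratio; positivity

lemma bratio_le_one (n k : ℕ) : bratio n k ≤ 1 := by
  unfold bratio
  rw [div_le_one (mid_pos n)]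
  exact_mod_cast Nat.choose_le_middle k n

lemma bratio_eq (n k : ℕ) : bratio n k = bprof n k / bprof n (n / 2) *
    Real.exp (2 * (((n / 2 : ℕ) : ℝ) - n / 2) ^ 2 / (n + 1) -
      2 * ((k : ℝ) - n / 2) ^ 2 / (n + 1)) := by
  unfold bratio bprof
  rw [Real.exp_sub]
  have := (mid_pos n).ne'
  field_simp

lemma mid_sq (n : ℕ) : (((n / 2 : ℕ) : ℝ) - n / 2) ^ 2 ≤ 1 / 4 := by
  have h1 : (n : ℝ) ≤ 2 * ((n / 2 : ℕ) : ℝ) + 1 := by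
    have : n ≤ 2 * (n / 2) + 1 := by omega
    exact_mod_cast this
  have h2 : 2 * ((n / 2 : ℕ) : ℝ) ≤ n := by
    have : 2 * (n / 2) ≤ n := by omega
    exact_mod_cast this
  nlinarith

lemma bratio_le (n k : ℕ) : bratio n k ≤
    Real.exp (1 / 2 * (1 / (n + 1)) - 2 * (((k : ℝ) - n / 2) ^ 2 / (n + 1))) := by
  by_cases h : k ≤ n
  · rw [bratio_eq]
    have hpos : 0 < bprof n (n / 2) := mul_pos (mid_pos n) (Real.exp_pos _)
    have h1 : bprof n k / bprof n (n / 2) ≤ 1 := (div_le_one hpos).2 (bprof_le_mid h)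
    refine (mul_le_of_le_one_left (Real.exp_pos _).le h1).trans ?_
    apply Real.exp_le_exp.2
    have hn : (0 : ℝ) < (n : ℝ) + 1 := by positivity
    have := div_le_div_of_nonneg_right (mid_sq n) hn.le
    have e1 : 2 * (((n / 2 : ℕ) : ℝ) - n / 2) ^ 2 / ((n : ℝ) + 1) =
      2 * ((((n / 2 : ℕ) : ℝ) - n / 2) ^ 2 / ((n : ℝ) + 1)) := by ring
    have e2 : 2 * ((k : ℝ) - n / 2) ^ 2 / ((n : ℝ) + 1) =
      2 * (((k : ℝ) - n / 2) ^ 2 / ((n : ℝ) + 1)) := by ring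
    have e3 : 1 / 2 * (1 / ((n : ℝ) + 1)) = 2 * (1 / 4 / ((n : ℝ) + 1)) := by ring
    rw [e1, e2, e3]
    linarith
  · unfold bratio
    rw [Nat.choose_eq_zero_of_lt (by omega)]
    simp
    positivity

lemma bratio_ge {n k : ℕ} (h : k ≤ n) {s r : ℝ} (hs : s = ((k : ℝ) - n / 2) ^ 2 / (n + 1))
    (hr : r = 1 / (n + 1)) (hsr : (8 * s + 2 * r) * r ≤ 1 / 4) :
    Real.exp (-((8 * s + 2 * r) ^ 2 * r) - 2 * s) ≤ bratio n k := by
  have hn : (0 : ℝ) < (n : ℝ) + 1 := by positivity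
  set d := |(k : ℝ) - n / 2| with hd
  have d0 : 0 ≤ d := abs_nonneg _
  have hsd : s = d ^ 2 * r := by rw [hs, hr, hd, sq_abs]; ring
  have r0 : 0 < r := by rw [hr]; positivity
  have hsq : (2 * d + 1) ^ 2 ≤ 8 * d ^ 2 + 2 := by nlinarith [sq_nonneg (2 * d - 1)]
  have h8 : 8 * s + 2 * r = (8 * d ^ 2 + 2) * r := by rw [hsd]; ring
  have hW : (2 * d + 1) / ((n : ℝ) + 1) ≤ 1 / 2 := by
    have : (2 * d + 1) / ((n : ℝ) + 1) = (2 * d + 1) * r := by rw [hr]; ring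
    rw [this]
    rw [h8] at hsr
    apply le_of_sq_le_sq _ (by norm_num)
    have : (2 * d + 1) ^ 2 * (r * r) ≤ (8 * d ^ 2 + 2) * (r * r) :=
      mul_le_mul_of_nonneg_right hsq (by positivity)
    nlinarith
  have hge := bprof_ge_mid h hd.symm hW
  have hpos : 0 < bprof n (n / 2) := mul_pos (mid_pos n) (Real.exp_pos _)
  have h1 : Real.exp (-(2 * d + 1) ^ 4 / ((n : ℝ) + 1) ^ 3) ≤ bprof n k / bprof n (n / 2) := by
    rw [le_div_iff₀ hpos, mul_comm]; exact hge
  rw [bratio_eq]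
  have h2 : Real.exp (-((8 * s + 2 * r) ^ 2 * r) - 2 * s) ≤
      Real.exp (-(2 * d + 1) ^ 4 / ((n : ℝ) + 1) ^ 3) *
    Real.exp (2 * (((n / 2 : ℕ) : ℝ) - n / 2) ^ 2 / (n + 1) -
      2 * ((k : ℝ) - n / 2) ^ 2 / (n + 1)) := by
    rw [← Real.exp_add]
    apply Real.exp_le_exp.2
    have e1 : -(2 * d + 1) ^ 4 / ((n : ℝ) + 1) ^ 3 = -(((2 * d + 1) ^ 2) ^ 2 * r ^ 3) := by
      rw [hr]; field_simp
    have e2 : 2 * ((k : ℝ) - n / 2) ^ 2 / ((n : ℝ) + 1) = 2 * s := by rw [hs]; ring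
    have e3 : 0 ≤ 2 * (((n / 2 : ℕ) : ℝ) - n / 2) ^ 2 / ((n : ℝ) + 1) := by positivity
    have e4 : (8 * s + 2 * r) ^ 2 * r = (8 * d ^ 2 + 2) ^ 2 * r ^ 3 := by rw [h8]; ring
    have e5 : ((2 * d + 1) ^ 2) ^ 2 * r ^ 3 ≤ (8 * d ^ 2 + 2) ^ 2 * r ^ 3 :=
      mul_le_mul_of_nonneg_right (pow_le_pow_left₀ (by positivity) hsq 2) (by positivity)
    rw [e1, e2, e4]
    linarith
  exact h2.trans (mul_le_mul_of_nonneg_right h1 (Real.exp_pos _).le)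

lemma tendsto_inv_succ : Tendsto (fun n : ℕ => 1 / ((n : ℝ) + 1)) atTop (nhds 0) :=
  tendsto_one_div_add_atTop_nhds_zero_nat

lemma tendsto_bratio {k : ℕ → ℕ} {u : ℝ} (hk : ∀ᶠ n in atTop, k n ≤ n)
    (hu : Tendsto (fun n : ℕ => ((k n : ℝ) - n / 2) / Real.sqrt (n + 1)) atTop (nhds u)) :
    Tendsto (fun n => bratio n (k n)) atTop (nhds (Real.exp (-2 * u ^ 2))) := by
  have hs : Tendsto (fun n : ℕ => ((k n : ℝ) - n / 2) ^ 2 / ((n : ℝ) + 1)) atTop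
      (nhds (u ^ 2)) := by
    refine (hu.pow 2).congr fun n => ?_
    rw [div_pow, Real.sq_sqrt (by positivity)]
  have hr := tendsto_inv_succ
  have hlow : Tendsto (fun n : ℕ => Real.exp
      (-((8 * (((k n : ℝ) - n / 2) ^ 2 / ((n : ℝ) + 1)) + 2 * (1 / ((n : ℝ) + 1))) ^ 2 *
        (1 / ((n : ℝ) + 1))) - 2 * (((k n : ℝ) - n / 2) ^ 2 / ((n : ℝ) + 1)))) atTop
      (nhds (Real.exp (-2 * u ^ 2))) := by
    have := (((((hs.const_mul 8).add (hr.const_mul 2)).pow 2).mul hr).neg.sub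
      (hs.const_mul 2)).rexp
    have e : -2 * u ^ 2 = -((8 * u ^ 2 + 2 * 0) ^ 2 * 0) - 2 * u ^ 2 := by ring
    rw [e]
    exact this
  have hup : Tendsto (fun n : ℕ => Real.exp (1 / 2 * (1 / ((n : ℝ) + 1)) -
      2 * (((k n : ℝ) - n / 2) ^ 2 / ((n : ℝ) + 1)))) atTop (nhds (Real.exp (-2 * u ^ 2))) := by
    have := ((hr.const_mul (1 / 2)).sub (hs.const_mul 2)).rexp
    have e : -2 * u ^ 2 = 1 / 2 * 0 - 2 * u ^ 2 := by ring
    rw [e]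
    exact this
  have hcond : ∀ᶠ n : ℕ in atTop, (8 * (((k n : ℝ) - n / 2) ^ 2 / ((n : ℝ) + 1)) +
      2 * (1 / ((n : ℝ) + 1))) * (1 / ((n : ℝ) + 1)) ≤ 1 / 4 := by
    have := ((hs.const_mul 8).add (hr.const_mul 2)).mul hr
    rw [mul_zero] at this
    exact this.eventually_le_const (by norm_num)
  refine tendsto_of_tendsto_of_tendsto_of_le_of_le' hlow hup ?_ ?_
  · filter_upwards [hk, hcond] with n h1 h2
    exact bratio_ge h1 rfl rfl h2
  · exact Eventually.of_forall fun n => bratio_le n (k n)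

/-! ### Passage to the limit -/

/-- The standard deviation. -/
noncomputable def sig (n : ℕ) : ℝ := Real.sqrt (((n : ℝ) ^ 2 - 1) / (4 * (2 * (n : ℝ) - 1)))

/-- The rounding of `μ_n + y σ_n`. -/
noncomputable def kk (y : ℝ) (n : ℕ) : ℕ := ⌈((n : ℝ) + 1) / 2 + y * sig n⌉₊

lemma sig_sq {n : ℕ} (hn : 2 ≤ n) : sig n ^ 2 / (n + 1) = ((n : ℝ) - 1) / (4 * (2 * n - 1)) := by
  have h : (2 : ℝ) ≤ n := by exact_mod_cast hn
  unfold sig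
  rw [Real.sq_sqrt (div_nonneg (by nlinarith) (by linarith))]
  have : (2 * (n : ℝ) - 1) ≠ 0 := by linarith
  field_simp
  ring

lemma sig_sq_ge {n : ℕ} (hn : 2 ≤ n) : 1 / 12 ≤ sig n ^ 2 / (n + 1) := by
  have h : (2 : ℝ) ≤ n := by exact_mod_cast hn
  rw [sig_sq hn, div_le_div_iff₀ (by norm_num) (by linarith)]
  linarith

lemma sig_nonneg (n : ℕ) : 0 ≤ sig n := Real.sqrt_nonneg _

lemma sig_pos {n : ℕ} (hn : 2 ≤ n) : 0 < sig n := by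
  rcases (sig_nonneg n).lt_or_eq with h | h
  · exact h
  · have := sig_sq_ge hn
    rw [← h] at this
    norm_num at this

lemma tendsto_sig_div : Tendsto (fun n : ℕ => sig n / Real.sqrt (n + 1)) atTop
    (nhds (Real.sqrt (1 / 8))) := by
  have h1 : Tendsto (fun n : ℕ => (1 / 8 : ℝ) - (1 / 8) * (1 / (2 * (n : ℝ) - 1))) atTop
      (nhds (1 / 8 - (1 / 8) * 0)) := by
    refine Tendsto.const_sub _ (Tendsto.const_mul _ ?_)
    have : Tendsto (fun n : ℕ => 2 * (n : ℝ) - 1) atTop atTop :=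
      tendsto_atTop_add_const_right _ _
        (tendsto_natCast_atTop_atTop.const_mul_atTop (by norm_num))
    simp only [one_div]
    exact this.inv_tendsto_atTop
  rw [mul_zero, sub_zero] at h1
  have h2 := h1.sqrt
  refine h2.congr' ?_
  filter_upwards [eventually_ge_atTop 2] with n hn
  have h : (2 : ℝ) ≤ n := by exact_mod_cast hn
  have e : (1 / 8 : ℝ) - (1 / 8) * (1 / (2 * (n : ℝ) - 1)) = sig n ^ 2 / (n + 1) := by
    rw [sig_sq hn]
    have : (2 * (n : ℝ) - 1) ≠ 0 := by linarith
    field_simp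
    ring
  rw [e, Real.sqrt_div (sq_nonneg _), Real.sqrt_sq (sig_nonneg n)]

lemma tendsto_sqrt_succ : Tendsto (fun n : ℕ => Real.sqrt ((n : ℝ) + 1)) atTop atTop :=
  Real.tendsto_sqrt_atTop.comp (tendsto_atTop_add_const_right _ _ tendsto_natCast_atTop_atTop)

lemma tendsto_inv_sqrt_succ : Tendsto (fun n : ℕ => 1 / Real.sqrt ((n : ℝ) + 1)) atTop (nhds 0) := by
  simp only [one_div]
  exact tendsto_sqrt_succ.inv_tendsto_atTop

lemma tendsto_sig : Tendsto sig atTop atTop := by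
  have := tendsto_sig_div.pos_mul_atTop (Real.sqrt_pos.2 (by norm_num)) tendsto_sqrt_succ
  refine this.congr fun n => ?_
  have : Real.sqrt ((n : ℝ) + 1) ≠ 0 := (Real.sqrt_pos.2 (by positivity)).ne'
  field_simp

lemma tendsto_mean_div (y : ℝ) : Tendsto
    (fun n : ℕ => (((n : ℝ) + 1) / 2 + y * sig n) / ((n : ℝ) + 1)) atTop (nhds (1 / 2)) := by
  have h := (tendsto_sig_div.mul tendsto_inv_sqrt_succ).const_mul y |>.const_add (1 / 2)
  rw [mul_zero, mul_zero, add_zero] at h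
  refine h.congr fun n => ?_
  have h0 : (0 : ℝ) < (n : ℝ) + 1 := by positivity
  have : Real.sqrt ((n : ℝ) + 1) ≠ 0 := (Real.sqrt_pos.2 h0).ne'
  have e : Real.sqrt ((n : ℝ) + 1) ^ 2 = (n : ℝ) + 1 := Real.sq_sqrt h0.le
  have e2 : sig n / Real.sqrt ((n : ℝ) + 1) * (1 / Real.sqrt ((n : ℝ) + 1)) =
      sig n / ((n : ℝ) + 1) := by
    rw [div_mul_div_comm, mul_one, ← sq, e]
  rw [e2]
  field_simp

lemma kk_bounds {y : ℝ} {n : ℕ} (h : 0 < kk y n) :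
    ((n : ℝ) + 1) / 2 + y * sig n ≤ kk y n ∧ (kk y n : ℝ) ≤ ((n : ℝ) + 1) / 2 + y * sig n + 1 := by
  have hp : 0 < ((n : ℝ) + 1) / 2 + y * sig n := Nat.ceil_pos.1 h
  exact ⟨Nat.le_ceil _, (Nat.ceil_lt_add_one hp.le).le⟩

lemma kk_eventually (y : ℝ) : ∀ᶠ n in atTop, 0 < kk y n ∧ kk y n ≤ n := by
  have h := tendsto_mean_div y
  filter_upwards [h.eventually_const_lt (show (1 / 4 : ℝ) < 1 / 2 by norm_num),
    h.eventually_lt_const (show (1 / 2 : ℝ) < 3 / 4 by norm_num), eventually_ge_atTop 7]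
    with n h1 h2 h3
  have hn : (0 : ℝ) < (n : ℝ) + 1 := by positivity
  rw [lt_div_iff₀ hn] at h1
  rw [div_lt_iff₀ hn] at h2
  have h7 : (7 : ℝ) ≤ n := by exact_mod_cast h3
  constructor
  · exact Nat.ceil_pos.2 (by linarith)
  · exact Nat.ceil_le.2 (by linarith)

lemma tendsto_kk (y : ℝ) : Tendsto (fun n : ℕ => ((kk y n : ℝ) - n / 2) / Real.sqrt (n + 1)) atTop
    (nhds (y * Real.sqrt (1 / 8))) := by
  have hlow := (tendsto_sig_div.const_mul y).add (tendsto_inv_sqrt_succ.const_mul (1 / 2))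
  have hup := (tendsto_sig_div.const_mul y).add (tendsto_inv_sqrt_succ.const_mul (3 / 2))
  rw [mul_zero, add_zero] at hlow hup
  refine tendsto_of_tendsto_of_tendsto_of_le_of_le' hlow hup ?_ ?_
  · filter_upwards [kk_eventually y] with n hn
    have hb := kk_bounds hn.1
    have e : y * (sig n / Real.sqrt ((n : ℝ) + 1)) + 1 / 2 * (1 / Real.sqrt ((n : ℝ) + 1)) =
      (y * sig n + 1 / 2) / Real.sqrt ((n : ℝ) + 1) := by ring
    rw [e]
    exact div_le_div_of_nonneg_right (by linarith) (Real.sqrt_nonneg _)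
  · filter_upwards [kk_eventually y] with n hn
    have hb := kk_bounds hn.1
    have e : y * (sig n / Real.sqrt ((n : ℝ) + 1)) + 3 / 2 * (1 / Real.sqrt ((n : ℝ) + 1)) =
      (y * sig n + 3 / 2) / Real.sqrt ((n : ℝ) + 1) := by ring
    rw [e]
    exact div_le_div_of_nonneg_right (by linarith) (Real.sqrt_nonneg _)

/-- Normalized Narayana weights. -/
noncomputable def wt (n k : ℕ) : ℝ := bratio n k * bratio n (n + 1 - k)

lemma wt_nonneg (n k : ℕ) : 0 ≤ wt n k := mul_nonneg (bratio_nonneg _ _) (bratio_nonneg _ _)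

lemma wt_zero (n : ℕ) : wt n 0 = 0 := by simp [wt, bratio]

lemma wt_big {n k : ℕ} (h : n < k) : wt n k = 0 := by
  simp [wt, bratio, Nat.choose_eq_zero_of_lt h]

lemma tendsto_wt (y : ℝ) : Tendsto (fun n => wt n (kk y n)) atTop
    (nhds (Real.exp (-(1 / 2) * y ^ 2))) := by
  have h1 := tendsto_bratio ((kk_eventually y).mono fun n h => h.2) (tendsto_kk y)
  have h2 : Tendsto (fun n => bratio n (n + 1 - kk y n)) atTop
      (nhds (Real.exp (-2 * (-(y * Real.sqrt (1 / 8))) ^ 2))) := by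
    apply tendsto_bratio (k := fun n => n + 1 - kk y n)
    · filter_upwards [kk_eventually y] with n hn
      omega
    · have := (tendsto_kk y).neg.add tendsto_inv_sqrt_succ
      rw [add_zero] at this
      refine this.congr' ?_
      filter_upwards [kk_eventually y] with n hn
      rw [Nat.cast_sub (by omega)]
      push_cast
      ring
  have := h1.mul h2
  rw [← Real.exp_add] at this
  have e : -(1 / 2) * y ^ 2 = -2 * (y * Real.sqrt (1 / 8)) ^ 2 +
      -2 * (-(y * Real.sqrt (1 / 8))) ^ 2 := by
    have : Real.sqrt (1 / 8) ^ 2 = 1 / 8 := Real.sq_sqrt (by norm_num)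
    linear_combination (4 * y ^ 2) * this
  rw [e]
  exact this

lemma wt_bound {n : ℕ} (hn : 2 ≤ n) (y : ℝ) :
    wt n (kk y n) ≤ Real.exp 5 * Real.exp (-(1 / 12) * y ^ 2) := by
  rcases Nat.eq_zero_or_pos (kk y n) with h | h
  · rw [h, wt_zero]; positivity
  · have hb := kk_bounds h
    have h1 := bratio_le n (kk y n)
    have h2 := bratio_le_one n (n + 1 - kk y n)
    have h3 : wt n (kk y n) ≤ bratio n (kk y n) := mul_le_of_le_one_right (bratio_nonneg _ _) h2
    refine h3.trans (h1.trans ?_)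
    rw [← Real.exp_add]
    apply Real.exp_le_exp.2
    have hn0 : (0 : ℝ) < (n : ℝ) + 1 := by positivity
    have hr : 1 / ((n : ℝ) + 1) ≤ 1 := by
      rw [div_le_one hn0]; linarith [(Nat.cast_nonneg n : (0 : ℝ) ≤ n)]
    have hr0 : 0 ≤ 1 / ((n : ℝ) + 1) := by positivity
    set e := (kk y n : ℝ) - n / 2 - y * sig n with he
    have e1 : 0 ≤ e := by linarith
    have e2 : e ≤ 3 / 2 := by linarith
    have hsq : y ^ 2 * sig n ^ 2 / 2 - 9 / 4 ≤ ((kk y n : ℝ) - n / 2) ^ 2 := by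
      have : (kk y n : ℝ) - n / 2 = y * sig n + e := by rw [he]; ring
      rw [this]
      nlinarith [sq_nonneg (y * sig n + 2 * e)]
    have hd := div_le_div_of_nonneg_right hsq hn0.le
    have e3 : (y ^ 2 * sig n ^ 2 / 2 - 9 / 4) / ((n : ℝ) + 1) =
      y ^ 2 * (sig n ^ 2 / ((n : ℝ) + 1)) / 2 - 9 / 4 * (1 / ((n : ℝ) + 1)) := by ring
    rw [e3] at hd
    have h12 := mul_le_mul_of_nonneg_left (sig_sq_ge hn) (sq_nonneg y)
    linarith

lemma integral_kk {n : ℕ} (hn : 2 ≤ n) (g : ℕ → ℝ) (g0 : g 0 = 0) (gn : ∀ k, n < k → g k = 0) :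
    ∫ y : ℝ, g (kk y n) = (∑ k ∈ Finset.range (n + 1), g k) / sig n := by
  have hs := sig_pos hn
  set μ : ℝ := ((n : ℝ) + 1) / 2 with hμ
  have hpt : ∀ y : ℝ, g (kk y n) = ∑ k ∈ Finset.range n,
      (Set.Ioc (((k : ℝ) - μ) / sig n) (((k : ℝ) + 1 - μ) / sig n)).indicator
        (fun _ => g (k + 1)) y := by
    intro y
    have hmem : ∀ k : ℕ, y ∈ Set.Ioc (((k : ℝ) - μ) / sig n) (((k : ℝ) + 1 - μ) / sig n) ↔
        kk y n = k + 1 := by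
      intro k
      rw [Set.mem_Ioc, div_lt_iff₀ hs, le_div_iff₀ hs, kk, Nat.ceil_eq_iff (by omega)]
      push_cast
      rw [← hμ]
      constructor <;> rintro ⟨h1, h2⟩ <;> constructor <;> linarith
    rcases Nat.eq_zero_or_pos (kk y n) with h | h
    · rw [h, g0]
      symm
      apply Finset.sum_eq_zero
      intro k _
      rw [Set.indicator_of_notMem]
      rw [hmem]; omega
    · obtain ⟨j, hj⟩ : ∃ j, kk y n = j + 1 := ⟨kk y n - 1, by omega⟩
      rw [hj]
      by_cases hjn : j < n
      · rw [Finset.sum_eq_single_of_mem j (Finset.mem_range.2 hjn)]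
        · rw [Set.indicator_of_mem]
          rw [hmem, hj]
        · intro k _ hk
          rw [Set.indicator_of_notMem]
          rw [hmem, hj]; omega
      · rw [gn _ (by omega)]
        symm
        apply Finset.sum_eq_zero
        intro k hk
        rw [Finset.mem_range] at hk
        rw [Set.indicator_of_notMem]
        rw [hmem]; omega
  simp only [hpt]
  rw [MeasureTheory.integral_finsetSum]
  · rw [Finset.sum_range_succ', g0, add_zero, Finset.sum_div]
    refine Finset.sum_congr rfl fun k _ => ?_
    rw [MeasureTheory.integral_indicator_const _ measurableSet_Ioc, MeasureTheory.measureReal_def,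
      Real.volume_Ioc, ENNReal.toReal_ofReal, smul_eq_mul]
    · field_simp
      ring
    · rw [← sub_div]; apply div_nonneg _ hs.le; linarith
  · intro k _
    rw [MeasureTheory.integrable_indicator_iff measurableSet_Ioc]
    apply MeasureTheory.integrableOn_const
    · rw [Real.volume_Ioc]; exact ENNReal.ofReal_ne_top
    · simp

lemma measurable_kk (g : ℕ → ℝ) (n : ℕ) : Measurable fun y : ℝ => g (kk y n) := by
  have h1 : Measurable g := measurable_from_top
  have h2 : Measurable fun y : ℝ => kk y n := by
    unfold kk
    exact Nat.measurable_ceil.comp (by fun_prop)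
  exact h1.comp h2

open Classical in
lemma tendsto_sum_wt (p : ℕ → ℕ → Prop) (S : Set ℝ)
    (hp : ∀ᵐ y : ℝ, (∀ᶠ n in atTop, p n (kk y n) ↔ y ∈ S)) :
    Tendsto (fun n => (∑ k ∈ Finset.range (n + 1), if p n k then wt n k else 0) / sig n) atTop
      (nhds (∫ y : ℝ, S.indicator (fun y => Real.exp (-(1 / 2) * y ^ 2)) y)) := by
  have main : Tendsto (fun n => ∫ y : ℝ, (fun k => if p n k then wt n k else 0) (kk y n)) atTop
      (nhds (∫ y : ℝ, S.indicator (fun y => Real.exp (-(1 / 2) * y ^ 2)) y)) := by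
    refine MeasureTheory.tendsto_integral_filter_of_dominated_convergence
      (fun y => Real.exp 5 * Real.exp (-(1 / 12) * y ^ 2)) ?_ ?_ ?_ ?_
    · exact Eventually.of_forall fun n =>
        (measurable_kk (fun k => if p n k then wt n k else 0) n).aestronglyMeasurable
    · filter_upwards [eventually_ge_atTop 2] with n hn
      refine Eventually.of_forall fun y => ?_
      have hb := wt_bound hn y
      have h0 := wt_nonneg n (kk y n)
      split_ifs
      · rwa [Real.norm_of_nonneg h0]
      · rw [norm_zero]; positivity
    · exact (integrable_exp_neg_mul_sq (by norm_num)).const_mul _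
    · filter_upwards [hp] with y hy
      by_cases hS : y ∈ S
      · rw [Set.indicator_of_mem hS]
        refine (tendsto_wt y).congr' ?_
        filter_upwards [hy] with n hn
        rw [if_pos (hn.2 hS)]
      · rw [Set.indicator_of_notMem hS]
        refine tendsto_const_nhds.congr' ?_
        filter_upwards [hy] with n hn
        rw [if_neg (fun h => hS (hn.1 h))]
  refine main.congr' ?_
  filter_upwards [eventually_ge_atTop 2] with n hn
  apply integral_kk hn (fun k => if p n k then wt n k else 0)
  · simp [wt_zero]
  · intro k hk
    simp [wt_big hk]

open Classical in
lemma card_pred {n : ℕ} (hn : 1 ≤ n) (p : ℕ → Prop) :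
    (Nat.card {π : NCPart n // p (numBlocks π)} : ℝ) =
      ((n.choose (n / 2) : ℝ) ^ 2 / n) *
        ∑ k ∈ Finset.range (n + 1), if p k then wt n k else 0 := by
  have hle : ∀ π : NCPart n, numBlocks π ≤ n := fun π => by
    have := π.1.card_parts_le_card
    simpa [numBlocks] using this
  have h1 : Nat.card {π : NCPart n // p (numBlocks π)} =
      ∑ k ∈ Finset.range (n + 1), if p k then {π : NCPart n | numBlocks π = k}.ncard else 0 := by
    rw [Nat.card_eq_fintype_card, Fintype.card_subtype]
    rw [Finset.card_eq_sum_card_fiberwise (f := numBlocks) (t := Finset.range (n + 1))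
      (fun π _ => by simpa using Nat.lt_succ_of_le (hle π))]
    refine Finset.sum_congr rfl fun k _ => ?_
    split_ifs with hk
    · rw [Set.ncard_eq_toFinset_card']
      congr 1
      ext π
      simp only [Finset.mem_filter, Finset.mem_univ, true_and, Set.mem_toFinset]
      constructor
      · rintro ⟨-, h⟩; exact h
      · intro h
        have h' : numBlocks π = k := h
        exact ⟨h' ▸ hk, h'⟩
    · rw [Finset.card_eq_zero]
      apply Finset.filter_eq_empty_iff.2
      intro π hπ hk'
      rw [Finset.mem_filter] at hπ
      exact hk (hk' ▸ hπ.2)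
  rw [h1, Finset.mul_sum]
  push_cast
  refine Finset.sum_congr rfl fun k _ => ?_
  split_ifs with hk
  · have h2 := tcount_narayana n hn k
    rw [← card_numBlocks] at h2
    have h3 : (n : ℝ) * ({π : NCPart n | numBlocks π = k}.ncard : ℝ) =
      (n.choose k : ℝ) * (n.choose (n + 1 - k) : ℝ) := by exact_mod_cast h2
    have hn0 : (n : ℝ) ≠ 0 := by positivity
    have hm := (mid_pos n).ne'
    unfold wt bratio
    field_simp
    linarith
  · simp

/-- Central limit theorem for the number of blocks: with
`μ_n = (n+1)/2` and `σ_n² = (n² − 1)/(4(2n − 1))`, for every real `x` the probability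
`(1/C_n)·#{π ∈ NC(n) : #blocks(π) ≤ μ_n + x σ_n}` converges to `Φ(x)`, the standard
Gaussian cumulative distribution function. -/
theorem numBlocks_CLT (x : ℝ) :
    Tendsto
      (fun n : ℕ =>
        (Nat.card {π : NCPart n //
            (numBlocks π : ℝ) ≤ ((n : ℝ) + 1) / 2 +
              x * Real.sqrt (((n : ℝ) ^ 2 - 1) / (4 * (2 * (n : ℝ) - 1)))} : ℝ) /
          (Fintype.card (NCPart n) : ℝ))
      atTop
      (nhds (((gaussianReal 0 1) (Set.Iic x)).toReal)) := by
  classical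
  have hnum := tendsto_sum_wt (fun n k => (k : ℝ) ≤ ((n : ℝ) + 1) / 2 + x * sig n) (Set.Iic x) (by
    have hne : ∀ᵐ y : ℝ, y ≠ x := by simp [MeasureTheory.ae_iff]
    filter_upwards [hne] with y hy
    rcases lt_or_gt_of_ne hy with h | h
    · filter_upwards [kk_eventually y, tendsto_sig.eventually_ge_atTop (1 / (x - y))] with n h1 h2
      have hb := kk_bounds h1.1
      rw [div_le_iff₀ (by linarith)] at h2
      exact ⟨fun _ => h.le, fun _ => by linarith⟩
    · filter_upwards [kk_eventually y, eventually_ge_atTop 2] with n h1 h2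
      have hb := kk_bounds h1.1
      have := mul_pos (sub_pos.2 h) (sig_pos h2)
      constructor
      · intro h3; exfalso; linarith
      · intro h3; exact absurd h3 (not_le.2 h))
  have hden := tendsto_sum_wt (fun n k => True) Set.univ (by simp)
  simp only [Set.indicator_univ] at hden
  rw [integral_gaussian] at hden
  rw [MeasureTheory.integral_indicator measurableSet_Iic] at hnum
  have hpos : Real.sqrt (Real.pi / (1 / 2)) ≠ 0 := (Real.sqrt_pos.2 (by positivity)).ne'
  have hdiv := hnum.div hden hpos
  have hval : ((gaussianReal 0 1) (Set.Iic x)).toReal =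
      (∫ y in Set.Iic x, Real.exp (-(1 / 2) * y ^ 2)) / Real.sqrt (Real.pi / (1 / 2)) := by
    rw [gaussianReal_apply_eq_integral _ one_ne_zero, ENNReal.toReal_ofReal
      (MeasureTheory.integral_nonneg fun y => gaussianPDFReal_nonneg _ _ _), div_eq_inv_mul,
      ← MeasureTheory.integral_const_mul]
    congr 1
    funext y
    rw [gaussianPDFReal]
    congr 2
    · simp; ring_nf
    · simp; ring
  rw [hval]
  refine hdiv.congr' ?_
  filter_upwards [eventually_ge_atTop 2] with n hn
  have e1 := card_pred (n := n) (by omega) (fun k => (k : ℝ) ≤ ((n : ℝ) + 1) / 2 + x * sig n)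
  have e2 := card_pred (n := n) (by omega) (fun _ => True)
  have e3 : Nat.card {π : NCPart n // True} = Fintype.card (NCPart n) := by
    rw [← Nat.card_eq_fintype_card]
    exact Nat.card_congr (Equiv.subtypeUnivEquiv fun _ => trivial)
  rw [← e3, e2]
  unfold sig at e1
  rw [e1]
  have hs := (sig_pos hn).ne'
  have hn0 : (n : ℝ) ≠ 0 := by positivity
  have hm := (mid_pos n).ne'
  have hc : ((n.choose (n / 2) : ℝ) ^ 2 / n) ≠ 0 := by positivity
  rw [mul_div_mul_left _ _ hc]
  simp only [Pi.div_apply]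
  rw [div_div_div_cancel_right₀ hs]
  rfl
end

section
/- Fix integers n ≥ 1 and 1 ≤ l ≤ n. The sum over all non-crossing partitions π of [n] of the number of blocks of π having size exactly l equals the binomial coefficient binom(2n − l − 1, n − 1). Equivalently, the expected number X_n^{(l)} of blocks of size l in a uniformly random NC partition of [n] equals binom(2n − l − 1, n − 1)/C_n = (n/2^{l+1})·Π_{j=0}^{l} (1 + (2 − j)/(2n − j)). -/
def prefS {n : ℕ} (s : Fin n → ℕ) (i : ℕ) : ℕ := ∑ j : Fin n, if j.val < i then s j else 0

def Ballot (n h : ℕ) (s : Fin n → ℕ) : Prop :=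
  (∀ i ≤ n, i ≤ h + prefS s i) ∧ h + prefS s n = n

lemma prefS_cons {n : ℕ} (k : ℕ) (s : Fin n → ℕ) (i : ℕ) :
    prefS (Fin.cons k s : Fin (n+1) → ℕ) (i+1) = k + prefS s i := by
  simp [prefS, Fin.sum_univ_succ]

lemma prefS_zero {n : ℕ} (s : Fin n → ℕ) : prefS s 0 = 0 := by simp [prefS]

lemma prefS_succ {n : ℕ} (s : Fin n → ℕ) (i : Fin n) :
    prefS s (i.val+1) = prefS s i.val + s i := by
  have : s i = ∑ j : Fin n, if j = i then s j else 0 := by simp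
  rw [this]
  unfold prefS
  rw [← Finset.sum_add_distrib]
  refine Finset.sum_congr rfl fun j _ => ?_
  rcases lt_trichotomy j i with h | h | h
  · have := h.ne
    have h' : j.val < i.val := h
    simp [this, h', Nat.lt_succ_of_lt h']
  · simp [h]
  · have := h.ne'
    have h' : i.val < j.val := h
    have h1 : ¬ j.val < i.val + 1 := by omega
    have h2 : ¬ j.val < i.val := by omega
    simp [this, h1, h2]

lemma ballot_cons {n h k : ℕ} (s : Fin n → ℕ) :
    Ballot (n+1) h (Fin.cons k s : Fin (n+1) → ℕ) ↔ 1 ≤ h + k ∧ Ballot n (h + k - 1) s := by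
  unfold Ballot
  constructor
  · rintro ⟨h1, h2⟩
    have h3 := h1 1 (by omega)
    rw [prefS_cons, prefS_zero] at h3
    rw [prefS_cons] at h2
    refine ⟨by omega, fun i hi => ?_, by omega⟩
    have := h1 (i+1) (by omega)
    rw [prefS_cons] at this
    omega
  · rintro ⟨h0, h1, h2⟩
    refine ⟨fun i hi => ?_, by rw [prefS_cons]; omega⟩
    cases i with
    | zero => omega
    | succ i =>
      have := h1 i (by omega)
      rw [prefS_cons]; omega

/-- finset of ballot sequences, built recursively -/
def Bal : (n h : ℕ) → Finset (Fin n → ℕ)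
  | 0, h => if h = 0 then Finset.univ else ∅
  | n+1, h => (Finset.Ico (h-1) (n+1)).biUnion fun h' =>
      (Bal n h').image (fun s => (Fin.cons (h'+1-h) s : Fin (n+1) → ℕ))

lemma mem_Bal : ∀ (n h : ℕ) (s : Fin n → ℕ), s ∈ Bal n h ↔ Ballot n h s
  | 0, h, s => by
    unfold Bal Ballot
    by_cases hh : h = 0
    · simp only [hh, if_true, prefS]
      exact iff_of_true (Finset.mem_univ s) ⟨fun i hi => by omega, by simp⟩
    · simp [hh, prefS]
  | n+1, h, s => by
    rw [← Fin.cons_self_tail s, ballot_cons]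
    simp only [Bal, Finset.mem_biUnion, Finset.mem_Ico, Finset.mem_image]
    constructor
    · rintro ⟨h', hh, t, ht, he⟩
      rw [Fin.cons_inj] at he
      obtain ⟨he1, rfl⟩ := he
      rw [mem_Bal n] at ht
      have : h + s 0 - 1 = h' := by omega
      rw [this]
      exact ⟨by omega, ht⟩
    · rintro ⟨h0, hb⟩
      refine ⟨h + s 0 - 1, ?_, Fin.tail s, (mem_Bal n _ _).2 hb, ?_⟩
      · have := hb.2
        omega
      · congr 1; omega

lemma sum_Bal (n h : ℕ) (f : (Fin (n+1) → ℕ) → ℕ) :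
    ∑ s ∈ Bal (n+1) h, f s = ∑ h' ∈ Finset.Ico (h-1) (n+1),
      ∑ s ∈ Bal n h', f (Fin.cons (h'+1-h) s : Fin (n+1) → ℕ) := by
  rw [Bal, Finset.sum_biUnion]
  · refine Finset.sum_congr rfl fun h' _ => ?_
    rw [Finset.sum_image]
    intro a _ b _ hab
    exact (Fin.cons_inj.1 hab).2
  · intro a ha b hb hab
    simp only [Function.onFun]
    rw [Finset.disjoint_left]
    intro s hs hs'
    simp only [Finset.mem_image] at hs hs'
    obtain ⟨t, _, rfl⟩ := hs
    obtain ⟨t', _, he⟩ := hs'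
    have := (Fin.cons_inj.1 he).1
    simp only [Finset.coe_Ico, Set.mem_Ico] at ha hb
    omega

def cntL {n : ℕ} (l : ℕ) (s : Fin n → ℕ) : ℕ := ∑ i, if s i = l then 1 else 0

lemma card_Bal_succ (n h : ℕ) :
    (Bal (n+1) h).card = ∑ h' ∈ Finset.Ico (h-1) (n+1), (Bal n h').card := by
  have := sum_Bal n h (fun _ => 1)
  simpa using this

lemma cnt_Bal_succ (n h l : ℕ) (hl : 1 ≤ l) :
    ∑ s ∈ Bal (n+1) h, cntL l s = (∑ h' ∈ Finset.Ico (h-1) (n+1), ∑ s ∈ Bal n h', cntL l s)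
      + if h + l ≤ n + 1 then (Bal n (h+l-1)).card else 0 := by
  rw [sum_Bal]
  have : ∀ h' ∈ Finset.Ico (h-1) (n+1),
      ∑ s ∈ Bal n h', cntL l (Fin.cons (h'+1-h) s : Fin (n+1) → ℕ) =
      (∑ s ∈ Bal n h', cntL l s) + if h' = h + l - 1 then (Bal n h').card else 0 := by
    intro h' hh
    rw [Finset.mem_Ico] at hh
    have e : (h'+1-h = l) ↔ (h' = h + l - 1) := by omega
    simp only [cntL, Fin.sum_univ_succ, Fin.cons_zero, Fin.cons_succ, e]
    rw [Finset.sum_add_distrib, add_comm]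
    congr 1
    split_ifs <;> simp
  rw [Finset.sum_congr rfl this, Finset.sum_add_distrib]
  congr 1
  rw [Finset.sum_ite_eq']
  refine if_congr ?_ rfl rfl
  rw [Finset.mem_Ico]; omega

lemma card_Bal : ∀ (n h : ℕ), h ≤ n →
    (Bal n h).card + (2*n-h).choose (n+1) = (2*n-h).choose n
  | 0, h, hh => by
    obtain rfl : h = 0 := by omega
    simp [Bal]
  | n+1, h, hh => by
    have key : ∀ d a, a + d = n + 1 →
        (∑ h' ∈ Finset.Ico a (n+1), (Bal n h').card) + (2*n+1-a).choose (n+2)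
          = (2*n+1-a).choose (n+1) := by
      intro d
      induction d with
      | zero =>
        intro a ha
        obtain rfl : a = n+1 := by omega
        have : 2*n+1-(n+1) = n := by omega
        rw [this]
        simp [Nat.choose_eq_zero_of_lt]
      | succ d ih =>
        intro a ha
        rw [Finset.sum_eq_sum_Ico_succ_bot (by omega)]
        have h1 := ih (a+1) (by omega)
        have h2 := card_Bal n a (by omega)
        have e1 : 2*n+1-a = (2*n-a)+1 := by omega
        have e2 : 2*n+1-(a+1) = 2*n-a := by omega
        rw [e2] at h1
        rw [e1, Nat.choose_succ_succ' _ n, Nat.choose_succ_succ' _ (n+1)]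
        simp only [add_assoc, Nat.reduceAdd] at *
        omega
    rw [card_Bal_succ]
    rcases Nat.eq_zero_or_pos h with rfl | hp
    · have := key (n+1) 0 (by omega)
      have e : 2*(n+1)-0 = (2*n+1)+1 := by omega
      rw [e, Nat.choose_succ_succ' _ n, Nat.choose_succ_succ' _ (n+1)]
      clear key e
      have sy : (2*n+1).choose n = (2*n+1).choose (n+1) := by
        rw [Nat.choose_symm_half]
      simp only [Nat.zero_sub, Nat.sub_zero, add_assoc, Nat.reduceAdd] at *
      omega
    · have := key (n+1-(h-1)) (h-1) (by omega)
      have e : 2*(n+1)-h = 2*n+1-(h-1) := by omega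
      rw [e]
      exact this

lemma cnt_Bal (l : ℕ) (hl : 1 ≤ l) : ∀ (n h : ℕ),
    ∑ s ∈ Bal (n+1) h, cntL l s = if h + l ≤ n + 1 then (h+1) * (2*n+1-h-l).choose n else 0
  | 0, h => by
    rw [cnt_Bal_succ _ _ _ hl]
    have : ∀ h', ∑ s ∈ Bal 0 h', cntL l s = 0 := by
      intro h'; simp [cntL]
    simp only [this, Finset.sum_const_zero, zero_add]
    split_ifs with hh
    · obtain rfl : h = 0 := by omega
      obtain rfl : l = 1 := by omega
      simp [Bal]
    · rfl
  | n+1, h => by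
    have key : ∀ d a, a + d = n + 2 →
        (∑ h' ∈ Finset.Ico a (n+2), ∑ s ∈ Bal (n+1) h', cntL l s)
          = (a+1) * (2*n+2-a-l).choose (n+1) + (2*n+2-a-l).choose (n+2) := by
      intro d
      induction d with
      | zero =>
        intro a ha
        obtain rfl : a = n+2 := by omega
        rw [Nat.choose_eq_zero_of_lt (by omega), Nat.choose_eq_zero_of_lt (by omega)]
        simp
      | succ d ih =>
        intro a ha
        rw [Finset.sum_eq_sum_Ico_succ_bot (by omega), ih (a+1) (by omega), cnt_Bal l hl n a]
        split_ifs with hh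
        · have e1 : 2*n+2-a-l = (2*n+1-a-l)+1 := by omega
          have e2 : 2*n+2-(a+1)-l = 2*n+1-a-l := by omega
          rw [e1, e2, Nat.choose_succ_succ, Nat.choose_succ_succ]
          ring
        · rw [Nat.choose_eq_zero_of_lt (by omega), Nat.choose_eq_zero_of_lt (by omega),
            Nat.choose_eq_zero_of_lt (by omega), Nat.choose_eq_zero_of_lt (by omega)]
          simp
    rw [cnt_Bal_succ _ _ _ hl]
    by_cases hb : h - 1 ≤ n + 2
    · rw [key (n+2-(h-1)) (h-1) (by omega)]
      split_ifs with hh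
      · have hc := card_Bal (n+1) (h+l-1) (by omega)
        rcases Nat.eq_zero_or_pos h with rfl | hp
        · have e1 : 2*(n+1)-(0+l-1) = (2*n+2-l)+1 := by omega
          have e2 : 2*(n+1)+1-0-l = (2*n+2-l)+1 := by omega
          rw [e1] at hc
          rw [e2]
          simp only [Nat.zero_sub, Nat.sub_zero, zero_add, one_mul] at *
          rw [Nat.choose_succ_succ _ (n+1), Nat.succ_eq_add_one] at hc
          simp only [add_assoc, Nat.reduceAdd] at *
          omega
        · obtain ⟨g, rfl⟩ : ∃ g, h = g+1 := ⟨h-1, by omega⟩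
          have e1 : 2*(n+1)-(g+1+l-1) = 2*n+2-g-l := by omega
          have e2 : 2*(n+1)+1-(g+1)-l = 2*n+2-g-l := by omega
          rw [e1] at hc
          rw [e2]
          simp only [Nat.add_sub_cancel] at *
          simp only [add_assoc, Nat.reduceAdd] at *
          nlinarith
      · rw [Nat.choose_eq_zero_of_lt (by omega), Nat.choose_eq_zero_of_lt (by omega)]
        simp
    · rw [Finset.Ico_eq_empty (by omega), if_neg (by omega), if_neg (by omega)]
      simp

lemma card_Bal_zero (n : ℕ) : (n+1) * (Bal n 0).card = (2*n).choose n := by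
  have h := card_Bal n 0 (by omega)
  have h2 := Nat.choose_succ_right_eq (2*n) n
  have e : 2*n - n = n := by omega
  rw [e] at h2
  simp only [Nat.sub_zero] at h
  nlinarith

lemma rat_prod (n : ℕ) (hn : 1 ≤ n) : ∀ l ≤ n,
    ((2*n-l-1).choose (n-1) : ℚ) * (n+1) = ((2*n).choose n : ℚ) * (((n : ℚ) / 2 ^ (l + 1)) *
        ∏ j ∈ Finset.range (l + 1), (1 + (2 - (j : ℚ)) / (2 * (n : ℚ) - (j : ℚ))))
  | 0, _ => by
    obtain ⟨m, rfl⟩ : ∃ m, n = m+1 := ⟨n-1, by omega⟩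
    have h := Nat.add_one_mul_choose_eq (2*m+1) m
    have e : 2*(m+1)-0-1 = 2*m+1 := by omega
    have e' : 2*(m+1) = 2*m+1+1 := by omega
    rw [e, e']
    have h' : ((2*m+1+1 : ℕ):ℚ) * ((2*m+1).choose m : ℚ) = ((2*m+1+1).choose (m+1) : ℚ) * ((m+1 : ℕ):ℚ) := by
      exact_mod_cast h
    have hm : ((m:ℚ)+1) ≠ 0 := by positivity
    simp only [Nat.add_sub_cancel, zero_add, Finset.range_one, Finset.prod_singleton]
    push_cast at *
    have h3 : ((2*m+1).choose m : ℚ) * 2 = ((2*m+1+1).choose (m+1) : ℚ) := by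
      apply mul_right_cancel₀ hm
      linarith
    rw [← h3]
    field_simp
    ring
  | l+1, hl => by
    have ih := rat_prod n hn l (by omega)
    rw [Finset.prod_range_succ]
    have h := Nat.choose_mul_succ_eq (2*n-(l+1)-1) (n-1)
    have e1 : 2*n-(l+1)-1+1 = 2*n-l-1 := by omega
    have e2 : 2*n-l-1-(n-1) = n - l := by omega
    rw [e1, e2] at h
    have h' : ((2*n-(l+1)-1).choose (n-1) : ℚ) * (2*n-l-1) = ((2*n-l-1).choose (n-1) : ℚ) * (n-l) := by
      have q : (((2*n-(l+1)-1).choose (n-1) * (2*n-l-1) : ℕ) : ℚ) = (((2*n-l-1).choose (n-1) * (n-l) : ℕ) : ℚ) := by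
        rw [h]
      rw [Nat.cast_mul, Nat.cast_mul, Nat.cast_sub (by omega : l ≤ n), Nat.cast_sub (by omega : 1 ≤ 2*n-l), Nat.cast_sub (by omega : l ≤ 2*n)] at q
      push_cast at q
      exact q
    have hne : (2*(n:ℚ)-l-1) ≠ 0 := by
      have a1 : (l:ℚ)+1 ≤ n := by exact_mod_cast hl
      have a2 : (0:ℚ) ≤ l := by positivity
      intro hz
      nlinarith
    apply mul_right_cancel₀ hne
    have hne' : (2*(n:ℚ)-(l+1)) ≠ 0 := by rwa [← sub_sub]
    have fac : (1 + (2 - ((l+1 : ℕ) : ℚ)) / (2 * (n : ℚ) - ((l+1 : ℕ) : ℚ))) * (2*(n:ℚ)-l-1) = 2 * (n - l) := by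
      push_cast
      field_simp
      ring
    calc _ = (((2*n-(l+1)-1).choose (n-1) : ℚ) * (2*n-l-1)) * (n+1) := by ring
      _ = (((2*n-l-1).choose (n-1) : ℚ) * (n+1)) * (n-l) := by rw [h']; ring
      _ = _ := by
        rw [ih, pow_succ 2 (l+1)]
        linear_combination (-(((2*n).choose n : ℚ) * ((n : ℚ) / (2 ^ (l + 1)*2)) * ∏ j ∈ Finset.range (l + 1), (1 + (2 - (j : ℚ)) / (2 * (n : ℚ) - (j : ℚ))))) * fac

/-- the minimum of the block containing `x` -/
noncomputable def pmin {n : ℕ} (P : Finpartition (Finset.univ : Finset (Fin n))) (x : Fin n) :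
    Fin n := (P.part x).min' ⟨x, P.mem_part (Finset.mem_univ x)⟩

section
variable {n : ℕ} (P : Finpartition (Finset.univ : Finset (Fin n)))

lemma pmin_le (x : Fin n) : pmin P x ≤ x :=
  Finset.min'_le _ _ (P.mem_part (Finset.mem_univ x))

lemma pmin_mem (x : Fin n) : pmin P x ∈ P.part x := Finset.min'_mem _ _

lemma part_pmin (x : Fin n) : P.part (pmin P x) = P.part x :=
  (P.mem_part_iff_part_eq_part (Finset.mem_univ _) (Finset.mem_univ _)).1 (pmin_mem P x)

lemma pmin_eq_iff (x y : Fin n) : pmin P x = pmin P y ↔ P.part x = P.part y := by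
  constructor
  · intro h
    rw [← part_pmin, h, part_pmin]
  · intro h
    simp only [pmin, h]

lemma pmin_pmin (x : Fin n) : pmin P (pmin P x) = pmin P x := by
  rw [pmin_eq_iff, part_pmin]

/-- sizes of blocks, indexed by minimum -/
noncomputable def sz (j : Fin n) : ℕ := (Finset.univ.filter fun x => pmin P x = j).card

lemma part_eq_filter (x : Fin n) :
    P.part x = Finset.univ.filter fun y => pmin P y = pmin P x := by
  ext y
  simp only [Finset.mem_filter, Finset.mem_univ, true_and, pmin_eq_iff]
  exact P.mem_part_iff_part_eq_part (Finset.mem_univ _) (Finset.mem_univ _)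

lemma prefS_sz (i : ℕ) :
    prefS (sz P) i = (Finset.univ.filter fun x => (pmin P x).val < i).card := by
  unfold prefS sz
  rw [← Finset.sum_filter]
  rw [Finset.card_eq_sum_card_fiberwise (f := pmin P) (t := Finset.univ.filter fun j : Fin n => j.val < i)]
  · refine Finset.sum_congr rfl fun j hj => ?_
    congr 1
    ext x
    simp only [Finset.mem_filter, Finset.mem_univ, true_and] at *
    constructor
    · rintro rfl; exact ⟨hj, rfl⟩
    · exact fun h => h.2
  · intro x hx
    simpa using hx

/-- open elements at time `i` -/
noncomputable def opn (i : ℕ) : Finset (Fin n) :=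
  Finset.univ.filter fun x => (pmin P x).val < i ∧ i ≤ x.val

lemma card_lt_fin (i : ℕ) (hi : i ≤ n) : (Finset.univ.filter fun x : Fin n => x.val < i).card = i := by
  rw [Fin.card_filter_val_lt]
  omega

lemma card_opn (i : ℕ) (hi : i ≤ n) : (opn P i).card + i = prefS (sz P) i := by
  rw [prefS_sz]
  have hc := card_lt_fin i hi
  suffices h : (opn P i).card + (Finset.univ.filter fun x : Fin n => x.val < i).card =
      (Finset.univ.filter fun x => (pmin P x).val < i).card by omega
  unfold opn
  rw [← Finset.card_union_of_disjoint]
  · congr 1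
    ext x
    have : (pmin P x).val ≤ x.val := pmin_le P x
    simp only [Finset.mem_union, Finset.mem_filter, Finset.mem_univ, true_and]
    omega
  · rw [Finset.disjoint_left]
    intro x
    simp only [Finset.mem_filter, Finset.mem_univ, true_and]
    omega

lemma ballot_sz : Ballot n 0 (sz P) := by
  constructor
  · intro i hi
    have := card_opn P i hi
    omega
  · rw [prefS_sz]
    simp

variable {P}

lemma nc_pmin (hP : IsNonCrossing P) {a b c d : Fin n} (h1 : a < b) (h2 : b < c) (h3 : c < d)
    (hac : pmin P a = pmin P c) (hbd : pmin P b = pmin P d) : pmin P a = pmin P b := by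
  rw [pmin_eq_iff] at *
  refine hP a b c d h1 h2 h3 _ (P.part_mem.2 (Finset.mem_univ a)) _
    (P.part_mem.2 (Finset.mem_univ b)) (P.mem_part (Finset.mem_univ a)) ?_
    (P.mem_part (Finset.mem_univ b)) ?_
  · rw [hac]; exact P.mem_part (Finset.mem_univ c)
  · rw [hbd]; exact P.mem_part (Finset.mem_univ d)

lemma opn_sub1 (hP : IsNonCrossing P) (i : Fin n) :
    (opn P (pmin P i).val).card ≤ (opn P (i.val+1)).card := by
  apply Finset.card_le_card
  intro x
  simp only [opn, Finset.mem_filter, Finset.mem_univ, true_and]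
  rintro ⟨h1, h2⟩
  have hle : (pmin P i).val ≤ i.val := pmin_le P i
  refine ⟨by omega, ?_⟩
  by_contra hc
  have hne : pmin P x ≠ pmin P i := fun h => by rw [h] at h1; omega
  have hxi : x ≠ i := fun h => hne (by rw [h])
  have hxq : pmin P i ≠ x := fun h => hne (by rw [← h, pmin_pmin])
  have hxi' : x.val ≠ i.val := fun h => hxi (Fin.ext h)
  have hxq' : (pmin P i).val ≠ x.val := fun h => hxq (Fin.ext h)
  have := nc_pmin hP (a := pmin P x) (b := pmin P i) (c := x) (d := i) h1
    (Fin.lt_def.2 (by omega)) (Fin.lt_def.2 (by omega)) (pmin_pmin P x) (pmin_pmin P i)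
  rw [pmin_pmin, pmin_pmin] at this
  exact hne this

lemma opn_sub2 (hP : IsNonCrossing P) (i : Fin n) (r : ℕ) (hr : (pmin P i).val < r) (hri : r ≤ i.val) :
    (opn P (i.val+1)).card < (opn P r).card := by
  apply Finset.card_lt_card
  rw [Finset.ssubset_iff_of_subset]
  · refine ⟨i, ?_, ?_⟩
    · simp [opn, hr, hri]
    · simp [opn]
  · intro x
    simp only [opn, Finset.mem_filter, Finset.mem_univ, true_and]
    rintro ⟨h1, h2⟩
    refine ⟨?_, by omega⟩
    by_contra hc
    have hne : pmin P i ≠ pmin P x := fun h => by rw [← h] at hc; omega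
    have hne2 : pmin P x ≠ i := fun h => by
      apply hne
      rw [← pmin_pmin P x, h]
    have hne2' : (pmin P x).val ≠ i.val := fun h => hne2 (Fin.ext h)
    have := nc_pmin hP (a := pmin P i) (b := pmin P x) (c := i) (d := x) (Fin.lt_def.2 (by omega))
      (Fin.lt_def.2 (by omega)) (Fin.lt_def.2 (by omega)) (pmin_pmin P i) (pmin_pmin P x)
    rw [pmin_pmin, pmin_pmin] at this
    exact hne this

lemma sz_inj {Q : Finpartition (Finset.univ : Finset (Fin n))} (hP : IsNonCrossing P)
    (hQ : IsNonCrossing Q) (h : sz P = sz Q) : P = Q := by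
  have ho : ∀ i ≤ n, (opn P i).card = (opn Q i).card := by
    intro i hi
    have h1 := card_opn P i hi
    have h2 := card_opn Q i hi
    rw [h] at h1
    omega
  have hp : ∀ i, pmin P i = pmin Q i := by
    intro i
    have hi := i.isLt
    have p1 : (pmin P i).val ≤ i.val := pmin_le P i
    have q1 : (pmin Q i).val ≤ i.val := pmin_le Q i
    have p2 := opn_sub1 hP i
    have q2 := opn_sub1 hQ i
    have p3 := opn_sub2 hP i (pmin Q i).val
    have q3 := opn_sub2 hQ i (pmin P i).val
    rw [ho _ (by omega), ho _ (by omega)] at p2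
    rw [ho _ (by omega), ho _ (by omega)] at p3
    apply Fin.ext
    omega
  apply Finpartition.ext
  ext B
  have aux : ∀ {P Q : Finpartition (Finset.univ : Finset (Fin n))}, (∀ i, pmin P i = pmin Q i) →
      B ∈ P.parts → B ∈ Q.parts := by
    intro P Q hpq hB
    obtain ⟨x, hx⟩ := P.nonempty_of_mem_parts hB
    have e := P.part_eq_of_mem hB hx
    have : Q.part x = B := by
      rw [← e, part_eq_filter, part_eq_filter]
      simp [hpq]
    rw [← this]
    exact Q.part_mem.2 (Finset.mem_univ x)
  exact ⟨aux hp, aux fun i => (hp i).symm⟩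

lemma num_sz (l : ℕ) (hl : 1 ≤ l) (π : NCPart n) : numBlocksOfSize l π = cntL l (sz π.1) := by
  unfold numBlocksOfSize cntL
  rw [← Finset.card_filter]
  symm
  apply Finset.card_bij (fun j _ => π.1.part j)
  all_goals have hm : ∀ j, sz π.1 j = l → pmin π.1 j = j ∧ (π.1.part j).card = l := by
              intro j hj
              have hpos : 0 < sz π.1 j := by omega
              obtain ⟨x, hx⟩ := Finset.card_pos.1 hpos
              simp only [Finset.mem_filter, Finset.mem_univ, true_and] at hx
              have h1 : pmin π.1 j = j := by rw [← hx, pmin_pmin]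
              refine ⟨h1, ?_⟩
              rw [part_eq_filter, h1]
              exact hj
  · intro j hj
    simp only [Finset.mem_filter, Finset.mem_univ, true_and] at hj
    rw [Finset.mem_filter]
    exact ⟨π.1.part_mem.2 (Finset.mem_univ j), (hm j hj).2⟩
  · intro a ha b hb hab
    simp only [Finset.mem_filter, Finset.mem_univ, true_and] at ha hb
    rw [← (hm a ha).1, ← (hm b hb).1]
    exact (pmin_eq_iff _ _ _).2 hab
  · intro B hB
    rw [Finset.mem_filter] at hB
    obtain ⟨x, hx⟩ := π.1.nonempty_of_mem_parts hB.1
    have e := π.1.part_eq_of_mem hB.1 hx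
    refine ⟨pmin π.1 x, ?_, by rw [part_pmin, e]⟩
    simp only [Finset.mem_filter, Finset.mem_univ, true_and]
    rw [← hB.2, ← e, part_eq_filter]
    rfl

end

lemma sz_surj {n : ℕ} (s : Fin n → ℕ) (hs : Ballot n 0 s) : ∃ π : NCPart n, sz π.1 = s := by
  classical
  obtain ⟨h, hh⟩ : ∃ h : ℕ → ℕ, ∀ i ≤ n, h i + i = prefS s i := by
    refine ⟨fun i => prefS s i - i, fun i hi => ?_⟩
    have := hs.1 i hi
    simp only
    omega
  have h0 : h 0 = 0 := by
    have := hh 0 (by omega)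
    rw [prefS_zero] at this
    omega
  have hn0 : h n = 0 := by
    have := hh n le_rfl
    have := hs.2
    omega
  have hstep : ∀ i : Fin n, h (i.val+1) + 1 = h i.val + s i := by
    intro i
    have a := hh i.val (by omega)
    have b := hh (i.val+1) (by omega)
    rw [prefS_succ] at b
    omega
  have hex : ∀ i : Fin n, ∃ q : Fin n, q.val ≤ i.val ∧ h q.val ≤ h (i.val+1) ∧
      ∀ r, q.val < r → r ≤ i.val → h (i.val+1) < h r := by
    intro i
    have hb := Nat.findGreatest_spec (P := fun q => h q ≤ h (i.val+1)) (Nat.zero_le i.val)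
      (by rw [h0]; exact Nat.zero_le _)
    have hle := Nat.findGreatest_le (P := fun q => h q ≤ h (i.val+1)) i.val
    refine ⟨⟨Nat.findGreatest (fun q => h q ≤ h (i.val+1)) i.val, by omega⟩, hle, hb, ?_⟩
    intro r h1 h2
    have := Nat.findGreatest_is_greatest h1 h2
    omega
  choose p p1 p2 p3 using hex
  have pp : ∀ i, p (p i) = p i := by
    intro i
    by_contra hne
    have hne' : (p (p i)).val ≠ (p i).val := fun e => hne (Fin.ext e)
    have a1 := p1 (p i)
    have a3 := p3 (p i) (p i).val (by omega) le_rfl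
    have b1 := p1 i
    have b2 := p2 i
    by_cases hc : (p i).val = i.val
    · rw [hc] at a3 b2
      omega
    · have b3 := p3 i ((p i).val+1) (by omega) (by omega)
      omega
  have pnc : ∀ a b c d : Fin n, a < b → b < c → c < d → p a = p c → p b = p d → p a = p b := by
    intro a b c d hab hbc hcd hac hbd
    rw [Fin.lt_def] at hab hbc hcd
    have a1 := p1 a
    have b1 := p1 b
    have c2 := p2 c
    have d2 := p2 d
    have c3 := p3 c
    have d3 := p3 d
    have b3 := p3 b
    rw [← hac] at c2 c3
    rw [← hbd] at d2 d3
    apply Fin.ext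
    rcases lt_trichotomy (p a).val (p b).val with hlt | heq | hgt
    · have := c3 _ hlt (by omega)
      have := d3 (c.val+1) (by omega) (by omega)
      omega
    · exact heq
    · have := b3 _ hgt (by omega)
      have := c3 (b.val+1) (by omega) (by omega)
      omega
  let P := Finpartition.ofSetoid (Setoid.ker p)
  have mem : ∀ x y, y ∈ P.part x ↔ p x = p y := fun x y => by
    rw [Finpartition.mem_part_ofSetoid_iff_rel]
    rfl
  have hpm : ∀ x, pmin P x = p x := by
    intro x
    apply le_antisymm
    · apply Finset.min'_le
      rw [mem, pp]
    · have := (mem _ _).1 (pmin_mem P x)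
      rw [this]
      exact p1 _
  refine ⟨⟨P, ?_⟩, ?_⟩
  · intro a b c d h1 h2 h3 B hB B' hB' ha hc hb hd
    have eB := P.part_eq_of_mem hB ha
    have eB' := P.part_eq_of_mem hB' hb
    rw [← eB, ← eB', ← pmin_eq_iff, hpm, hpm]
    rw [← eB, mem] at hc
    rw [← eB', mem] at hd
    exact pnc a b c d h1 h2 h3 hc hd
  · funext q
    change sz P q = s q
    unfold sz
    simp only [hpm]
    have hq := hstep q
    have : (Finset.Ico (h q.val) (h q.val + s q)).card = s q := by simp
    rw [← this]
    apply Finset.card_bij (fun i _ => h (i.val+1))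
    · intro i hi
      simp only [Finset.mem_filter, Finset.mem_univ, true_and] at hi
      subst hi
      rw [Finset.mem_Ico]
      refine ⟨p2 i, ?_⟩
      have b1 := p1 i
      by_cases hc : (p i).val = i.val
      · rw [hc] at hq ⊢
        omega
      · have b3 := p3 i ((p i).val+1) (by omega) (by omega)
        omega
    · intro i hi j hj hij
      simp only [Finset.mem_filter, Finset.mem_univ, true_and] at hi hj
      have a1 := p1 i
      have b1 := p1 j
      have a3 := p3 i (j.val+1)
      have b3 := p3 j (i.val+1)
      rw [hi] at a1 a3
      rw [hj] at b1 b3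
      apply Fin.ext
      omega
    · intro v hv
      rw [Finset.mem_Ico] at hv
      have hqn := q.isLt
      have ex : ∃ i, q.val ≤ i ∧ h (i+1) ≤ v := by
        refine ⟨n-1, by omega, ?_⟩
        have : n-1+1 = n := by omega
        rw [this, hn0]
        omega
      obtain ⟨i, hi1, hi2, hmin⟩ : ∃ i, q.val ≤ i ∧ h (i+1) ≤ v ∧
          ∀ j < i, q.val ≤ j → v < h (j+1) := by
        refine ⟨Nat.find ex, (Nat.find_spec ex).1, (Nat.find_spec ex).2, fun j hj hqj => ?_⟩
        have := Nat.find_min ex hj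
        by_contra hc
        exact this ⟨hqj, by omega⟩
      have hin : i < n := by
        by_contra hc
        have := hmin (n-1) (by omega) (by omega)
        have e : n-1+1 = n := by omega
        rw [e, hn0] at this
        omega
      have hgt : ∀ r, q.val < r → r ≤ i → v < h r := by
        intro r h1 h2
        have := hmin (r-1) (by omega) (by omega)
        have e : r-1+1 = r := by omega
        rwa [e] at this
      have hv' : h (i+1) = v := by
        have st := hstep ⟨i, hin⟩
        simp only at st
        by_cases hc : q.val = i
        · subst hc
          omega
        · have := hgt i (by omega) le_rfl
          omega
      refine ⟨⟨i, hin⟩, ?_, hv'⟩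
      simp only [Finset.mem_filter, Finset.mem_univ, true_and]
      have b1 := p1 ⟨i, hin⟩
      have b2 := p2 ⟨i, hin⟩
      have b3 := p3 ⟨i, hin⟩ q.val
      have b4 := hgt (p ⟨i, hin⟩).val
      simp only at b1 b2 b3 b4
      apply Fin.ext
      omega

lemma sum_NC {n : ℕ} (f : (Fin n → ℕ) → ℕ) : ∑ π : NCPart n, f (sz π.1) = ∑ s ∈ Bal n 0, f s := by
  apply Finset.sum_bij (fun (π : NCPart n) _ => sz π.1)
  · intro π _
    exact (mem_Bal _ _ _).2 (ballot_sz _)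
  · intro a _ b _ hab
    exact Subtype.ext (sz_inj a.2 b.2 hab)
  · intro s hs
    obtain ⟨π, h⟩ := sz_surj s ((mem_Bal _ _ _).1 hs)
    exact ⟨π, Finset.mem_univ _, h⟩
  · intro _ _
    rfl

lemma card_NC (n : ℕ) : Fintype.card (NCPart n) = (Bal n 0).card := by
  have := sum_NC (n := n) (fun _ => 1)
  simpa using this

/-- For `n ≥ 1` and `1 ≤ l ≤ n`, the sum over all non-crossing partitions
`π` of `[n]` of the number of blocks of `π` of size exactly `l` equals
`binom(2n − l − 1, n − 1)`; equivalently, the expected number of blocks of size `l` in a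
uniformly random NC partition of `[n]` is
`binom(2n − l − 1, n − 1)/C_n = (n/2^{l+1})·Π_{j=0}^{l} (1 + (2 − j)/(2n − j))`. -/
theorem sum_numBlocksOfSize (n l : ℕ) (hn : 1 ≤ n) (hl : 1 ≤ l) (hln : l ≤ n) :
    (∑ π : NCPart n, numBlocksOfSize l π = Nat.choose (2 * n - l - 1) (n - 1)) ∧
    ((∑ π : NCPart n, (numBlocksOfSize l π : ℚ)) / (Fintype.card (NCPart n) : ℚ) =
      ((n : ℚ) / 2 ^ (l + 1)) *
        ∏ j ∈ Finset.range (l + 1), (1 + (2 - (j : ℚ)) / (2 * (n : ℚ) - (j : ℚ)))) := by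
  have key : ∑ π : NCPart n, numBlocksOfSize l π = Nat.choose (2 * n - l - 1) (n - 1) := by
    simp only [num_sz l hl]
    rw [sum_NC (cntL l)]
    obtain ⟨m, rfl⟩ : ∃ m, n = m + 1 := ⟨n - 1, by omega⟩
    rw [cnt_Bal l hl m 0, if_pos (by omega)]
    have e : 2 * m + 1 - 0 - l = 2 * (m + 1) - l - 1 := by omega
    rw [e]
    simp
  refine ⟨key, ?_⟩
  rw [← Nat.cast_sum, key, card_NC]
  have h1 := rat_prod n hn l hln
  have h2 : ((n : ℚ) + 1) * ((Bal n 0).card : ℚ) = ((2 * n).choose n : ℚ) := by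
    exact_mod_cast card_Bal_zero n
  have hn1 : (n : ℚ) + 1 ≠ 0 := by positivity
  have hc : ((Bal n 0).card : ℚ) ≠ 0 := by
    intro h
    rw [h, mul_zero] at h2
    have : 0 < (2 * n).choose n := Nat.choose_pos (by omega)
    have h3 : (2 * n).choose n = 0 := by exact_mod_cast h2.symm
    omega
  rw [div_eq_iff hc]
  apply mul_right_cancel₀ hn1
  rw [h1, ← h2]
  ring
end

section
/- Fix integers n ≥ 2 and l ≥ 1. Writing k_l(π) for the number of blocks of size l in a non-crossing partition π of [n], the second factorial moment satisfies Σ_{π ∈ NC(n)} k_l(π)·(k_l(π) − 1) = n · binom(2n − 2l − 2, n − 2) (with the convention that binom(a,b) = 0 when a < b). -/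
structure IsNCP {α : Type*} [LinearOrder α] (S : Finset α) (P : Finset (Finset α)) : Prop where
  ne : ∀ B ∈ P, B.Nonempty
  cover : ∀ x, x ∈ S ↔ ∃ B ∈ P, x ∈ B
  disj : ∀ B ∈ P, ∀ C ∈ P, ∀ x, x ∈ B → x ∈ C → B = C
  nc : ∀ a b c d : α, a < b → b < c → c < d → ∀ B ∈ P, ∀ C ∈ P,
      a ∈ B → c ∈ B → b ∈ C → d ∈ C → B = C

def HasProf {α : Type*} [LinearOrder α] (P : Finset (Finset α)) (a : α → ℕ) : Prop :=
  (∀ B ∈ P, ∀ i, i ∈ B → (∀ j ∈ B, i ≤ j) → a i = B.card) ∧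
  (∀ i, (∀ B ∈ P, i ∈ B → ∃ j ∈ B, j < i) → a i = 0)

theorem exists_lower {α : Type*} [LinearOrder α] (T : Finset α) (k : ℕ) (hk : k ≤ T.card) :
    ∃ B ⊆ T, B.card = k ∧ ∀ x ∈ B, ∀ y ∈ T, y ≤ x → y ∈ B := by
  induction k with
  | zero => exact ⟨∅, by simp⟩
  | succ k ih =>
    obtain ⟨B, hB, hc, hl⟩ := ih (by omega)
    have hne : (T \ B).Nonempty := by
      rw [← Finset.card_pos, Finset.card_sdiff_of_subset hB]; omega
    have hm := Finset.min'_mem _ hne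
    have hmin := fun y hy => Finset.min'_le (T \ B) y hy
    set m := (T \ B).min' hne
    simp only [Finset.mem_sdiff] at hm hmin
    refine ⟨insert m B, ?_, ?_, ?_⟩
    · intro x hx; simp at hx; rcases hx with rfl | hx
      · exact hm.1
      · exact hB hx
    · rw [Finset.card_insert_of_notMem hm.2, hc]
    · intro x hx y hy hyx
      simp at hx ⊢
      by_contra! hcon
      have := hmin y ⟨hy, hcon.2⟩
      rcases hx with rfl | hx
      · exact hcon.1 (le_antisymm hyx this)
      · exact hcon.2 (hl x hx y hy hyx)

theorem unique_lower {α : Type*} [LinearOrder α] (T B C : Finset α) (hB : B ⊆ T) (hC : C ⊆ T)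
    (h : B.card = C.card) (lB : ∀ x ∈ B, ∀ y ∈ T, y ≤ x → y ∈ B)
    (lC : ∀ x ∈ C, ∀ y ∈ T, y ≤ x → y ∈ C) : B = C := by
  by_cases hs : B ⊆ C
  · exact Finset.eq_of_subset_of_card_le hs h.ge
  · obtain ⟨x, hx, hxC⟩ := Finset.not_subset.1 hs
    refine (Finset.eq_of_subset_of_card_le (fun y hy => ?_) h.le).symm
    rcases le_total y x with hyx | hyx
    · exact lB x hx y (hC hy) hyx
    · exact absurd (lC y hy x (hB hx) hyx) hxC

/-- the block whose least element is maximal is an interval -/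
theorem last_lower {α : Type*} [LinearOrder α] {S : Finset α} {P : Finset (Finset α)} {a : α → ℕ}
    (hP : IsNCP S P) (ha : HasProf P a) (i : α) (hi : a i ≠ 0) (hmax : ∀ j, i < j → a j = 0) :
    ∃ B ∈ P, i ∈ B ∧ B ⊆ S.filter (i ≤ ·) ∧ B.card = a i ∧
      ∀ x ∈ B, ∀ y ∈ S.filter (i ≤ ·), y ≤ x → y ∈ B := by
  have : ∃ B ∈ P, i ∈ B ∧ ∀ j ∈ B, i ≤ j := by
    by_contra! hcon
    exact hi (ha.2 i hcon)
  obtain ⟨B, hB, hiB, hle⟩ := this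
  refine ⟨B, hB, hiB, ?_, (ha.1 B hB i hiB hle).symm, ?_⟩
  · intro x hx
    simp only [Finset.mem_filter]
    exact ⟨(hP.cover x).2 ⟨B, hB, hx⟩, hle x hx⟩
  · intro x hx y hy hyx
    simp only [Finset.mem_filter] at hy
    obtain ⟨C, hC, hyC⟩ := (hP.cover y).1 hy.1
    by_contra hyB
    have hne := hP.ne C hC
    have hm := Finset.min'_mem C hne
    have hml := fun z hz => Finset.min'_le C z hz
    set m := C.min' hne
    have hmc := ha.1 C hC m hm hml
    have hmi : m ≤ i := by
      by_contra! h
      have := hmax m h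
      have := hne.card_pos
      omega
    have hBC : C ≠ B := fun h => hyB (h ▸ hyC)
    have h1 : m < i := lt_of_le_of_ne hmi (fun h => hBC (hP.disj C hC B hB i (h ▸ hm) hiB))
    have h2 : i < y := lt_of_le_of_ne hy.2 (fun h => hyB (h ▸ hiB))
    have h3 : y < x := lt_of_le_of_ne hyx (fun h => hyB (h ▸ hx))
    exact hBC (hP.nc m i y x h1 h2 h3 C hC B hB hm hyC hiB hx)

theorem IsNCP.erase {α : Type*} [LinearOrder α] {S : Finset α} {P : Finset (Finset α)}
    (hP : IsNCP S P) {B : Finset α} (hB : B ∈ P) : IsNCP (S \ B) (P.erase B) := by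
  refine ⟨fun C hC => hP.ne C (Finset.mem_of_mem_erase hC), ?_, ?_, ?_⟩
  · intro x
    simp only [Finset.mem_sdiff, Finset.mem_erase, hP.cover x]
    constructor
    · rintro ⟨⟨C, hC, hx⟩, hxB⟩
      exact ⟨C, ⟨fun h => hxB (h ▸ hx), hC⟩, hx⟩
    · rintro ⟨C, ⟨hne, hC⟩, hx⟩
      exact ⟨⟨C, hC, hx⟩, fun h => hne (hP.disj C hC B hB x hx h)⟩
  · intro C hC D hD
    exact hP.disj C (Finset.mem_of_mem_erase hC) D (Finset.mem_of_mem_erase hD)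
  · intro a b c d h1 h2 h3 C hC D hD
    exact hP.nc a b c d h1 h2 h3 C (Finset.mem_of_mem_erase hC) D (Finset.mem_of_mem_erase hD)

theorem HasProf.erase {α : Type*} [LinearOrder α] {S : Finset α} {P : Finset (Finset α)}
    {a : α → ℕ} (hP : IsNCP S P) (ha : HasProf P a) {B : Finset α} (hB : B ∈ P) {i : α}
    (hi : i ∈ B) (hl : ∀ j ∈ B, i ≤ j) : HasProf (P.erase B) (Function.update a i 0) := by
  constructor
  · intro C hC j hj hjl
    rw [Finset.mem_erase] at hC
    have : j ≠ i := fun h => hC.1 (hP.disj C hC.2 B hB i (h ▸ hj) hi)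
    rw [Function.update_of_ne this]
    exact ha.1 C hC.2 j hj hjl
  · intro j hj
    by_cases h : j = i
    · simp [h]
    · rw [Function.update_of_ne h]
      refine ha.2 j fun C hC hjC => ?_
      by_cases hCB : C = B
      · subst hCB
        exact ⟨i, hi, lt_of_le_of_ne (hl j hjC) (Ne.symm h)⟩
      · exact hj C (Finset.mem_erase.2 ⟨hCB, hC⟩) hjC

theorem ncp_unique {α : Type*} [LinearOrder α] (m : ℕ) : ∀ (S : Finset α) (a : α → ℕ)
    (P Q : Finset (Finset α)), S.card = m → IsNCP S P → IsNCP S Q → HasProf P a → HasProf Q a →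
    P = Q := by
  induction m using Nat.strong_induction_on with
  | _ m ih =>
  intro S a P Q hm hP hQ haP haQ
  by_cases hS : S = ∅
  · subst hS
    have key : ∀ R : Finset (Finset α), IsNCP ∅ R → R = ∅ := by
      intro R hR
      rw [Finset.eq_empty_iff_forall_notMem]
      intro B hB
      obtain ⟨x, hx⟩ := hR.ne B hB
      simpa using (hR.cover x).2 ⟨B, hB, hx⟩
    rw [key P hP, key Q hQ]
  · obtain ⟨x, hx⟩ := Finset.nonempty_iff_ne_empty.2 hS
    have hsupp : ∀ j, a j ≠ 0 → j ∈ S := by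
      intro j hj
      by_contra hjS
      refine hj (haP.2 j fun B hB hjB => absurd ((hP.cover j).2 ⟨B, hB, hjB⟩) hjS)
    have hne : (S.filter (a · ≠ 0)).Nonempty := by
      obtain ⟨B, hB, hxB⟩ := (hP.cover x).1 hx
      have hBne := hP.ne B hB
      have h1 := haP.1 B hB _ (Finset.min'_mem B hBne) (fun z hz => Finset.min'_le B z hz)
      have h2 : a (B.min' hBne) ≠ 0 := by have := hBne.card_pos; omega
      exact ⟨_, Finset.mem_filter.2 ⟨hsupp _ h2, h2⟩⟩
    have hi := Finset.max'_mem _ hne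
    have hmx := fun z hz => Finset.le_max' (S.filter (a · ≠ 0)) z hz
    set i := (S.filter (a · ≠ 0)).max' hne
    simp only [Finset.mem_filter] at hi hmx
    have hmax : ∀ j, i < j → a j = 0 := by
      intro j hj
      by_contra h
      exact absurd (hmx j ⟨hsupp j h, h⟩) (not_le.2 hj)
    obtain ⟨B, hB, hiB, hBs, hBc, hBl⟩ := last_lower hP haP i hi.2 hmax
    obtain ⟨C, hC, hiC, hCs, hCc, hCl⟩ := last_lower hQ haQ i hi.2 hmax
    have hBC := unique_lower _ B C hBs hCs (hBc.trans hCc.symm) hBl hCl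
    subst hBC
    have hle : ∀ j ∈ B, i ≤ j := fun j hj => (Finset.mem_filter.1 (hBs hj)).2
    have hBS : B ⊆ S := hBs.trans (Finset.filter_subset _ _)
    have hlt : (S \ B).card < m := by
      rw [Finset.card_sdiff_of_subset hBS]
      have := Finset.card_le_card hBS
      have := hi.2
      omega
    have := ih _ hlt (S \ B) _ _ _ rfl (hP.erase hB) (hQ.erase hC) (haP.erase hP hB hiB hle)
      (haQ.erase hQ hC hiC hle)
    rw [← Finset.insert_erase hB, this, Finset.insert_erase hC]

theorem ncp_exists {α : Type*} [LinearOrder α] (m : ℕ) : ∀ (S : Finset α) (a : α → ℕ),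
    S.card = m → (∀ i, i ∉ S → a i = 0) → ∑ i ∈ S, a i = S.card →
    (∀ i, ∑ j ∈ S.filter (i ≤ ·), a j ≤ (S.filter (i ≤ ·)).card) →
    ∃ P, IsNCP S P ∧ HasProf P a := by
  induction m using Nat.strong_induction_on with
  | _ m ih =>
  intro S a hm h0 hsum hsuf
  by_cases hS : S = ∅
  · subst hS
    refine ⟨∅, ⟨by simp, by simp, by simp, by simp⟩, by simp, fun i _ => h0 i (by simp)⟩
  · have hpos := Finset.card_pos.2 (Finset.nonempty_iff_ne_empty.2 hS)
    have hne : (S.filter (a · ≠ 0)).Nonempty := by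
      by_contra h
      rw [Finset.not_nonempty_iff_eq_empty, Finset.filter_eq_empty_iff] at h
      have : ∑ i ∈ S, a i = 0 := Finset.sum_eq_zero (fun i hi => by simpa using h hi)
      omega
    have hi := Finset.max'_mem _ hne
    have hmx := fun z hz => Finset.le_max' (S.filter (a · ≠ 0)) z hz
    set i := (S.filter (a · ≠ 0)).max' hne
    simp only [Finset.mem_filter] at hi hmx
    have hmax : ∀ j, i < j → a j = 0 := by
      intro j hj
      by_contra h
      exact absurd (hmx j ⟨by_contra fun h' => h (h0 j h'), h⟩) (not_le.2 hj)
    have hk : a i ≤ (S.filter (i ≤ ·)).card :=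
      (Finset.single_le_sum (f := a) (fun _ _ => Nat.zero_le _)
        (Finset.mem_filter.2 ⟨hi.1, le_rfl⟩)).trans (hsuf i)
    obtain ⟨B, hBs, hBc, hBl⟩ := exists_lower _ _ hk
    have hle : ∀ j ∈ B, i ≤ j := fun j hj => (Finset.mem_filter.1 (hBs hj)).2
    have hBS : B ⊆ S := hBs.trans (Finset.filter_subset _ _)
    have hBne : B.Nonempty := Finset.card_pos.1 (by have := hi.2; omega)
    have hiB : i ∈ B := by
      obtain ⟨x, hx⟩ := hBne
      exact hBl x hx i (Finset.mem_filter.2 ⟨hi.1, le_rfl⟩) (hle x hx)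
    have hcd := Finset.card_sdiff_of_subset hBS
    have hcl := Finset.card_le_card hBS
    have hlt : (S \ B).card < m := by
      have := hi.2
      omega
    set a' := Function.update a i 0 with ha'
    have a'B : ∀ x ∈ B, a' x = 0 := by
      intro x hx
      by_cases h : x = i
      · simp [ha', h]
      · rw [ha', Function.update_of_ne h]
        exact hmax x (lt_of_le_of_ne (hle x hx) (Ne.symm h))
    have a'0 : ∀ x, x ∉ S \ B → a' x = 0 := by
      intro x hx
      by_cases hxB : x ∈ B
      · exact a'B x hxB
      · have : x ≠ i := fun h => hxB (h ▸ hiB)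
        rw [ha', Function.update_of_ne this]
        exact h0 x (fun h => hx (Finset.mem_sdiff.2 ⟨h, hxB⟩))
    have hsumT : ∀ T : Finset α, T ⊆ S → i ∈ T → ∑ x ∈ T \ B, a' x + a i = ∑ x ∈ T, a x := by
      intro T hT hiT
      have e1 : ∑ x ∈ T \ B, a' x = ∑ x ∈ T, a' x := by
        refine Finset.sum_subset Finset.sdiff_subset (fun x hx hx' => ?_)
        refine a'B x ?_
        by_contra h
        exact hx' (Finset.mem_sdiff.2 ⟨hx, h⟩)
      rw [e1, ha', Finset.sum_update_of_mem hiT, zero_add, Finset.sdiff_singleton_eq_erase,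
        Finset.sum_erase_add _ _ hiT]
    have hs' : ∑ x ∈ S \ B, a' x = (S \ B).card := by
      have := hsumT S subset_rfl hi.1
      omega
    obtain ⟨P, hP, haP⟩ := ih _ hlt (S \ B) a' rfl a'0 hs' (by
      intro j
      rcases le_or_gt j i with hj | hj
      · have e : (S \ B).filter (j ≤ ·) = S.filter (j ≤ ·) \ B := by
          ext x; simp only [Finset.mem_filter, Finset.mem_sdiff]; tauto
        rw [e]
        have h1 := hsumT (S.filter (j ≤ ·)) (Finset.filter_subset _ _)
          (Finset.mem_filter.2 ⟨hi.1, hj⟩)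
        have h2 := hsuf j
        have h3 : B ⊆ S.filter (j ≤ ·) := fun x hx =>
          Finset.mem_filter.2 ⟨hBS hx, hj.trans (hle x hx)⟩
        rw [Finset.card_sdiff_of_subset h3]
        have := Finset.card_le_card h3
        omega
      · rw [Finset.sum_eq_zero]
        · exact Nat.zero_le _
        · intro x hx
          have := (Finset.mem_filter.1 hx).2
          have hxi : i < x := lt_of_lt_of_le hj this
          rw [ha', Function.update_of_ne hxi.ne']
          exact hmax x hxi)
    have hPB : ∀ C ∈ P, ∀ x ∈ C, x ∈ S ∧ x ∉ B := fun C hC x hx =>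
      Finset.mem_sdiff.1 ((hP.cover x).2 ⟨C, hC, hx⟩)
    have hinterval : ∀ x ∈ B, ∀ y ∈ S, y ∉ B → ∀ z ∈ B, ¬ (x < y ∧ y < z) := by
      rintro x hx y hy hyB z hz ⟨h1, h2⟩
      exact hyB (hBl z hz y (Finset.mem_filter.2 ⟨hy, (hle x hx).trans h1.le⟩) h2.le)
    refine ⟨insert B P, ⟨?_, ?_, ?_, ?_⟩, ?_, ?_⟩
    · intro C hC
      rcases Finset.mem_insert.1 hC with rfl | hC
      · exact hBne
      · exact hP.ne C hC
    · intro x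
      have := hP.cover x
      simp only [Finset.mem_sdiff] at this
      simp only [Finset.mem_insert, exists_eq_or_imp, ← this]
      constructor
      · intro h; by_cases hxB : x ∈ B <;> tauto
      · rintro (h | h)
        · exact hBS h
        · exact h.1
    · intro C hC D hD x hxC hxD
      rcases Finset.mem_insert.1 hC with hCB | hC' <;>
        rcases Finset.mem_insert.1 hD with hDB | hD' <;> (try subst hCB) <;> (try subst hDB)
      · rfl
      · exact absurd hxC (hPB D hD' x hxD).2
      · exact absurd hxD (hPB C hC' x hxC).2
      · exact hP.disj C hC' D hD' x hxC hxD
    · intro w x y z h1 h2 h3 C hC D hD hw hy hx hz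
      rcases Finset.mem_insert.1 hC with hCB | hC' <;>
        rcases Finset.mem_insert.1 hD with hDB | hD' <;> (try subst hCB) <;> (try subst hDB)
      · rfl
      · exact absurd ⟨h1, h2⟩ (hinterval w hw x (hPB D hD' x hx).1 (hPB D hD' x hx).2 y hy)
      · exact absurd ⟨h2, h3⟩ (hinterval x hx y (hPB C hC' y hy).1 (hPB C hC' y hy).2 z hz)
      · exact hP.nc w x y z h1 h2 h3 C hC' D hD' hw hy hx hz
    · intro C hC j hj hjl
      rcases Finset.mem_insert.1 hC with rfl | hC
      · rw [le_antisymm (hjl i hiB) (hle j hj), hBc]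
      · have : j ≠ i := fun h => (hPB C hC j hj).2 (h ▸ hiB)
        rw [← haP.1 C hC j hj hjl, ha', Function.update_of_ne this]
    · intro j hj
      have hji : j ≠ i := by
        rintro rfl
        obtain ⟨k, hk, hlt⟩ := hj B (Finset.mem_insert_self _ _) hiB
        exact absurd (hle k hk) (not_le.2 hlt)
      have := haP.2 j (fun C hC => hj C (Finset.mem_insert_of_mem hC))
      rwa [ha', Function.update_of_ne hji] at this

theorem exists_prof {n : ℕ} {P : Finset (Finset (Fin n))} (hP : IsNCP Finset.univ P) :
    ∃ a : Fin n → ℕ, HasProf P a ∧ ∑ i, a i = n ∧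
      ∀ i, ∑ j ∈ Finset.univ.filter (i ≤ ·), a j ≤ (Finset.univ.filter (i ≤ ·)).card := by
  have h : ∀ x : Fin n, ∃ m, ∃ B ∈ P, x ∈ B ∧ m ∈ B ∧ ∀ j ∈ B, m ≤ j := by
    intro x
    obtain ⟨B, hB, hx⟩ := (hP.cover x).1 (Finset.mem_univ x)
    exact ⟨B.min' ⟨x, hx⟩, B, hB, hx, Finset.min'_mem _ _, fun j hj => Finset.min'_le _ _ hj⟩
  choose mn D hD hxD hmD hl using h
  have hsum : ∀ T : Finset (Fin n), ∑ j ∈ T, (Finset.univ.filter (mn · = j)).card =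
      (Finset.univ.filter (mn · ∈ T)).card := by
    intro T
    rw [Finset.card_eq_sum_card_fiberwise (f := mn) (t := T)]
    · refine Finset.sum_congr rfl fun j hj => ?_
      congr 1
      ext x
      simp only [Finset.mem_filter, Finset.mem_univ, true_and]
      constructor
      · rintro rfl; exact ⟨hj, rfl⟩
      · exact fun h => h.2
    · intro x hx
      simpa using hx
  refine ⟨fun j => (Finset.univ.filter (mn · = j)).card, ⟨?_, ?_⟩, ?_, ?_⟩
  · intro B hB i hi hle
    refine congrArg Finset.card ?_
    ext x
    simp only [Finset.mem_filter, Finset.mem_univ, true_and]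
    constructor
    · rintro rfl
      rw [hP.disj B hB _ (hD x) _ hi (hmD x)]
      exact hxD x
    · intro hx
      have := hP.disj B hB _ (hD x) _ hx (hxD x)
      refine le_antisymm (hl x i (this ▸ hi)) (hle _ (this ▸ hmD x))
  · intro i hi
    rw [Finset.card_eq_zero, Finset.filter_eq_empty_iff]
    rintro x - rfl
    obtain ⟨j, hj, hlt⟩ := hi _ (hD x) (hmD x)
    exact absurd (hl x j hj) (not_le.2 hlt)
  · rw [hsum]; simp
  · intro i
    rw [hsum]
    refine Finset.card_le_card fun x hx => ?_
    simp only [Finset.mem_filter, Finset.mem_univ, true_and] at hx ⊢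
    exact hx.trans (hl x x (hxD x))

theorem prof_count {n : ℕ} {P : Finset (Finset (Fin n))} (hP : IsNCP Finset.univ P)
    {a : Fin n → ℕ} (ha : HasProf P a) (l : ℕ) (hl : 1 ≤ l) :
    (P.filter fun B => B.card = l).card = (Finset.univ.filter fun i => a i = l).card := by
  have hne : ∀ B ∈ P.filter fun B => B.card = l, B.Nonempty := fun B hB =>
    hP.ne B (Finset.mem_filter.1 hB).1
  refine Finset.card_bij (fun B hB => B.min' (hne B hB)) ?_ ?_ ?_
  · intro B hB
    have := Finset.mem_filter.1 hB
    simp only [Finset.mem_filter, Finset.mem_univ, true_and]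
    rw [← this.2]
    exact ha.1 B this.1 _ (Finset.min'_mem _ _) (fun j hj => Finset.min'_le _ _ hj)
  · intro B hB C hC h
    refine hP.disj B (Finset.mem_filter.1 hB).1 C (Finset.mem_filter.1 hC).1 _
      (Finset.min'_mem _ (hne B hB)) ?_
    rw [h]; exact Finset.min'_mem _ _
  · intro i hi
    simp only [Finset.mem_filter, Finset.mem_univ, true_and] at hi
    have : ∃ B ∈ P, i ∈ B ∧ ∀ j ∈ B, i ≤ j := by
      by_contra! hcon
      have := ha.2 i hcon
      omega
    obtain ⟨B, hB, hiB, hle⟩ := this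
    refine ⟨B, Finset.mem_filter.2 ⟨hB, by rw [← ha.1 B hB i hiB hle, hi]⟩, ?_⟩
    exact le_antisymm (Finset.min'_le _ _ hiB) (hle _ (Finset.min'_mem _ _))

theorem NCPart.isNCP {n : ℕ} (π : NCPart n) : IsNCP Finset.univ π.1.parts := by
  refine ⟨fun B hB => π.1.nonempty_of_mem_parts hB, ?_, ?_, π.2⟩
  · intro x
    exact ⟨fun hx => π.1.exists_mem hx, fun _ => Finset.mem_univ x⟩
  · intro B hB C hC x hx hx'
    exact π.1.eq_of_mem_parts hB hC hx hx'

theorem NCPart.ofNCP {n : ℕ} {P : Finset (Finset (Fin n))} (hP : IsNCP Finset.univ P) :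
    ∃ π : NCPart n, π.1.parts = P := by
  refine ⟨⟨⟨P, ?_, ?_, ?_⟩, ?_⟩, rfl⟩
  · rw [Finset.supIndep_iff_pairwiseDisjoint]
    intro B hB C hC hne
    exact Finset.disjoint_left.2 fun x hx hx' => hne (hP.disj B hB C hC x hx hx')
  · ext x
    simp [Finset.mem_sup, ← hP.cover x]
  · intro h
    simpa using hP.ne _ h
  · exact hP.nc

/-- good sequences -/
def Gd (n : ℕ) (b : Fin (n + 1) → ℕ) : Prop :=
  ∀ i : Fin (n + 1), ∑ j ∈ Finset.univ.filter (i ≤ ·), b j + (i : ℕ) ≤ n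

theorem gd_snoc (n : ℕ) (a : Fin n → ℕ) :
    Gd n (Fin.snoc a 0) ↔ ∀ i, ∑ j ∈ Finset.univ.filter (i ≤ ·), a j + (i : ℕ) ≤ n := by
  have key : ∀ i : Fin n, ∑ j ∈ Finset.univ.filter (i.castSucc ≤ ·),
      (Fin.snoc a 0 : Fin (n + 1) → ℕ) j = ∑ j ∈ Finset.univ.filter (i ≤ ·), a j := by
    intro i
    rw [Finset.sum_filter, Finset.sum_filter, Fin.sum_univ_castSucc]
    simp
  constructor
  · intro h i
    have := h i.castSucc
    rw [key] at this
    simpa using this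
  · intro h i
    induction i using Fin.lastCases with
    | last =>
      rw [Finset.sum_filter, Fin.sum_univ_castSucc]
      have : ∀ j : Fin n, ¬ (Fin.last n ≤ j.castSucc) := fun j => not_le.2 (Fin.castSucc_lt_last j)
      simp [this]
    | cast i =>
      rw [key]
      simpa using h i

/-- the walk -/
def walk {n : ℕ} (b : Fin (n + 1) → ℕ) (k : ℕ) : ℤ :=
  ∑ j ∈ Finset.range k, ((b (Fin.ofNat (n + 1) j) : ℤ) - 1)

theorem walk_period {n : ℕ} (b : Fin (n + 1) → ℕ) (hb : ∑ i, b i = n) (k : ℕ) :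
    walk b (k + (n + 1)) = walk b k - 1 := by
  induction k with
  | zero =>
    have h := Fin.sum_univ_eq_sum_range (fun j => ((b (Fin.ofNat (n + 1) j) : ℤ) - 1)) (n + 1)
    simp only [walk, zero_add]
    rw [← h]
    have : ∀ i : Fin (n + 1), Fin.ofNat (n + 1) (i : ℕ) = i := fun i => by simp
    simp only [this]
    rw [Finset.sum_sub_distrib, ← Nat.cast_sum, hb]
    simp
  | succ k ih =>
    have e : k + 1 + (n + 1) = (k + (n + 1)) + 1 := by omega
    have e2 : Fin.ofNat (n + 1) (k + (n + 1)) = Fin.ofNat (n + 1) k := by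
      ext; simp
    rw [e]
    unfold walk at ih ⊢
    rw [Finset.sum_range_succ, Finset.sum_range_succ _ k, ih, e2]
    ring

theorem gd_iff {n : ℕ} (b : Fin (n + 1) → ℕ) (hb : ∑ i, b i = n) (r : Fin (n + 1)) :
    Gd n (fun j => b (j + r)) ↔ ∀ i : ℕ, i ≤ n → walk b r ≤ walk b (r + i) := by
  have key : ∀ i : Fin (n + 1), ((∑ j ∈ Finset.univ.filter (i ≤ ·), b (j + r) : ℕ) : ℤ) + (i : ℕ) =
      n + walk b r - walk b (r + i) := by
    intro i
    have h := Fin.sum_univ_eq_sum_range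
      (fun j => if (i : ℕ) ≤ j then b (Fin.ofNat (n + 1) (r + j)) else 0) (n + 1)
    have e : ∀ j : Fin (n + 1), Fin.ofNat (n + 1) ((r : ℕ) + j) = j + r := by
      intro j; ext; simp [Fin.val_add, add_comm]
    simp only [e, Fin.val_fin_le] at h
    rw [Finset.sum_filter, h, ← Finset.sum_filter]
    have e2 : (Finset.range (n + 1)).filter ((i : ℕ) ≤ ·) = Finset.Ico (i : ℕ) (n + 1) := by
      ext x; simp; tauto
    rw [e2]
    have hw := walk_period b hb r
    have h3 : walk b (r + (n + 1)) - walk b (r + i) =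
        ∑ j ∈ Finset.Ico (i : ℕ) (n + 1), ((b (Fin.ofNat (n + 1) (r + j)) : ℤ) - 1) := by
      unfold walk
      rw [← Finset.sum_Ico_eq_sub _ (by have := i.2; omega),
        Finset.sum_Ico_add (fun j => (b (Fin.ofNat (n + 1) j) : ℤ) - 1)]
      simp [add_comm]
    rw [Finset.sum_sub_distrib] at h3
    have hi : (i : ℕ) ≤ n + 1 := by have := i.2; omega
    simp only [Finset.sum_const, Nat.card_Ico, nsmul_eq_mul, mul_one, Nat.cast_sub hi] at h3
    push_cast at h3 ⊢
    linarith
  constructor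
  · intro h i hi
    have h1 := h ⟨i, by omega⟩
    have h2 := key ⟨i, by omega⟩
    simp only at h1 h2
    zify at h1
    push_cast at h2
    linarith
  · intro h i
    have h1 := h i (by have := i.2; omega)
    have h2 := key i
    zify
    push_cast at h2
    linarith

theorem cycle_lemma {n : ℕ} (b : Fin (n + 1) → ℕ) (hb : ∑ i, b i = n) :
    ∃! r : Fin (n + 1), Gd n (fun j => b (j + r)) := by
  simp only [gd_iff b hb]
  have hex : ∃ r : ℕ, r ≤ n ∧ ∀ k, k ≤ n → walk b r ≤ walk b k := by
    obtain ⟨r, hr, h⟩ := Finset.exists_min_image (Finset.range (n + 1)) (walk b) ⟨0, by simp⟩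
    simp only [Finset.mem_range, Nat.lt_succ_iff] at hr h
    exact ⟨r, hr, h⟩
  classical
  have hr := Nat.find_spec hex
  have hmin := fun m hm => Nat.find_min hex (m := m) hm
  set r := Nat.find hex
  refine ⟨⟨r, by omega⟩, ?_, ?_⟩
  · intro i hi
    simp only
    rcases le_or_gt (r + i) n with h | h
    · exact hr.2 _ h
    · obtain ⟨m, hm⟩ : ∃ m, r + i = m + (n + 1) := ⟨r + i - (n + 1), by omega⟩
      rw [hm, walk_period b hb]
      have h1 : m < r := by omega
      have h2 := hr.2 m (by omega)
      have h3 : walk b r ≠ walk b m := fun he =>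
        hmin m h1 ⟨by omega, fun k hk => he ▸ hr.2 k hk⟩
      omega
  · intro s hs
    have hsn : (s : ℕ) ≤ n := by have := s.2; omega
    ext
    simp only
    have h1 := hr.2 s hsn
    rcases lt_trichotomy (s : ℕ) r with h | h | h
    · exfalso
      have h2 := hs (r - s) (by omega)
      rw [Nat.add_sub_cancel' h.le] at h2
      exact hmin s h ⟨hsn, fun k hk => h2.trans (hr.2 k hk)⟩
    · exact h
    · exfalso
      have h2 := hs (r + (n + 1) - s) (by omega)
      rw [show (s : ℕ) + (r + (n + 1) - s) = r + (n + 1) by omega, walk_period b hb] at h2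
      omega

open Classical in
theorem sum_cycle {n : ℕ} (f : (Fin (n + 1) → ℕ) → ℕ)
    (hf : ∀ b r, f (fun j => b (j + r)) = f b) :
    ∑ b ∈ Finset.piAntidiag Finset.univ n, f b =
      (n + 1) * ∑ b ∈ (Finset.piAntidiag Finset.univ n).filter (Gd n), f b := by
  have h1 : ∀ b ∈ Finset.piAntidiag (Finset.univ : Finset (Fin (n + 1))) n,
      f b = ∑ r : Fin (n + 1), if Gd n (fun j => b (j + r)) then f (fun j => b (j + r)) else 0 := by
    intro b hb
    simp only [Finset.mem_piAntidiag] at hb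
    obtain ⟨r, hr, hu⟩ := cycle_lemma b hb.1
    rw [Finset.sum_eq_single r]
    · simp [hr, hf]
    · intro s _ hs
      rw [if_neg]
      exact fun h => hs (hu s h)
    · simp
  rw [Finset.sum_congr rfl h1, Finset.sum_comm]
  have h2 : ∀ r : Fin (n + 1), ∑ b ∈ Finset.piAntidiag (Finset.univ : Finset (Fin (n + 1))) n,
      (if Gd n (fun j => b (j + r)) then f (fun j => b (j + r)) else 0) =
      ∑ b ∈ (Finset.piAntidiag Finset.univ n).filter (Gd n), f b := by
    intro r
    rw [Finset.sum_filter]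
    refine Finset.sum_bij' (fun b _ j => b (j + r)) (fun b _ j => b (j - r)) ?_ ?_ ?_ ?_ ?_
    · intro b hb
      simp only [Finset.mem_piAntidiag, Finset.mem_univ, implies_true, and_true] at hb ⊢
      exact (Equiv.sum_comp (Equiv.addRight r) b).trans hb
    · intro b hb
      simp only [Finset.mem_piAntidiag, Finset.mem_univ, implies_true, and_true] at hb ⊢
      exact (Equiv.sum_comp (Equiv.subRight r) b).trans hb
    · intro b _; simp
    · intro b _; simp
    · intro b _; rfl
  rw [Finset.sum_congr rfl (fun r _ => h2 r)]
  simp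

theorem card_pair {n l : ℕ} (hn : 2 ≤ n) (i j : Fin (n + 1)) (hij : i ≠ j) :
    ((Finset.piAntidiag (Finset.univ : Finset (Fin (n + 1))) n).filter
      fun b => b i = l ∧ b j = l).card =
      if 2 * l ≤ n then Nat.choose (2 * n - 2 * l - 2) (n - 2) else 0 := by
  have hs : ∀ b : Fin (n + 1) → ℕ, Finset.univ.sum b = b i + (b j + (({i, j} : Finset _)ᶜ).sum b) := by
    intro b
    rw [← Finset.sum_add_sum_compl {i, j} b, Finset.sum_pair hij, add_assoc]
  split_ifs with h
  · have hc : (Finset.piAntidiag (({i, j} : Finset (Fin (n + 1)))ᶜ) (n - 2 * l)).card =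
        Nat.choose (2 * n - 2 * l - 2) (n - 2) := by
      have h1 := Finset.card_finsuppAntidiag_nat_eq_choose
        (s := (({i, j} : Finset (Fin (n + 1)))ᶜ)) (n - 2 * l)
      rw [Finset.finsuppAntidiag, Finset.card_map, Finset.card_attach, Finset.card_compl,
        Finset.card_pair hij, Fintype.card_fin] at h1
      rw [h1, show n + 1 - 2 + (n - 2 * l) - 1 = 2 * n - 2 * l - 2 by omega]
      exact Nat.choose_symm_of_eq_add (by omega)
    rw [← hc]
    have hmem : ∀ k, k ∈ (({i, j} : Finset (Fin (n + 1)))ᶜ) ↔ k ≠ i ∧ k ≠ j := by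
      intro k; simp
    refine Finset.card_bij' (fun b _ k => if k = i ∨ k = j then 0 else b k)
      (fun b _ k => if k = i ∨ k = j then l else b k) ?_ ?_ ?_ ?_
    · intro b hb
      simp only [Finset.mem_filter, Finset.mem_piAntidiag] at hb ⊢
      have := hs b
      refine ⟨?_, ?_⟩
      · rw [Finset.sum_congr rfl (g := b)]
        · omega
        · intro k hk
          rw [hmem] at hk
          simp [hk]
      · intro k hk
        rw [hmem]
        by_contra hcon
        exact hk (if_pos (by tauto))
    · intro b hb
      simp only [Finset.mem_filter, Finset.mem_piAntidiag] at hb ⊢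
      refine ⟨⟨?_, by simp⟩, by simp⟩
      rw [hs, Finset.sum_congr rfl (g := b)]
      · have hb1 := hb.1
        simp only [true_or, or_true, if_true]
        omega
      · intro k hk
        rw [hmem] at hk
        simp [hk]
    · intro b hb
      simp only [Finset.mem_filter, Finset.mem_piAntidiag] at hb
      ext k
      simp only
      split_ifs with hk
      · rcases hk with rfl | rfl <;> omega
      · rfl
    · intro b hb
      simp only [Finset.mem_piAntidiag] at hb
      ext k
      simp only
      split_ifs with hk
      · by_contra hcon
        have := hb.2 k (Ne.symm hcon)
        rw [hmem] at this
        tauto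
      · rfl
  · rw [Finset.card_eq_zero, Finset.filter_eq_empty_iff]
    intro b hb hcon
    simp only [Finset.mem_piAntidiag] at hb
    have := hs b
    omega

theorem sum_all {n l : ℕ} (hn : 2 ≤ n) :
    ∑ b ∈ Finset.piAntidiag (Finset.univ : Finset (Fin (n + 1))) n,
      (Finset.univ.filter fun i => b i = l).card * ((Finset.univ.filter fun i => b i = l).card - 1)
      = (n + 1) * (if 2 * l ≤ n then n * Nat.choose (2 * n - 2 * l - 2) (n - 2) else 0) := by
  have h1 : ∀ b : Fin (n + 1) → ℕ, (Finset.univ.filter fun i => b i = l).card *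
      ((Finset.univ.filter fun i => b i = l).card - 1) =
      ∑ p ∈ (Finset.univ : Finset (Fin (n + 1))).offDiag, if b p.1 = l ∧ b p.2 = l then 1 else 0 := by
    intro b
    rw [Nat.mul_sub, mul_one, ← Finset.offDiag_card, ← Finset.card_filter]
    congr 1
    ext p
    simp only [Finset.mem_offDiag, Finset.mem_filter, Finset.mem_univ, true_and]
    tauto
  simp only [h1]
  rw [Finset.sum_comm]
  simp only [← Finset.card_filter]
  rw [Finset.sum_congr rfl (g := fun _ =>
    if 2 * l ≤ n then Nat.choose (2 * n - 2 * l - 2) (n - 2) else 0)]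
  · rw [Finset.sum_const, Finset.offDiag_card, Finset.card_univ, Fintype.card_fin, smul_eq_mul]
    rw [show (n + 1) * (n + 1) - (n + 1) = (n + 1) * n by rw [Nat.mul_succ]; omega]
    split_ifs
    · ring
    · simp
  · intro p hp
    exact card_pair hn p.1 p.2 (Finset.mem_offDiag.1 hp).2.2

open Classical in
theorem sum_nc (n l : ℕ) (hl : 1 ≤ l) (g : ℕ → ℕ) :
    ∑ π : NCPart n, g (numBlocksOfSize l π) =
      ∑ b ∈ (Finset.piAntidiag Finset.univ n).filter (Gd n),
        g (Finset.univ.filter fun i => b i = l).card := by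
  choose a ha hsum hsuf using fun π : NCPart n => exists_prof π.isNCP
  have hci : ∀ i : Fin n, (Finset.univ.filter (i ≤ ·)).card = n - i := by
    intro i
    rw [show Finset.univ.filter (i ≤ ·) = Finset.Ici i by ext; simp, Fin.card_Ici]
  refine Finset.sum_bij (fun π _ => (Fin.snoc (a π) 0 : Fin (n + 1) → ℕ)) ?_ ?_ ?_ ?_
  · intro π _
    simp only [Finset.mem_filter, Finset.mem_piAntidiag, Finset.mem_univ, implies_true, and_true]
    refine ⟨?_, (gd_snoc n _).2 fun i => ?_⟩
    · rw [Fin.sum_univ_castSucc]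
      simp [hsum π]
    · have := hsuf π i
      rw [hci] at this
      have := i.2
      omega
  · intro π _ ρ _ h
    have h' : a π = a ρ := by
      ext i
      have := congrFun h i.castSucc
      simpa using this
    have hp : π.1.parts = ρ.1.parts :=
      ncp_unique _ Finset.univ (a π) _ _ rfl π.isNCP ρ.isNCP (ha π) (h' ▸ ha ρ)
    exact Subtype.ext (Finpartition.ext hp)
  · intro b hb
    simp only [Finset.mem_filter, Finset.mem_piAntidiag, Finset.mem_univ, implies_true,
      and_true] at hb
    obtain ⟨hbs, hbg⟩ := hb
    have hlast : b (Fin.last n) = 0 := by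
      have h1 := hbg (Fin.last n)
      have h2 : b (Fin.last n) ≤ ∑ j ∈ Finset.univ.filter (Fin.last n ≤ ·), b j :=
        Finset.single_le_sum (f := b) (fun _ _ => Nat.zero_le _)
          (Finset.mem_filter.2 ⟨Finset.mem_univ (Fin.last n), le_refl (Fin.last n)⟩)
      simp only [Fin.val_last] at h1
      omega
    have hbe : b = (Fin.snoc (fun i : Fin n => b i.castSucc) 0 : Fin (n + 1) → ℕ) := by
      ext i
      induction i using Fin.lastCases with
      | last => simp [hlast]
      | cast i => simp
    have hg := hbg
    rw [hbe, gd_snoc] at hg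
    obtain ⟨P, hP, hPa⟩ := ncp_exists _ (Finset.univ : Finset (Fin n)) (fun i => b i.castSucc) rfl
      (by simp) (by
        rw [Fin.sum_univ_castSucc, hlast] at hbs
        simpa using hbs) (by
        intro i
        rw [hci]
        have := hg i
        omega)
    obtain ⟨π, rfl⟩ := NCPart.ofNCP hP
    refine ⟨π, Finset.mem_univ _, ?_⟩
    have : a π = fun i => b i.castSucc := by
      ext i
      by_cases hx : ∃ B ∈ π.1.parts, i ∈ B ∧ ∀ j ∈ B, i ≤ j
      · obtain ⟨B, hB, hi, hle⟩ := hx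
        exact ((ha π).1 B hB i hi hle).trans (hPa.1 B hB i hi hle).symm
      · push Not at hx
        exact ((ha π).2 i hx).trans (hPa.2 i hx).symm
    rw [this]
    exact hbe.symm
  · intro π _
    congr 1
    rw [numBlocksOfSize, prof_count π.isNCP (ha π) l hl, Finset.card_filter, Finset.card_filter,
      Fin.sum_univ_castSucc]
    simp; omega

/-- For `n ≥ 2` and `l ≥ 1`, writing `k_l(π)` for the number of blocks of
size `l`, the second factorial moment satisfies
`Σ_{π ∈ NC(n)} k_l(π)(k_l(π) − 1) = n · binom(2n − 2l − 2, n − 2)`, with the convention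
`binom(a,b) = 0` when `a < b` (the `if` captures this convention over the integers:
`n − 2 ≤ 2n − 2l − 2 ↔ 2l ≤ n`). -/
theorem secondFactorialMoment_numBlocksOfSize (n l : ℕ) (hn : 2 ≤ n) (hl : 1 ≤ l) :
    ∑ π : NCPart n, numBlocksOfSize l π * (numBlocksOfSize l π - 1) =
      if 2 * l ≤ n then n * Nat.choose (2 * n - 2 * l - 2) (n - 2) else 0 := by
  classical
  have h1 := sum_nc n l hl (fun k => k * (k - 1))
  have h2 := sum_cycle (n := n) (fun b => (Finset.univ.filter fun i => b i = l).card *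
    ((Finset.univ.filter fun i => b i = l).card - 1)) (by
      intro b r
      have : (Finset.univ.filter fun i => b (i + r) = l).card =
          (Finset.univ.filter fun i => b i = l).card := by
        rw [Finset.card_filter, Finset.card_filter]
        exact Equiv.sum_comp (Equiv.addRight r) (fun i => if b i = l then 1 else 0)
      simp only [this])
  rw [sum_all hn] at h2
  rw [h1]
  exact (Nat.eq_of_mul_eq_mul_left (Nat.succ_pos n) h2).symm
end

section
/- Fix integers n ≥ 2 and k, l ≥ 1 with k ≠ l. Writing k_j(π) for the number of blocks of size j in a non-crossing partition π of [n], the mixed moment satisfies Σ_{π ∈ NC(n)} k_k(π)·k_l(π) = n · binom(2n − k − l − 2, n − 2) (with the convention that binom(a,b) = 0 when a < b). -/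
open Finset in
/-- Number of entries equal to `k`. -/
def cntVal {n : ℕ} (k : ℕ) (t : Fin (n + 1) → ℕ) : ℕ :=
  (Finset.univ.filter fun j => t j = k).card

/-- Height of the Lukasiewicz path after `m` steps (periodically extended). -/
def pathHt {n : ℕ} (t : Fin (n + 1) → ℕ) (m : ℕ) : ℤ :=
  (∑ j ∈ Finset.range m, (t (Fin.ofNat (n + 1) j) : ℤ)) - m

/-- The path stays nonnegative. -/
def GoodSeq {n : ℕ} (t : Fin (n + 1) → ℕ) : Prop := ∀ i ≤ n, 0 ≤ pathHt t i

/-- Rotation. -/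
def rotSeq {n : ℕ} (r : Fin (n + 1)) (t : Fin (n + 1) → ℕ) : Fin (n + 1) → ℕ :=
  fun j => t (j + r)

lemma card_piAntidiag_aux {ι : Type*} [DecidableEq ι] (s : Finset ι) (m : ℕ) :
    (Finset.piAntidiag s m).card = (s.card + m - 1).choose m := by
  rw [← Finset.card_finsuppAntidiag_nat_eq_choose]
  simp [Finset.finsuppAntidiag]

lemma cntVal_rot {n : ℕ} (k : ℕ) (r : Fin (n + 1)) (t : Fin (n + 1) → ℕ) :
    cntVal k (rotSeq r t) = cntVal k t := by
  unfold cntVal rotSeq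
  refine Finset.card_equiv (Equiv.addRight r) ?_
  intro i
  simp

lemma sum_rot {n : ℕ} (r : Fin (n + 1)) (t : Fin (n + 1) → ℕ) :
    ∑ j, rotSeq r t j = ∑ j, t j := by
  unfold rotSeq
  exact Equiv.sum_comp (Equiv.addRight r) t

lemma ofNat_add_aux {n : ℕ} (a b : ℕ) :
    Fin.ofNat (n + 1) (a + b) = Fin.ofNat (n + 1) a + Fin.ofNat (n + 1) b := by
  ext
  simp [Fin.val_add]

lemma ht_rot {n : ℕ} (r : Fin (n + 1)) (t : Fin (n + 1) → ℕ) (m : ℕ) :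
    pathHt (rotSeq r t) m = pathHt t (r + m) - pathHt t r := by
  unfold pathHt rotSeq
  rw [Finset.sum_range_add]
  have : ∀ j, Fin.ofNat (n + 1) j + r = Fin.ofNat (n + 1) ((r : ℕ) + j) := by
    intro j
    rw [add_comm (r : ℕ) j, ofNat_add_aux]
    congr 1
    ext
    simp [Nat.mod_eq_of_lt r.2]
  simp only [this]
  push_cast
  ring

lemma ht_period {n : ℕ} (t : Fin (n + 1) → ℕ) (ht : ∑ j, t j = n) (m : ℕ) :
    pathHt t (m + (n + 1)) = pathHt t m - 1 := by
  unfold pathHt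
  rw [add_comm m, Finset.sum_range_add]
  have h1 : ∀ j, Fin.ofNat (n + 1) (n + 1 + j) = Fin.ofNat (n + 1) j := by
    intro j
    ext
    simp
  simp only [h1]
  have h2 : ∑ j ∈ Finset.range (n + 1), (t (Fin.ofNat (n + 1) j) : ℤ) = n := by
    rw [Finset.sum_range]
    have : ∀ i : Fin (n + 1), Fin.ofNat (n + 1) (i : ℕ) = i := by
      intro i
      ext
      simp [Nat.mod_eq_of_lt i.2]
    simp only [this]
    exact_mod_cast ht
  rw [h2]
  push_cast
  ring

lemma cycle_exists {n : ℕ} (t : Fin (n + 1) → ℕ) (ht : ∑ j, t j = n) :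
    ∃! r : Fin (n + 1), GoodSeq (rotSeq r t) := by
  obtain ⟨r₀, -, hr₀⟩ := Finset.exists_min_image (Finset.univ : Finset (Fin (n + 1)))
    (fun r => pathHt t r) ⟨0, Finset.mem_univ _⟩
  obtain ⟨r, hr, hrmin⟩ := Finset.exists_min_image
    (Finset.univ.filter fun r : Fin (n + 1) => pathHt t r = pathHt t r₀) (fun r => r)
    ⟨r₀, by simp⟩
  simp only [Finset.mem_filter, Finset.mem_univ, true_and] at hr hrmin hr₀
  refine ⟨r, ?_, ?_⟩
  · intro i hi
    rw [ht_rot]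
    by_cases h : (r : ℕ) + i < n + 1
    · have := hr₀ ⟨r + i, h⟩ trivial
      simp only at this
      omega
    · obtain ⟨q, hq⟩ : ∃ q, (r : ℕ) + i = q + (n + 1) := ⟨r + i - (n + 1), by omega⟩
      rw [hq, ht_period t ht]
      have hqr : q < r := by omega
      have h1 := hr₀ ⟨q, by omega⟩ trivial
      have h2 : pathHt t q ≠ pathHt t r₀ := by
        intro h
        have := hrmin ⟨q, by omega⟩ h
        rw [Fin.le_def] at this
        simp only at this
        omega
      simp only at h1
      omega
  · have key : ∀ a b : Fin (n + 1), GoodSeq (rotSeq a t) → GoodSeq (rotSeq b t) → a < b → False := by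
      intro a b ha hb hab
      have h1 := ha (b - a) (by omega)
      have h2 := hb (a + (n + 1) - b) (by omega)
      rw [ht_rot] at h1 h2
      rw [show (a : ℕ) + (b - a) = b by omega] at h1
      rw [show (b : ℕ) + (a + (n + 1) - b) = a + (n + 1) by omega, ht_period t ht] at h2
      omega
    intro s hs
    have hgr : GoodSeq (rotSeq r t) := by
      intro i hi
      rw [ht_rot]
      by_cases h : (r : ℕ) + i < n + 1
      · have := hr₀ ⟨r + i, h⟩ trivial
        simp only at this
        omega
      · obtain ⟨q, hq⟩ : ∃ q, (r : ℕ) + i = q + (n + 1) := ⟨r + i - (n + 1), by omega⟩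
        rw [hq, ht_period t ht]
        have hqr : q < r := by omega
        have h1 := hr₀ ⟨q, by omega⟩ trivial
        have h2 : pathHt t q ≠ pathHt t r₀ := by
          intro h
          have := hrmin ⟨q, by omega⟩ h
          rw [Fin.le_def] at this
          simp only at this
          omega
        simp only at h1
        omega
    rcases lt_trichotomy s r with h | h | h
    · exact (key _ _ hs hgr h).elim
    · exact h
    · exact (key _ _ hgr hs h).elim

open Classical in
lemma cycle_sum {n : ℕ} (F : (Fin (n + 1) → ℕ) → ℕ)
    (hF : ∀ r t, F (rotSeq r t) = F t) :
    ∑ t ∈ Finset.piAntidiag (Finset.univ : Finset (Fin (n + 1))) n, F t =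
      (n + 1) * ∑ t ∈ (Finset.piAntidiag (Finset.univ : Finset (Fin (n + 1))) n).filter GoodSeq,
        F t := by
  have h1 : ∀ t ∈ Finset.piAntidiag (Finset.univ : Finset (Fin (n + 1))) n,
      F t = ∑ r : Fin (n + 1), if GoodSeq (rotSeq r t) then F (rotSeq r t) else 0 := by
    intro t ht
    simp only [Finset.mem_piAntidiag, Finset.mem_univ, implies_true, and_true] at ht
    obtain ⟨r, hr, hu⟩ := cycle_exists t ht
    rw [Finset.sum_eq_single r]
    · simp [hr, hF]
    · intro b _ hb
      rw [if_neg]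
      intro h
      exact hb (hu b h)
    · simp
  rw [Finset.sum_congr rfl h1, Finset.sum_comm]
  have h2 : ∀ r : Fin (n + 1),
      (∑ t ∈ Finset.piAntidiag (Finset.univ : Finset (Fin (n + 1))) n,
        if GoodSeq (rotSeq r t) then F (rotSeq r t) else 0) =
      ∑ t ∈ (Finset.piAntidiag (Finset.univ : Finset (Fin (n + 1))) n).filter GoodSeq, F t := by
    intro r
    rw [Finset.sum_filter]
    refine Finset.sum_bij' (fun t _ => rotSeq r t) (fun t _ => rotSeq (-r) t) ?_ ?_ ?_ ?_ ?_
    · intro t ht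
      simp only [Finset.mem_piAntidiag, Finset.mem_univ, implies_true, and_true] at ht ⊢
      rw [sum_rot, ht]
    · intro t ht
      simp only [Finset.mem_piAntidiag, Finset.mem_univ, implies_true, and_true] at ht ⊢
      rw [sum_rot, ht]
    · intro t _
      funext j
      simp [rotSeq]
    · intro t _
      funext j
      simp [rotSeq]
    · intro t _
      rfl
  rw [Finset.sum_congr rfl fun r _ => h2 r]
  simp

lemma count_two {n : ℕ} (k l : ℕ) (i j : Fin (n + 1)) (hij : i ≠ j) (hn : 2 ≤ n) :
    ((Finset.piAntidiag (Finset.univ : Finset (Fin (n + 1))) n).filter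
      fun t => t i = k ∧ t j = l).card =
      if k + l ≤ n then Nat.choose (2 * n - k - l - 2) (n - 2) else 0 := by
  have hsum : ∀ t : Fin (n + 1) → ℕ,
      ∑ x, t x = t i + t j + ∑ x ∈ (Finset.univ.erase i).erase j, t x := by
    intro t
    rw [← Finset.add_sum_erase _ _ (Finset.mem_univ i),
      ← Finset.add_sum_erase (Finset.univ.erase i) t (a := j) (by simp [hij.symm])]
    ring
  split_ifs with h
  · have hc : ((Finset.univ.erase i).erase j : Finset (Fin (n + 1))).card = n - 1 := by
      rw [Finset.card_erase_of_mem (by simp [hij.symm]), Finset.card_erase_of_mem (by simp)]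
      simp
    have := card_piAntidiag_aux ((Finset.univ.erase i).erase j : Finset (Fin (n + 1))) (n - k - l)
    rw [hc] at this
    rw [show 2 * n - k - l - 2 = n - 1 + (n - k - l) - 1 by omega,
      show n - 2 = n - 1 + (n - k - l) - 1 - (n - k - l) by omega,
      Nat.choose_symm (by omega), ← this]
    refine Finset.card_bij' (fun t _ => Function.update (Function.update t i 0) j 0)
      (fun u _ => Function.update (Function.update u i k) j l) ?_ ?_ ?_ ?_
    · intro t ht
      simp only [Finset.mem_filter, Finset.mem_piAntidiag, Finset.mem_univ, implies_true,
        and_true] at ht ⊢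
      obtain ⟨h1, h2, h3⟩ := ht
      rw [hsum] at h1
      constructor
      · rw [Finset.sum_congr rfl (g := t)]
        · change ∑ x ∈ (Finset.univ.erase i).erase j, t x = _
          omega
        · intro x hx
          simp only [Finset.mem_erase] at hx
          simp [Function.update_apply, hx.1, hx.2.1]
      · intro x hx
        simp only [Function.update_apply] at hx
        simp only [Finset.mem_erase, Finset.mem_univ]
        grind
    · intro u hu
      simp only [Finset.mem_filter, Finset.mem_piAntidiag, Finset.mem_univ, implies_true,
        and_true] at hu ⊢
      obtain ⟨h1, h2⟩ := hu
      have e1 : Function.update (Function.update u i k) j l i = k := by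
        simp [Function.update_apply, hij]
      have e2 : Function.update (Function.update u i k) j l j = l := by
        simp
      refine ⟨?_, e1, e2⟩
      rw [hsum, e1, e2, Finset.sum_congr rfl (g := u)]
      · omega
      · intro x hx
        simp only [Finset.mem_erase] at hx
        simp [Function.update_apply, hx.1, hx.2.1]
    · intro t ht
      simp only [Finset.mem_filter] at ht
      funext x
      simp only [Function.update_apply]
      grind
    · intro u hu
      simp only [Finset.mem_piAntidiag] at hu
      funext x
      have := hu.2 x
      simp only [Finset.mem_erase, Finset.mem_univ] at this
      simp only [Function.update_apply]
      grind
  · rw [Finset.card_eq_zero, Finset.filter_eq_empty_iff]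
    intro t ht
    simp only [Finset.mem_piAntidiag, Finset.mem_univ, implies_true, and_true] at ht
    rw [hsum] at ht
    rintro ⟨h1, h2⟩
    omega

lemma total_sum {n : ℕ} (k l : ℕ) (hkl : k ≠ l) (hn : 2 ≤ n) :
    ∑ t ∈ Finset.piAntidiag (Finset.univ : Finset (Fin (n + 1))) n, cntVal k t * cntVal l t =
      (n + 1) * (if k + l ≤ n then n * Nat.choose (2 * n - k - l - 2) (n - 2) else 0) := by
  have h1 : ∀ t : Fin (n + 1) → ℕ, cntVal k t * cntVal l t =
      ∑ i, ∑ j, if t i = k ∧ t j = l then 1 else 0 := by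
    intro t
    unfold cntVal
    rw [Finset.card_filter, Finset.card_filter, Finset.sum_mul_sum]
    refine Finset.sum_congr rfl fun i _ => Finset.sum_congr rfl fun j _ => ?_
    split_ifs <;> simp_all
  simp only [h1]
  rw [Finset.sum_comm]
  have h2 : ∀ i : Fin (n + 1),
      (∑ t ∈ Finset.piAntidiag (Finset.univ : Finset (Fin (n + 1))) n,
        ∑ j, if t i = k ∧ t j = l then 1 else 0) =
      (if k + l ≤ n then n * Nat.choose (2 * n - k - l - 2) (n - 2) else 0) := by
    intro i
    rw [Finset.sum_comm]
    rw [← Finset.add_sum_erase _ _ (Finset.mem_univ i)]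
    rw [Finset.sum_eq_zero (s := Finset.piAntidiag _ _), zero_add]
    · rw [Finset.sum_congr rfl (g := fun _ =>
        if k + l ≤ n then Nat.choose (2 * n - k - l - 2) (n - 2) else 0)]
      · simp
      · intro j hj
        rw [← Finset.card_filter]
        exact count_two k l i j (by simpa using (Finset.ne_of_mem_erase hj).symm) hn
    · intro t _
      rw [if_neg]
      rintro ⟨h, h'⟩
      exact hkl (h.symm.trans h')
  rw [Finset.sum_congr rfl fun i _ => h2 i]
  simp

/-- Functions `x ↦ min of the block of x` of non-crossing partitions. -/
structure IsNCF {n : ℕ} (f : Fin n → Fin n) : Prop where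
  le : ∀ x, f x ≤ x
  idem : ∀ x, f (f x) = f x
  nc : ∀ a b c d, a < b → b < c → c < d → f a = f c → f b = f d → f a = f b

/-- Sequence of fibre sizes. -/
def seqOf {n : ℕ} (f : Fin n → Fin n) : Fin (n + 1) → ℕ :=
  fun j => (Finset.univ.filter fun x => (f x : ℕ) = j).card

lemma seqOf_sum {n : ℕ} (f : Fin n → Fin n) : ∑ j, seqOf f j = n := by
  unfold seqOf
  have := Finset.card_eq_sum_card_fiberwise (s := (Finset.univ : Finset (Fin n)))
    (t := (Finset.univ : Finset (Fin (n + 1)))) (f := fun x => (f x).castSucc) (by simp)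
  simp only [Finset.card_univ, Fintype.card_fin] at this
  rw [eq_comm]
  refine this.trans (Finset.sum_congr rfl fun j _ => ?_)
  congr 1
  ext x
  simp [Fin.ext_iff]

lemma ht_seqOf {n : ℕ} (f : Fin n → Fin n) (hf : ∀ x, f x ≤ x) (m : ℕ) (hm : m ≤ n) :
    pathHt (seqOf f) m =
      ((Finset.univ.filter fun x : Fin n => m ≤ (x : ℕ) ∧ (f x : ℕ) < m).card : ℤ) := by
  have h1 : ∑ j ∈ Finset.range m, seqOf f (Fin.ofNat (n + 1) j) =
      (Finset.univ.filter fun x : Fin n => (f x : ℕ) < m).card := by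
    rw [Finset.card_eq_sum_card_fiberwise (t := Finset.range m) (f := fun x => (f x : ℕ))
      (by intro x hx; simpa using hx)]
    refine Finset.sum_congr rfl fun j hj => ?_
    have hj' := Finset.mem_range.1 hj
    unfold seqOf
    congr 1
    ext x
    simp [Nat.mod_eq_of_lt (show j < n + 1 by omega)]
    omega
  have h2 : (Finset.univ.filter fun x : Fin n => (f x : ℕ) < m).card =
      (Finset.univ.filter fun x : Fin n => m ≤ (x : ℕ) ∧ (f x : ℕ) < m).card + m := by
    have h3 : (Finset.univ.filter fun x : Fin n => (x : ℕ) < m).card = m := by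
      rw [Fin.card_filter_val_lt]
      omega
    rw [show ∀ q, q + m = q + (Finset.univ.filter fun x : Fin n => (x : ℕ) < m).card by intro q; rw [h3]]
    rw [← Finset.card_union_of_disjoint]
    · congr 1
      ext x
      have : (f x : ℕ) ≤ x := hf x
      simp only [Finset.mem_filter, Finset.mem_univ, true_and, Finset.mem_union]
      omega
    · rw [Finset.disjoint_filter]
      intro x _ h
      omega
  unfold pathHt
  rw [← Nat.cast_sum, h1, h2]
  push_cast
  try ring

lemma seqOf_good {n : ℕ} (f : Fin n → Fin n) (hf : IsNCF f) : GoodSeq (seqOf f) := by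
  intro i hi
  rw [ht_seqOf f hf.le i hi]
  positivity

lemma ncf_key {n : ℕ} (f : Fin n → Fin n) (hf : IsNCF f) (i : Fin n) :
    pathHt (seqOf f) (f i) ≤ pathHt (seqOf f) (i + 1) ∧
      ∀ m : ℕ, (f i : ℕ) < m → m ≤ i → pathHt (seqOf f) (i + 1) < pathHt (seqOf f) m := by
  have hle := hf.le i
  constructor
  · rw [ht_seqOf f hf.le _ (by omega), ht_seqOf f hf.le _ (by omega)]
    norm_cast
    apply Finset.card_le_card
    intro x hx
    simp only [Finset.mem_filter, Finset.mem_univ, true_and]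
      at hx ⊢
    obtain ⟨h1, h2⟩ := hx
    have hne : f i ≠ x := by
      rintro rfl
      rw [hf.idem] at h2
      exact lt_irrefl _ h2
    have hxi : x ≠ i := by
      rintro rfl
      exact lt_irrefl _ h2
    have : i < x := by
      by_contra hcon
      have hlt : x < i := lt_of_le_of_ne (not_lt.1 hcon) hxi
      have := hf.nc (f x) (f i) x i h2 (lt_of_le_of_ne h1 hne) hlt (hf.idem _) (hf.idem _)
      rw [hf.idem, hf.idem] at this
      exact (ne_of_lt h2) this
    constructor <;> omega
  · intro m hm1 hm2
    rw [ht_seqOf f hf.le _ (by omega), ht_seqOf f hf.le _ (by omega)]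
    norm_cast
    apply Finset.card_lt_card
    rw [Finset.ssubset_iff_of_subset]
    · refine ⟨i, ?_, ?_⟩
      · simp only [Finset.mem_filter, Finset.mem_univ, true_and]
        omega
      · simp only [Finset.mem_filter, Finset.mem_univ, true_and]
        omega
    · intro x hx
      simp only [Finset.mem_filter, Finset.mem_univ, true_and] at hx ⊢
      obtain ⟨h1, h2⟩ := hx
      refine ⟨by omega, ?_⟩
      by_contra hcon
      have hfx : f x ≠ i := by
        intro h
        have := hf.idem x
        rw [h] at this
        rw [this] at hm1
        omega
      have hfx' : (f x : ℕ) ≠ i := fun h => hfx (Fin.ext h)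
      have := hf.nc (f i) (f x) i x (by rw [Fin.lt_def]; omega) (by rw [Fin.lt_def]; omega)
        (by rw [Fin.lt_def]; omega) (hf.idem _) (hf.idem _)
      rw [hf.idem, hf.idem] at this
      rw [this] at hm1
      omega

lemma seqOf_inj {n : ℕ} (f g : Fin n → Fin n) (hf : IsNCF f) (hg : IsNCF g)
    (h : seqOf f = seqOf g) : f = g := by
  funext i
  have hfk := ncf_key f hf i
  have hgk := ncf_key g hg i
  rw [← h] at hgk
  have h1 := hf.le i
  have h2 := hg.le i
  rcases lt_trichotomy (f i) (g i) with hlt | heq | hlt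
  · have := hfk.2 (g i) hlt h2
    have := hgk.1
    omega
  · exact heq
  · have := hgk.2 (f i) hlt h1
    have := hfk.1
    omega

lemma seqOf_surj {n : ℕ} (t : Fin (n + 1) → ℕ) (ht : ∑ j, t j = n) (hg : GoodSeq t) :
    ∃ f : Fin n → Fin n, IsNCF f ∧ seqOf f = t := by
  have hex : ∀ i : Fin n, ∃ j : Fin n, j ≤ i ∧ pathHt t j ≤ pathHt t (i + 1) ∧
      ∀ m : ℕ, (j : ℕ) < m → m ≤ i → pathHt t (i + 1) < pathHt t m := by
    intro i
    have h0 : pathHt t 0 = 0 := by simp [pathHt]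
    obtain ⟨j, hj, hmax⟩ := Finset.exists_max_image
      ((Finset.range (i + 1)).filter fun j => pathHt t j ≤ pathHt t (i + 1)) (fun j => j)
      ⟨0, by
        simp only [Finset.mem_filter, Finset.mem_range]
        refine ⟨by omega, ?_⟩
        rw [h0]
        exact hg _ (by omega)⟩
    simp only [Finset.mem_filter, Finset.mem_range] at hj hmax
    refine ⟨⟨j, by omega⟩, by rw [Fin.le_def]; simp only; omega, hj.2, ?_⟩
    intro m hm1 hm2
    by_contra hcon
    have := hmax m ⟨by omega, by omega⟩
    simp only at hm1
    omega
  choose f hle hht hlt using hex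
  have hself : ∀ i, pathHt t (f i) ≤ pathHt t (f i + 1) := by
    intro i
    by_cases h : f i = i
    · have := hht i
      rw [h] at this ⊢
      exact this
    · have h' : (f i : ℕ) ≠ i := fun h' => h (Fin.ext h')
      have h1 := hle i
      have := hlt i (f i + 1) (by omega) (by omega)
      have := hht i
      omega
  have hncf : IsNCF f := by
    refine ⟨hle, ?_, ?_⟩
    · intro i
      by_contra hne
      have h1 := hle (f i)
      have h2 : (f (f i) : ℕ) ≠ f i := fun h => hne (Fin.ext h)
      have h3 := hlt (f i) (f i) (by omega) le_rfl
      have := hself i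
      omega
    · intro a b c d hab hbc hcd hac hbd
      have ha := hle a
      have hb := hle b
      rcases lt_trichotomy (f a) (f b) with h | h | h
      · have h1 := hlt c (f b) (by rw [← hac]; omega) (by omega)
        have h2 := hlt d (c + 1) (by rw [← hbd]; omega) (by omega)
        have h3 := hht d
        rw [← hbd] at h3
        omega
      · exact h
      · have h1 := hlt b (f a) (by omega) (by omega)
        have h2 := hlt c (b + 1) (by rw [← hac]; omega) (by omega)
        have h3 := hht c
        rw [← hac] at h3
        omega
  refine ⟨f, hncf, ?_⟩
  have hstep : ∀ j : Fin n, pathHt t (j + 1) = pathHt t j + t j.castSucc - 1 := by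
    intro j
    unfold pathHt
    rw [Finset.sum_range_succ]
    have : Fin.ofNat (n + 1) (j : ℕ) = j.castSucc := by
      ext
      simp [Nat.mod_eq_of_lt (show (j : ℕ) < n + 1 by omega)]
    rw [this]
    push_cast
    ring
  have hbound : ∀ j, seqOf f j ≤ t j := by
    intro j
    unfold seqOf
    by_cases hj : (j : ℕ) < n
    · obtain ⟨j', rfl⟩ : ∃ j' : Fin n, j = j'.castSucc := ⟨⟨j, hj⟩, rfl⟩
      have hc : (Finset.Icc (pathHt t j') (pathHt t (j' + 1))).card = t j'.castSucc := by
        rw [Int.card_Icc, hstep]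
        omega
      rw [← hc]
      apply Finset.card_le_card_of_injOn (fun x : Fin n => pathHt t (x + 1))
      · intro x hx
        simp only [Finset.coe_filter, Finset.mem_univ, true_and, Set.mem_setOf_eq,
          Fin.val_castSucc] at hx
        have hx' : f x = j' := Fin.ext hx
        simp only [Finset.coe_Icc, Set.mem_Icc]
        have h1 := hht x
        have h2 := hle x
        rw [hx'] at h1 h2
        refine ⟨h1, ?_⟩
        by_cases hxj : x = j'
        · rw [hxj]
        · have : (x : ℕ) ≠ j' := fun h => hxj (Fin.ext h)
          exact (hlt x (j' + 1) (by omega) (by omega)).le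
      · have key : ∀ x y : Fin n, f x = j' → f y = j' → x < y →
            pathHt t (x + 1) ≠ pathHt t (y + 1) := by
          intro x y hx hy hxy
          have h2 := hle x
          have := hlt y (x + 1) (by rw [hy, ← hx]; omega) (by omega)
          omega
        intro x hx y hy hxy
        simp only [Finset.coe_filter, Finset.mem_univ, true_and, Set.mem_setOf_eq,
          Fin.val_castSucc] at hx hy
        rcases lt_trichotomy x y with h | h | h
        · exact (key x y (Fin.ext hx) (Fin.ext hy) h hxy).elim
        · exact h
        · exact (key y x (Fin.ext hy) (Fin.ext hx) h hxy.symm).elim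
    · rw [Finset.filter_false_of_mem]
      · simp
      · intro x _
        omega
  have := (Finset.sum_eq_sum_iff_of_le (fun j (_ : j ∈ Finset.univ) => hbound j)).1
    (by rw [seqOf_sum, ht])
  funext j
  exact this j (Finset.mem_univ _)

/-- Minimum of the block containing `x`. -/
def minB {n : ℕ} (P : Finpartition (Finset.univ : Finset (Fin n))) (x : Fin n) : Fin n :=
  (P.part x).min' ⟨x, P.mem_part (Finset.mem_univ x)⟩

lemma minB_mem {n : ℕ} (P : Finpartition (Finset.univ : Finset (Fin n))) (x : Fin n) :
    minB P x ∈ P.part x := Finset.min'_mem _ _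

lemma part_minB {n : ℕ} (P : Finpartition (Finset.univ : Finset (Fin n))) (x : Fin n) :
    P.part (minB P x) = P.part x :=
  P.part_eq_of_mem (P.part_mem.2 (Finset.mem_univ x)) (minB_mem P x)

lemma minB_le {n : ℕ} (P : Finpartition (Finset.univ : Finset (Fin n))) (x y : Fin n)
    (h : y ∈ P.part x) : minB P x ≤ y := Finset.min'_le _ _ h

lemma minB_congr {n : ℕ} (P : Finpartition (Finset.univ : Finset (Fin n))) (x y : Fin n) :
    minB P x = minB P y ↔ P.part x = P.part y := by
  constructor
  · intro h
    rw [← part_minB P x, h, part_minB]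
  · intro h
    unfold minB
    simp only [h]

lemma minB_ncf {n : ℕ} (P : NCPart n) : IsNCF (minB P.1) := by
  refine ⟨fun x => minB_le _ _ _ (P.1.mem_part (Finset.mem_univ x)), ?_, ?_⟩
  · intro x
    rw [minB_congr, part_minB]
  · intro a b c d hab hbc hcd hac hbd
    rw [minB_congr] at *
    have m : ∀ x, x ∈ P.1.part x := fun x => P.1.mem_part (Finset.mem_univ x)
    have p : ∀ x, P.1.part x ∈ P.1.parts := fun x => P.1.part_mem.2 (Finset.mem_univ x)
    exact P.2 a b c d hab hbc hcd _ (p a) _ (p b) (m a) (hac ▸ m c) (m b) (hbd ▸ m d)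

lemma parts_eq_image {n : ℕ} (P : Finpartition (Finset.univ : Finset (Fin n))) :
    P.parts = Finset.univ.image fun x => Finset.univ.filter fun y => minB P y = minB P x := by
  have h : ∀ x, (Finset.univ.filter fun y => minB P y = minB P x) = P.part x := by
    intro x
    ext y
    simp only [Finset.mem_filter, Finset.mem_univ, true_and]
    rw [minB_congr, P.mem_part_iff_part_eq_part (Finset.mem_univ _) (Finset.mem_univ _)]
  simp only [h]
  ext B
  simp only [Finset.mem_image, Finset.mem_univ, true_and]
  constructor
  · intro hB
    obtain ⟨x, hx⟩ := P.nonempty_of_mem_parts hB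
    exact ⟨x, P.part_eq_of_mem hB hx⟩
  · rintro ⟨x, rfl⟩
    exact P.part_mem.2 (Finset.mem_univ x)

lemma minB_inj {n : ℕ} (P Q : NCPart n) (h : minB P.1 = minB Q.1) : P = Q := by
  apply Subtype.ext
  apply Finpartition.ext
  rw [parts_eq_image, parts_eq_image, h]

open Classical in
lemma minB_surj {n : ℕ} (f : Fin n → Fin n) (hf : IsNCF f) : ∃ P : NCPart n, minB P.1 = f := by
  have hm : ∀ a b, b ∈ (Finpartition.ofSetoid (Setoid.ker f)).part a ↔ f a = f b := by
    intro a b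
    rw [Finpartition.mem_part_ofSetoid_iff_rel]
    exact Setoid.ker_def
  refine ⟨⟨Finpartition.ofSetoid (Setoid.ker f), ?_⟩, ?_⟩
  · intro a b c d hab hbc hcd B hB B' hB' ha hc hb hd
    have e := Finpartition.part_eq_of_mem _ hB ha
    have e' := Finpartition.part_eq_of_mem _ hB' hb
    subst e e'
    rw [hm] at hc hd
    apply (Finpartition.part_eq_of_mem _ hB' _)
    rw [hm]
    exact (hf.nc a b c d hab hbc hcd hc hd).symm
  · funext x
    apply le_antisymm
    · apply minB_le
      rw [hm, hf.idem]
    · have := minB_mem (Finpartition.ofSetoid (Setoid.ker f)) x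
      rw [hm] at this
      rw [this]
      exact hf.le _

lemma numBlocks_eq_s7 {n : ℕ} (k : ℕ) (hk : 1 ≤ k) (P : NCPart n) :
    numBlocksOfSize k P = cntVal k (seqOf (minB P.1)) := by
  unfold numBlocksOfSize cntVal
  symm
  have hne : ∀ j : Fin (n + 1), seqOf (minB P.1) j = k → ∃ x, (minB P.1 x : ℕ) = j := by
    intro j hj
    have : 0 < seqOf (minB P.1) j := by omega
    unfold seqOf at this
    obtain ⟨x, hx⟩ := Finset.card_pos.1 this
    exact ⟨x, by simpa using hx⟩
  refine Finset.card_bij (fun j _ => Finset.univ.filter fun x => (minB P.1 x : ℕ) = j) ?_ ?_ ?_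
  · intro j hj
    simp only [Finset.mem_filter, Finset.mem_univ, true_and] at hj ⊢
    refine ⟨?_, hj⟩
    obtain ⟨x, hx⟩ := hne j hj
    rw [parts_eq_image]
    simp only [Finset.mem_image, Finset.mem_univ, true_and]
    exact ⟨x, by simp only [← hx, Fin.ext_iff]⟩
  · intro i hi j hj h
    simp only [Finset.mem_filter, Finset.mem_univ, true_and] at hi hj
    obtain ⟨x, hx⟩ := hne i hi
    have : x ∈ Finset.univ.filter fun x => (minB P.1 x : ℕ) = i := by simpa using hx
    rw [h] at this
    simp only [Finset.mem_filter, Finset.mem_univ, true_and] at this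
    exact Fin.ext (hx.symm.trans this)
  · intro B hB
    simp only [Finset.mem_filter] at hB
    obtain ⟨h1, h2⟩ := hB
    rw [parts_eq_image] at h1
    simp only [Finset.mem_image, Finset.mem_univ, true_and] at h1
    obtain ⟨x, rfl⟩ := h1
    refine ⟨(minB P.1 x).castSucc, ?_, ?_⟩
    · simp only [Finset.mem_filter, Finset.mem_univ, true_and]
      rw [← h2]
      unfold seqOf
      simp only [Fin.ext_iff, Fin.val_castSucc]
    · simp only [Fin.ext_iff, Fin.val_castSucc]

open Classical in
lemma sum_nc_s7 {n : ℕ} (k l : ℕ) (hk : 1 ≤ k) (hl : 1 ≤ l) :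
    ∑ π : NCPart n, numBlocksOfSize k π * numBlocksOfSize l π =
      ∑ t ∈ (Finset.piAntidiag (Finset.univ : Finset (Fin (n + 1))) n).filter GoodSeq,
        cntVal k t * cntVal l t := by
  refine Finset.sum_bij (fun π _ => seqOf (minB π.1)) ?_ ?_ ?_ ?_
  · intro π _
    simp only [Finset.mem_filter, Finset.mem_piAntidiag, Finset.mem_univ, implies_true, and_true]
    exact ⟨seqOf_sum _, seqOf_good _ (minB_ncf π)⟩
  · intro P _ Q _ h
    exact minB_inj P Q (seqOf_inj _ _ (minB_ncf P) (minB_ncf Q) h)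
  · intro t ht
    simp only [Finset.mem_filter, Finset.mem_piAntidiag, Finset.mem_univ, implies_true,
      and_true] at ht
    obtain ⟨f, hf, rfl⟩ := seqOf_surj t ht.1 ht.2
    obtain ⟨P, rfl⟩ := minB_surj f hf
    exact ⟨P, Finset.mem_univ _, rfl⟩
  · intro P _
    rw [numBlocks_eq_s7 k hk, numBlocks_eq_s7 l hl]

/-- For `n ≥ 2` and `k ≠ l` with `k, l ≥ 1`, the mixed moment satisfies
`Σ_{π ∈ NC(n)} k_k(π)·k_l(π) = n · binom(2n − k − l − 2, n − 2)`, with the convention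
`binom(a,b) = 0` when `a < b` (the `if` captures this convention over the integers:
`n − 2 ≤ 2n − k − l − 2 ↔ k + l ≤ n`). -/
theorem mixedMoment_numBlocksOfSize (n k l : ℕ) (hn : 2 ≤ n) (hk : 1 ≤ k) (hl : 1 ≤ l)
    (hkl : k ≠ l) :
    ∑ π : NCPart n, numBlocksOfSize k π * numBlocksOfSize l π =
      if k + l ≤ n then n * Nat.choose (2 * n - k - l - 2) (n - 2) else 0 := by
  classical
  have h1 := total_sum (n := n) k l hkl hn
  rw [cycle_sum (n := n) (fun t => cntVal k t * cntVal l t)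
    (fun r t => by simp only [cntVal_rot])] at h1
  rw [sum_nc_s7 k l hk hl]
  exact Nat.eq_of_mul_eq_mul_left (Nat.succ_pos n) h1
end
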